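/- For every n ≥ 4: if n ≢ 0 (mod 6) then D(n,4,3) = ⌊(n/4)·⌊((n−1)/3)·⌊(n−2)/2⌋⌋⌋, and if n ≡ 0 (mod 6) then D(n,4,3) = ⌊(n/4)·(⌊(n−1)(n−2)/6⌋ − 1)⌋. -/

import Mathlib

/-- The packing number D(n,k,t): the maximum number of k-subsets of an n-set
such that every t-subset is contained in at most one of them. -/
noncomputable def packingNumber (n k t : ℕ) : ℕ :=
  sSup {m | ∃ B : Finset (Finset (Fin n)),
    (∀ b ∈ B, b.card = k) ∧
    (∀ T : Finset (Fin n), T.card = t → (B.filter (fun b => T ⊆ b)).card ≤ 1) ∧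
    B.card = m}

/-!
The upper bound is Johnson's: the blocks through two points are disjoint outside of these, and
counting flags bounds first the degrees of the points, then the number of blocks. If `6 ∣ n`, a
point whose degree attains this bound would leave exactly one pair of the other points uncovered.
But the uncovered pairs at a point form a graph with even degrees, so a single edge is impossible
and every degree is smaller by at least one.

For the lower bound, consider Steiner systems `S(3, {4, 6}, v)` whose hexads partition the points
if `6 ∣ v`, and which have no hexads otherwise. They are built for all even `v` by strong induction.
In a system on `2k + 2` points, replace two points, the *stems*, by fibres with `s` points together
and every other point by a fibre of six points, which gives `12k + s` points, and every block by a
small packing on the points over it. A triple which has exactly two points in a common fibre of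
size 6 is covered over a block through the stem which belongs to these two points: the edges of a
hexagon belong to one stem and the edges of the complementary prism to the other one.

The optimal packings for even `n` arise by splitting each hexad into three quads, and those for
`n ≡ 1, 3 (mod 6)` by deleting a point. For `n = 12k + 5` the construction works with stems of
sizes 5 and 0. For `n = 12k + 11` it starts from `2k + 4` points, three of which are special: a hub
of size 5 and two empty holes. The packings which replace the blocks through the hub and a hole are
not symmetric in the two large fibres. The points outside of the core block, the one through the hub
and both holes, are therefore coloured such that each of these blocks meets both colour classes.
This is possible because the blocks through the hub and a given hole match these points in pairs.
-/

open Finset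

/-! ### Packings -/

section Packings

variable {α : Type*}

/-- The blocks of size 6 of the family are pairwise disjoint. -/
def HexadsDisjoint (B : Finset (Finset α)) : Prop :=
  ((B.slice 6 : Finset (Finset α)) : Set (Finset α)).PairwiseDisjoint id

variable [DecidableEq α]

/-- A family of sets no two of which share a triple of points. The condition is put on pairwise
intersections, which is how it is checked when blocks are glued together. -/
def IsTriplePacking (B : Finset (Finset α)) : Prop :=
  (B : Set (Finset α)).Pairwise fun b c => #(b ∩ c) ≤ 2

/-- A triple packing by blocks of size 4 (*quads*) and 6 (*hexads*). -/
structure IsMixedPacking (B : Finset (Finset α)) : Prop where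
  card_eq : ∀ b ∈ B, #b = 4 ∨ #b = 6
  isTriplePacking : IsTriplePacking B

variable {B : Finset (Finset α)}

lemma IsTriplePacking.eq_of_three_le_card_inter (hB : IsTriplePacking B) {b c : Finset α}
    (hb : b ∈ B) (hc : c ∈ B) (h : 3 ≤ #(b ∩ c)) : b = c :=
  hB.eq hb hc (by omega)

lemma isTriplePacking_iff :
    IsTriplePacking B ↔ ∀ T : Finset α, #T = 3 → #{b ∈ B | T ⊆ b} ≤ 1 := by
  refine ⟨fun hB T hT => card_le_one.2 fun b hb c hc => ?_, fun h b hb c hc hbc => ?_⟩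
  · rw [mem_filter] at hb hc
    exact hB.eq_of_three_le_card_inter hb.1 hc.1 (hT ▸ card_le_card (subset_inter hb.2 hc.2))
  · by_contra! hlt
    obtain ⟨T, hT, hT3⟩ := exists_subset_card_eq (s := b ∩ c) (n := 3) hlt
    obtain ⟨hTb, hTc⟩ := subset_inter_iff.1 hT
    exact hbc (card_le_one.1 (h T hT3) b (mem_filter.2 ⟨hb, hTb⟩) c (mem_filter.2 ⟨hc, hTc⟩))

lemma IsTriplePacking.mono {A : Finset (Finset α)} (hB : IsTriplePacking B) (h : A ⊆ B) :
    IsTriplePacking A :=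
  Set.Pairwise.mono (coe_subset.2 h) hB

lemma IsMixedPacking.mono {A : Finset (Finset α)} (hB : IsMixedPacking B) (h : A ⊆ B) :
    IsMixedPacking A :=
  ⟨fun b hb => hB.card_eq b (h hb), hB.isTriplePacking.mono h⟩

lemma IsMixedPacking.card_eq_add (hB : IsMixedPacking B) : #B = #(B.slice 4) + #(B.slice 6) := by
  rw [← card_filter_add_card_filter_not (s := B) fun b => #b = 4]
  congr 2
  refine filter_congr fun b hb => ⟨(hB.card_eq b hb).resolve_left, fun h => by omega⟩

lemma IsMixedPacking.card_eq_four (hB : IsMixedPacking B) (h6 : #(B.slice 6) = 0) {b : Finset α}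
    (hb : b ∈ B) : #b = 4 := by
  refine (hB.card_eq b hb).resolve_right fun h => ?_
  simpa [card_eq_zero.1 h6] using mem_slice.2 ⟨hb, h⟩

lemma isMixedPacking_empty : IsMixedPacking (∅ : Finset (Finset α)) :=
  ⟨by simp, by simp [IsTriplePacking]⟩

lemma isMixedPacking_singleton {b : Finset α} (hb : #b = 4 ∨ #b = 6) : IsMixedPacking {b} :=
  ⟨by simpa using hb, by simp [IsTriplePacking]⟩

lemma IsTriplePacking.insert_of_card_le_two (hB : IsTriplePacking B) {b : Finset α} (hb : #b ≤ 2) :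
    IsTriplePacking (insert b B) := by
  rw [IsTriplePacking, coe_insert]
  exact hB.insert fun c _ _ => ⟨(card_le_card inter_subset_left).trans hb,
    (card_le_card inter_subset_right).trans hb⟩

section BiUnion

variable {ι : Type*} {s : Finset ι} {F : ι → Finset (Finset α)}

lemma IsMixedPacking.biUnion (hF : ∀ i ∈ s, IsMixedPacking (F i))
    (hcross : (s : Set ι).Pairwise fun i j => ∀ b ∈ F i, ∀ c ∈ F j, #(b ∩ c) ≤ 2) :
    IsMixedPacking (s.biUnion F) where
  card_eq b hb := by
    obtain ⟨i, hi, hb⟩ := mem_biUnion.1 hb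
    exact (hF i hi).card_eq b hb
  isTriplePacking b hb c hc hne := by
    obtain ⟨i, hi, hb⟩ := mem_biUnion.1 hb
    obtain ⟨j, hj, hc⟩ := mem_biUnion.1 hc
    rcases eq_or_ne i j with rfl | hij
    · exact (hF i hi).isTriplePacking hb hc hne
    · exact hcross hi hj hij b hb c hc

lemma card_slice_biUnion
    (hcross : (s : Set ι).Pairwise fun i j => ∀ b ∈ F i, ∀ c ∈ F j, #(b ∩ c) ≤ 2) {r : ℕ}
    (hr : 2 < r) : #((s.biUnion F).slice r) = ∑ i ∈ s, #((F i).slice r) := by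
  rw [slice, filter_biUnion]
  refine card_biUnion fun i hi j hj hij => disjoint_left.2 fun b hb hb' => ?_
  obtain ⟨hb, hbr⟩ := mem_filter.1 hb
  have := hcross hi hj hij b hb b (mem_filter.1 hb').1
  rw [inter_self] at this
  omega

end BiUnion

end Packings

section Image

variable {α β : Type*} [DecidableEq β] {B : Finset (Finset α)} {f : α → β} {s : Set α}

lemma card_slice_image (hf : Set.InjOn f s) (hB : ∀ b ∈ B, (b : Set α) ⊆ s) (r : ℕ) :
    #((B.image (image f)).slice r) = #(B.slice r) := by
  have hinj : Set.InjOn (image f) (B : Set (Finset α)) := fun b hb c hc h => by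
    rw [← coe_inj, coe_image, coe_image, hf.image_eq_image_iff (hB b hb) (hB c hc)] at h
    exact coe_inj.1 h
  have hslice : (B.image (image f)).slice r = (B.slice r).image (image f) := by
    rw [slice, slice, filter_image]
    refine congr_arg _ (filter_congr fun b hb => ?_)
    rw [card_image_of_injOn (hf.mono (hB b hb))]
  rw [hslice, card_image_of_injOn (hinj.mono (coe_subset.2 slice_subset))]

lemma HexadsDisjoint.image (h : HexadsDisjoint B) (hf : Set.InjOn f s)
    (hB : ∀ b ∈ B, (b : Set α) ⊆ s) : HexadsDisjoint (B.image (image f)) := by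
  classical
  intro b' hb' c' hc' hne
  obtain ⟨hb', hb6⟩ := mem_slice.1 hb'
  obtain ⟨hc', hc6⟩ := mem_slice.1 hc'
  obtain ⟨b, hb, rfl⟩ := mem_image.1 hb'
  obtain ⟨c, hc, rfl⟩ := mem_image.1 hc'
  rw [card_image_of_injOn (hf.mono (hB b hb))] at hb6
  rw [card_image_of_injOn (hf.mono (hB c hc))] at hc6
  have hbc : Disjoint b c :=
    h (mem_slice.2 ⟨hb, hb6⟩) (mem_slice.2 ⟨hc, hc6⟩) fun e => hne (e ▸ rfl)
  rw [Function.onFun, id, id, disjoint_iff_inter_eq_empty,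
    ← image_inter_of_injOn b c (hf.mono (Set.union_subset (hB b hb) (hB c hc))),
    disjoint_iff_inter_eq_empty.1 hbc, image_empty]

variable [DecidableEq α]

lemma IsMixedPacking.image (h : IsMixedPacking B) (hf : Set.InjOn f s)
    (hB : ∀ b ∈ B, (b : Set α) ⊆ s) : IsMixedPacking (B.image (image f)) where
  card_eq := forall_mem_image.2 fun b hb => by
    rw [card_image_of_injOn (hf.mono (hB b hb))]; exact h.card_eq b hb
  isTriplePacking := by
    intro b' hb' c' hc' hne
    obtain ⟨b, hb, rfl⟩ := mem_image.1 hb'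
    obtain ⟨c, hc, rfl⟩ := mem_image.1 hc'
    rw [← image_inter_of_injOn b c (hf.mono (Set.union_subset (hB b hb) (hB c hc)))]
    exact card_image_le.trans (h.isTriplePacking hb hc fun e => hne (e ▸ rfl))

end Image

/-! ### The Johnson bound -/

section JohnsonBound

variable {α : Type*} [DecidableEq α] {B : Finset (Finset α)} {k : ℕ} {x y z : α}

/-- The number of blocks through two points. -/
def pairDegree (B : Finset (Finset α)) (x y : α) : ℕ := #{b ∈ B | x ∈ b ∧ y ∈ b}

/-- The points `z` for which the triple `{x, y, z}` is covered by a block. -/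
def thirdPoints (B : Finset (Finset α)) (x y : α) : Finset α :=
  {b ∈ B | x ∈ b ∧ y ∈ b}.biUnion (· \ {x, y})

lemma mem_thirdPoints :
    z ∈ thirdPoints B x y ↔ z ≠ x ∧ z ≠ y ∧ ∃ b ∈ B, x ∈ b ∧ y ∈ b ∧ z ∈ b := by
  simp only [thirdPoints, mem_biUnion, mem_filter, mem_sdiff, mem_insert, mem_singleton]
  grind

lemma card_thirdPoints (hk : (B : Set (Finset α)).Sized k) (hB : IsTriplePacking B)
    (hxy : x ≠ y) : #(thirdPoints B x y) = pairDegree B x y * (k - 2) := by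
  rw [thirdPoints, card_biUnion, sum_congr rfl, sum_const, smul_eq_mul, pairDegree]
  · intro b hb
    obtain ⟨hb, hx, hy⟩ := mem_filter.1 hb
    rw [card_sdiff_of_subset (by simp [insert_subset_iff, hx, hy]), hk hb, card_pair hxy]
  · intro b hb c hc hbc
    obtain ⟨hb, hxb, hyb⟩ := mem_filter.1 hb
    obtain ⟨hc, hxc, hyc⟩ := mem_filter.1 hc
    refine disjoint_left.2 fun z hzb hzc => hbc (hB.eq_of_three_le_card_inter hb hc ?_)
    simp only [mem_sdiff, mem_insert, mem_singleton, not_or] at hzb hzc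
    rw [← card_eq_three.2 ⟨x, y, z, hxy, Ne.symm hzb.2.1, Ne.symm hzb.2.2, rfl⟩]
    exact card_le_card (by simp [insert_subset_iff, *])

lemma sum_pairDegree [Fintype α] (hk : (B : Set (Finset α)).Sized k) (x : α) :
    ∑ y ∈ univ.erase x, pairDegree B x y = #{b ∈ B | x ∈ b} * (k - 1) := by
  have hinter : ∀ b ∈ B.filter (x ∈ ·), #(univ.erase x ∩ b) = k - 1 := fun b hb => by
    rw [erase_inter, univ_inter, card_erase_of_mem (mem_filter.1 hb).2, hk (mem_filter.1 hb).1]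
  rw [← smul_eq_mul, ← sum_const, ← sum_congr rfl hinter]
  simp only [pairDegree, ← filter_filter, ← filter_mem_eq_inter]
  exact sum_card_bipartiteAbove_eq_sum_card_bipartiteBelow fun y b => y ∈ b

variable [Fintype α]

lemma thirdPoints_subset : thirdPoints B x y ⊆ univ \ {x, y} := fun z hz => by
  simpa [not_or] using ⟨(mem_thirdPoints.1 hz).1, (mem_thirdPoints.1 hz).2.1⟩

lemma card_univ_sdiff_pair (hxy : x ≠ y) : #(univ \ {x, y}) = Fintype.card α - 2 := by
  rw [card_sdiff_of_subset (subset_univ _), card_univ, card_pair hxy]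

lemma pairDegree_le (hk : (B : Set (Finset α)).Sized k) (hB : IsTriplePacking B) (hk2 : 2 < k)
    (hxy : x ≠ y) : pairDegree B x y ≤ (Fintype.card α - 2) / (k - 2) := by
  rw [Nat.le_div_iff_mul_le (by omega), ← card_thirdPoints hk hB hxy, ← card_univ_sdiff_pair hxy]
  exact card_le_card thirdPoints_subset

lemma degree_le (hk : (B : Set (Finset α)).Sized k) (hB : IsTriplePacking B) (hk2 : 2 < k)
    (x : α) :
    #{b ∈ B | x ∈ b} ≤ (Fintype.card α - 1) * ((Fintype.card α - 2) / (k - 2)) / (k - 1) := by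
  rw [Nat.le_div_iff_mul_le (by omega), ← sum_pairDegree hk, ← card_univ,
    ← card_erase_of_mem (mem_univ x), ← smul_eq_mul, card_univ]
  exact sum_le_card_nsmul _ _ _ fun y hy => pairDegree_le hk hB hk2 (ne_of_mem_erase hy).symm

lemma card_le_of_degree_le (hk : (B : Set (Finset α)).Sized k) (hk0 : 0 < k) {m : ℕ}
    (hm : ∀ x, #{b ∈ B | x ∈ b} ≤ m) : #B ≤ Fintype.card α * m / k := by
  rw [Nat.le_div_iff_mul_le hk0, ← smul_eq_mul, ← sum_const, ← sum_congr rfl fun b hb => hk hb]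
  exact sum_card_le hm

/-- **Johnson's bound** for triple packings. -/
theorem card_le_johnson (hk : (B : Set (Finset α)).Sized k) (hB : IsTriplePacking B)
    (hk2 : 2 < k) :
    #B ≤ Fintype.card α *
      ((Fintype.card α - 1) * ((Fintype.card α - 2) / (k - 2)) / (k - 1)) / k :=
  card_le_of_degree_le hk (by omega) (degree_le hk hB hk2)

lemma exists_notMem_thirdPoints (h4 : (B : Set (Finset α)).Sized 4) (hB : IsTriplePacking B)
    (hxy : x ≠ y) (h : 2 * pairDegree B x y < Fintype.card α - 2) :
    ∃ z, z ≠ x ∧ z ≠ y ∧ z ∉ thirdPoints B x y := by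
  by_contra! hall
  have hsub : univ \ {x, y} ⊆ thirdPoints B x y := fun z hz => by
    rw [mem_sdiff, mem_insert, mem_singleton, not_or] at hz
    exact hall z hz.2.1 hz.2.2
  have := card_le_card hsub
  rw [card_univ_sdiff_pair hxy, card_thirdPoints h4 hB hxy] at this
  omega

lemma pairDegree_lt_of_notMem_thirdPoints (h4 : (B : Set (Finset α)).Sized 4)
    (hB : IsTriplePacking B) (hxy : x ≠ y) (hzx : z ≠ x) (hzy : z ≠ y)
    (hz : z ∉ thirdPoints B x y) : 2 * pairDegree B x z < Fintype.card α - 2 := by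
  have hy : y ∉ thirdPoints B x z := fun hy => hz <| by
    obtain ⟨-, -, b, hb, hx, hz', hy'⟩ := mem_thirdPoints.1 hy
    exact mem_thirdPoints.2 ⟨hzx, hzy, b, hb, hx, hy', hz'⟩
  have hlt : #(thirdPoints B x z) < #(univ \ {x, z}) :=
    card_lt_card ⟨thirdPoints_subset, fun h => hy (h (by simp [hxy.symm, hzy.symm]))⟩
  rw [card_thirdPoints h4 hB hzx.symm, card_univ_sdiff_pair hzx.symm] at hlt
  omega

-- The pairs `{y, z}` for which `{x, y, z}` is uncovered form a graph with all degrees even, so it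
-- cannot consist of a single edge.
lemma degree_lt_of_six_dvd (h4 : (B : Set (Finset α)).Sized 4) (hB : IsTriplePacking B)
    {j : ℕ} (hj : Fintype.card α = 6 * (j + 1)) (x : α) :
    #{b ∈ B | x ∈ b} < 6 * j ^ 2 + 9 * j + 3 := by
  have hle : ∀ y ∈ univ.erase x, pairDegree B x y ≤ 3 * j + 2 := fun y hy => by
    have := pairDegree_le h4 hB (by omega) (ne_of_mem_erase hy).symm
    omega
  have hcard : #(univ.erase x) = 6 * j + 5 := by
    rw [card_erase_of_mem (mem_univ x), card_univ]; omega
  have hsum := sum_pairDegree h4 x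
  obtain ⟨y, hy, hyd⟩ : ∃ y ∈ univ.erase x, pairDegree B x y < 3 * j + 2 := by
    by_contra! hno
    rw [sum_congr rfl fun y hy => (hle y hy).antisymm (hno y hy), sum_const, hcard,
      smul_eq_mul] at hsum
    have : (6 * j + 5) * (3 * j + 2) = 3 * (6 * j ^ 2 + 9 * j + 3) + 1 := by ring
    omega
  have hxy := (ne_of_mem_erase hy).symm
  obtain ⟨z, hzx, hzy, hz⟩ := exists_notMem_thirdPoints h4 hB hxy (by omega)
  have hzd := pairDegree_lt_of_notMem_thirdPoints h4 hB hxy hzx hzy hz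
  have hz : z ∈ (univ.erase x).erase y := by simp [hzx, hzy]
  have hrest : ∑ w ∈ ((univ.erase x).erase y).erase z, pairDegree B x w ≤
      (6 * j + 3) * (3 * j + 2) := by
    refine (sum_le_card_nsmul _ _ (3 * j + 2) fun w hw =>
      hle w (mem_of_mem_erase (mem_of_mem_erase hw))).trans_eq ?_
    rw [card_erase_of_mem hz, card_erase_of_mem hy, hcard, smul_eq_mul]
    rfl
  rw [← add_sum_erase _ _ hy, ← add_sum_erase _ _ hz] at hsum
  have : (6 * j + 3) * (3 * j + 2) + (6 * j + 3) = 3 * (6 * j ^ 2 + 9 * j + 3) := by ring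
  omega

theorem card_le_of_six_dvd (h4 : (B : Set (Finset α)).Sized 4) (hB : IsTriplePacking B)
    (h6 : 6 ∣ Fintype.card α) :
    #B ≤ Fintype.card α * ((Fintype.card α - 1) * (Fintype.card α - 2) / 6 - 1) / 4 := by
  refine card_le_of_degree_le h4 (by omega) fun x => ?_
  obtain ⟨j, hj⟩ : ∃ j, Fintype.card α = 6 * (j + 1) := by
    have := Fintype.card_pos_iff.2 ⟨x⟩
    exact ⟨Fintype.card α / 6 - 1, by omega⟩
  have hlt := degree_lt_of_six_dvd h4 hB hj x
  have hdiv : (Fintype.card α - 1) * (Fintype.card α - 2) =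
      2 + 6 * (6 * j ^ 2 + 9 * j + 3) := by
    rw [hj, show 6 * (j + 1) - 1 = 6 * j + 5 by omega, show 6 * (j + 1) - 2 = 6 * j + 4 by omega]
    ring
  omega

end JohnsonBound

/-! ### Steiner systems -/

section MixedSteinerSystems

variable {α : Type*} [DecidableEq α] {B : Finset (Finset α)} {S c : Finset α}

/-- The number of triples `T` with `S ⊆ T ⊆ c`. Block counts which depend on how a block meets a few
special points are written as linear combinations of such numbers, because these add up nicely
over the blocks of a Steiner system. -/
def triplesThrough (S c : Finset α) : ℕ := #{T ∈ powersetCard 3 c | S ⊆ T}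

lemma triplesThrough_eq_zero (hSc : ¬ S ⊆ c) : triplesThrough S c = 0 := by
  rw [triplesThrough, card_eq_zero, filter_eq_empty_iff]
  exact fun T hT hST => hSc (hST.trans (mem_powersetCard.1 hT).1)

lemma triplesThrough_eq_ite (c : Finset α) (hS : #S ≤ 3) :
    triplesThrough S c = if S ⊆ c then (#c - #S).choose (3 - #S) else 0 := by
  split_ifs with hSc
  exacts [card_filter_powersetCard_subset S c 3 hSc hS, triplesThrough_eq_zero hSc]

lemma IsTriplePacking.pairwiseDisjoint_powersetCard (hB : IsTriplePacking B) :
    (B : Set (Finset α)).PairwiseDisjoint (powersetCard 3) := by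
  refine fun b hb c hc hbc => disjoint_left.2 fun T hTb hTc => hbc ?_
  rw [mem_powersetCard] at hTb hTc
  exact hB.eq_of_three_le_card_inter hb hc
    (hTb.2 ▸ card_le_card (subset_inter hTb.1 hTc.1))

lemma IsMixedPacking.card_biUnion_powersetCard (hB : IsMixedPacking B) :
    #(B.biUnion (powersetCard 3)) = 4 * #(B.slice 4) + 20 * #(B.slice 6) := by
  have hB' : B = B.slice 4 ∪ B.slice 6 := by
    ext b
    have := hB.card_eq b
    grind [mem_slice]
  have hdisj : Disjoint (B.slice 4) (B.slice 6) := Finset.pairwiseDisjoint_slice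
    (Set.mem_univ _) (Set.mem_univ _) (by decide)
  have hsum : ∀ r, ∑ b ∈ B.slice r, #(powersetCard 3 b) = r.choose 3 * #(B.slice r) := fun r => by
    rw [sum_congr rfl fun b hb => (card_powersetCard 3 b).trans (by rw [(mem_slice.1 hb).2]),
      sum_const, smul_eq_mul, mul_comm]
  rw [card_biUnion hB.isTriplePacking.pairwiseDisjoint_powersetCard]
  nth_rw 1 [hB']
  rw [sum_union hdisj, hsum, hsum]
  rfl

variable [Fintype α]

/-- A Steiner system `S(3, {4, 6}, v)`: blocks of size 4 and 6 cover every triple exactly once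
(expressed by counting triples). The hexads are moreover disjoint; they partition the points if
`6 ∣ v`, and there are none otherwise. -/
structure IsMixedSteinerSystem (B : Finset (Finset α)) : Prop extends IsMixedPacking B where
  hexadsDisjoint : HexadsDisjoint B
  card_slice_six : #(B.slice 6) = if 6 ∣ Fintype.card α then Fintype.card α / 6 else 0
  card_triples : 4 * #(B.slice 4) + 20 * #(B.slice 6) = (Fintype.card α).choose 3

namespace IsMixedSteinerSystem

lemma biUnion_powersetCard (hB : IsMixedSteinerSystem B) :
    B.biUnion (powersetCard 3) = powersetCard 3 univ := by
  refine eq_of_subset_of_card_le (biUnion_subset.2 fun b _ => powersetCard_mono (subset_univ b)) ?_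
  rw [card_powersetCard, card_univ, ← hB.card_triples, hB.card_biUnion_powersetCard]

lemma sum_triplesThrough (hB : IsMixedSteinerSystem B) (hS : #S ≤ 3) :
    ∑ b ∈ B, triplesThrough S b = (Fintype.card α - #S).choose (3 - #S) := by
  rw [← card_univ, ← (triplesThrough_eq_ite univ hS).trans (if_pos (subset_univ S))]
  simp only [triplesThrough]
  rw [← hB.biUnion_powersetCard, filter_biUnion, card_biUnion]
  exact fun b hb c hc hbc =>
    disjoint_filter_filter (hB.isTriplePacking.pairwiseDisjoint_powersetCard hb hc hbc)

lemma exists_superset (hB : IsMixedSteinerSystem B) {T : Finset α} (hT : #T = 3) :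
    ∃ b ∈ B, T ⊆ b := by
  have : T ∈ B.biUnion (powersetCard 3) := by
    rw [hB.biUnion_powersetCard]
    exact mem_powersetCard.2 ⟨subset_univ T, hT⟩
  obtain ⟨b, hb, hTb⟩ := mem_biUnion.1 this
  exact ⟨b, hb, (mem_powersetCard.1 hTb).1⟩

-- A hexad if there is one, and any block otherwise.
lemma exists_disjoint_hexads (hB : IsMixedSteinerSystem B) (hv : 3 ≤ Fintype.card α) :
    ∃ Z ∈ B, ∀ c ∈ B, #c = 6 → c ≠ Z → Disjoint c Z := by
  by_cases h6 : ∃ Z ∈ B, #Z = 6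
  · obtain ⟨Z, hZ, hZ6⟩ := h6
    exact ⟨Z, hZ, fun c hc hc6 hne =>
      hB.hexadsDisjoint (mem_slice.2 ⟨hc, hc6⟩) (mem_slice.2 ⟨hZ, hZ6⟩) hne⟩
  · obtain ⟨T, -, hT⟩ := exists_subset_card_eq (s := (univ : Finset α)) (n := 3) hv
    obtain ⟨Z, hZ, -⟩ := hB.exists_superset hT
    exact ⟨Z, hZ, fun c hc hc6 => (h6 ⟨c, hc, hc6⟩).elim⟩

end IsMixedSteinerSystem

end MixedSteinerSystems

/-! ### Inflation -/

section Inflation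

variable {α : Type*}

/-- Adjacency in the hexagon on the residues modulo 6. It splits the pairs of points of a fibre of
size 6 into two colours: the 6 edges of the hexagon (`true`) and the 9 edges of the complementary
triangular prism (`false`). -/
def hexagonAdj (i j : ℕ) : Bool :=
  (i + 1) % 6 == j % 6 || (j + 1) % 6 == i % 6

/-- Every pair of points of `β` in a common fibre of the projection has colour `k`. -/
def FiberPairsColored (k : Bool) (β : Finset (α × ℕ)) : Prop :=
  ∀ x ∈ β, ∀ y ∈ β, x ≠ y → x.1 = y.1 → hexagonAdj x.2 y.2 = k

variable {wt : α → ℕ} {n : ℕ}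

lemma exists_injOn_fin [Fintype α] [NeZero n] (hn : ∑ p, wt p = n) :
    ∃ f : α × ℕ → Fin n, Set.InjOn f {x | x.2 < wt x.1} := by
  have e : (Σ p, Fin (wt p)) ≃ Fin n := Fintype.equivFinOfCardEq (by simpa using hn)
  refine ⟨fun x => if h : x.2 < wt x.1 then e ⟨x.1, x.2, h⟩ else 0, fun x hx y hy hxy => ?_⟩
  rw [Set.mem_ofPred_eq] at hx hy
  simp only [hx, hy, dite_true, EmbeddingLike.apply_eq_iff_eq, Sigma.mk.injEq] at hxy
  obtain ⟨p, i⟩ := x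
  obtain ⟨q, j⟩ := y
  obtain ⟨rfl, h⟩ : p = q ∧ _ := hxy
  simpa using h

variable [DecidableEq α]

/-- The set `β` has at most two points in each fibre of the projection. -/
def FibersLeTwo (β : Finset (α × ℕ)) : Prop :=
  ∀ p, #{x ∈ β | x.1 = p} ≤ 2

section Crossing

variable {c c' : Finset α} {β β' : Finset (α × ℕ)}

lemma image_fst_inter_subset (hβ : ∀ x ∈ β, x.1 ∈ c) (hβ' : ∀ x ∈ β', x.1 ∈ c') :
    (β ∩ β').image Prod.fst ⊆ c ∩ c' :=
  image_subset_iff.2 fun x hx =>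
    mem_inter.2 ⟨hβ x (mem_inter.1 hx).1, hβ' x (mem_inter.1 hx).2⟩

lemma card_inter_le_two_of_injOn (hβ : ∀ x ∈ β, x.1 ∈ c) (hβ' : ∀ x ∈ β', x.1 ∈ c')
    (hc : #(c ∩ c') ≤ 2) (hinj : Set.InjOn Prod.fst (β : Set (α × ℕ))) : #(β ∩ β') ≤ 2 := by
  rw [← card_image_of_injOn (hinj.mono (coe_subset.2 inter_subset_left))]
  exact (card_le_card (image_fst_inter_subset hβ hβ')).trans hc

lemma card_inter_le_two_of_avoids (hβ : ∀ x ∈ β, x.1 ∈ c) (hβ' : ∀ x ∈ β', x.1 ∈ c')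
    (hc : #(c ∩ c') ≤ 2) {q : α} (hq : q ∈ c) (hq' : q ∈ c') (havoid : ∀ x ∈ β, x.1 ≠ q)
    (hfib : FibersLeTwo β) : #(β ∩ β') ≤ 2 := by
  have hone : #((c ∩ c').erase q) ≤ 1 := by
    rw [card_erase_of_mem (mem_inter.2 ⟨hq, hq'⟩)]; omega
  have hmem : ∀ x ∈ β ∩ β', x.1 ∈ (c ∩ c').erase q := fun x hx =>
    mem_erase.2 ⟨havoid x (mem_inter.1 hx).1,
      image_fst_inter_subset hβ hβ' (mem_image_of_mem Prod.fst hx)⟩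
  rcases (β ∩ β').eq_empty_or_nonempty with he | ⟨y, hy⟩
  · simp [he]
  · refine (card_le_card fun x hx => ?_).trans (hfib y.1)
    exact mem_filter.2 ⟨(mem_inter.1 hx).1, card_le_one.1 hone _ (hmem x hx) _ (hmem y hy)⟩

lemma card_inter_le_two_of_colors_ne (hβ : ∀ x ∈ β, x.1 ∈ c) (hβ' : ∀ x ∈ β', x.1 ∈ c')
    (hc : #(c ∩ c') ≤ 2) {k k' : Bool} (hk : k ≠ k') (hcol : FiberPairsColored k β)
    (hcol' : FiberPairsColored k' β') : #(β ∩ β') ≤ 2 := by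
  by_contra! hlt
  obtain ⟨x, hx, y, hy, hne, hxy⟩ := exists_ne_map_eq_of_card_lt_of_maps_to
    (((card_le_card (image_fst_inter_subset hβ hβ')).trans hc).trans_lt hlt)
    fun x hx => mem_image_of_mem Prod.fst hx
  rw [mem_inter] at hx hy
  exact hk ((hcol x hx.1 y hy.1 hne hxy).symm.trans (hcol' x hx.2 y hy.2 hne hxy))

end Crossing

/-- `F` is a mixed packing with `n₄` quads and `n₆` hexads, which are disjoint, on the points
`(p, i)` with `p ∈ c` and `i < wt p`; all its blocks satisfy `P`. -/
structure IsFilling (wt : α → ℕ) (P : Finset (α × ℕ) → Prop) (n₄ n₆ : ℕ) (c : Finset α)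
    (F : Finset (Finset (α × ℕ))) : Prop extends IsMixedPacking F where
  hexadsDisjoint : HexadsDisjoint F
  card_slice_four : #(F.slice 4) = n₄
  card_slice_six : #(F.slice 6) = n₆
  fst_mem : ∀ β ∈ F, ∀ x ∈ β, x.1 ∈ c
  snd_lt : ∀ β ∈ F, ∀ x ∈ β, x.2 < wt x.1
  property : ∀ β ∈ F, P β

lemma IsFilling.imp {P Q : Finset (α × ℕ) → Prop} {n₄ n₆ : ℕ} {c : Finset α}
    {F : Finset (Finset (α × ℕ))} (hF : IsFilling wt P n₄ n₆ c F)
    (h : ∀ β ∈ F, P β → Q β) : IsFilling wt Q n₄ n₆ c F :=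
  { hF with property := fun β hβ => h β hβ (hF.property β hβ) }

lemma IsFilling.card_eq_four {P : Finset (α × ℕ) → Prop} {n₄ : ℕ} {c : Finset α}
    {F : Finset (Finset (α × ℕ))} (hF : IsFilling wt P n₄ 0 c F) {β : Finset (α × ℕ)}
    (hβ : β ∈ F) : #β = 4 :=
  hF.toIsMixedPacking.card_eq_four hF.card_slice_six hβ

theorem exists_inflation [Fintype α] [NeZero n] (hn : ∑ p, wt p = n) {J : Finset (Finset α)}
    {P : Finset α → Finset (α × ℕ) → Prop} {n₄ n₆ : Finset α → ℕ}
    (hfill : ∀ c ∈ J, ∃ F, IsFilling wt (P c) (n₄ c) (n₆ c) c F)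
    (hcross : (J : Set (Finset α)).Pairwise fun c c' => ∀ β β' : Finset (α × ℕ),
      (∀ x ∈ β, x.1 ∈ c) → (∀ x ∈ β', x.1 ∈ c') → P c β → P c' β' →
        #(β ∩ β') ≤ 2 ∧ (#β = 6 → #β' = 6 → Disjoint β β')) :
    ∃ B : Finset (Finset (Fin n)), IsMixedPacking B ∧ HexadsDisjoint B ∧
      #(B.slice 4) = ∑ c ∈ J, n₄ c ∧ #(B.slice 6) = ∑ c ∈ J, n₆ c := by
  choose! F hF using hfill
  have hcross' : (J : Set (Finset α)).Pairwise fun c c' => ∀ β ∈ F c, ∀ β' ∈ F c',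
      #(β ∩ β') ≤ 2 ∧ (#β = 6 → #β' = 6 → Disjoint β β') := fun c hc c' hc' hne β hβ β' hβ' =>
    hcross hc hc' hne β β' ((hF c hc).fst_mem β hβ) ((hF c' hc').fst_mem β' hβ')
      ((hF c hc).property β hβ) ((hF c' hc').property β' hβ')
  have hinter : (J : Set (Finset α)).Pairwise fun c c' => ∀ β ∈ F c, ∀ β' ∈ F c', #(β ∩ β') ≤ 2 :=
    hcross'.imp fun c c' h β hβ β' hβ' => (h β hβ β' hβ').1
  have hpacking : IsMixedPacking (J.biUnion F) :=
    .biUnion (fun c hc => (hF c hc).toIsMixedPacking) hinter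
  have hhexads : HexadsDisjoint (J.biUnion F) := by
    intro β hβ β' hβ' hne
    obtain ⟨hβ, hβ6⟩ := mem_slice.1 hβ
    obtain ⟨hβ', hβ6'⟩ := mem_slice.1 hβ'
    obtain ⟨c, hc, hβ⟩ := mem_biUnion.1 hβ
    obtain ⟨c', hc', hβ'⟩ := mem_biUnion.1 hβ'
    rcases eq_or_ne c c' with rfl | hcc'
    · exact (hF c hc).hexadsDisjoint (mem_slice.2 ⟨hβ, hβ6⟩) (mem_slice.2 ⟨hβ', hβ6'⟩) hne
    · exact (hcross' hc hc' hcc' β hβ β' hβ').2 hβ6 hβ6'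
  obtain ⟨f, hf⟩ := exists_injOn_fin hn
  have hsub : ∀ β ∈ J.biUnion F, (β : Set (α × ℕ)) ⊆ {x | x.2 < wt x.1} := fun β hβ x hx => by
    obtain ⟨c, hc, hβ⟩ := mem_biUnion.1 hβ
    exact (hF c hc).snd_lt β hβ x hx
  refine ⟨(J.biUnion F).image (image f), hpacking.image hf hsub, hhexads.image hf hsub, ?_, ?_⟩
  · rw [card_slice_image hf hsub, card_slice_biUnion hinter (by norm_num)]
    exact sum_congr rfl fun c hc => (hF c hc).card_slice_four
  · rw [card_slice_image hf hsub, card_slice_biUnion hinter (by norm_num)]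
    exact sum_congr rfl fun c hc => (hF c hc).card_slice_six

end Inflation

/-! ### Tables -/

section Tables

/-- The union over `L` of the first `r.1` sets in the orbit of `r.2` under the permutation
`m ↦ p.getD m m`, as increasing lists. -/
def orbits (p : List ℕ) (L : List (ℕ × List ℕ)) : List (List ℕ) :=
  L.flatMap fun r =>
    List.iterate (fun l => (l.map fun m => p.getD m m).insertionSort (· ≤ ·)) r.2 r.1

/-- The set of triples contained in an increasing list, as a bit mask. -/
def tripleMask (l : List ℕ) : ℕ :=
  (l.sublistsLen 3).foldr (fun T s => 1 <<< T.foldl (36 * · + ·) 0 ||| s) 0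

/-- The triple masks of the lists in `D` are disjoint from `s` and from each other. -/
def triplesDisjoint : ℕ → List (List ℕ) → Bool
  | _, [] => true
  | s, l :: D => s &&& tripleMask l == 0 &&
    -- The case distinction makes the kernel evaluate the mask before passing it on.
    match s ||| tripleMask l with
    | 0 => triplesDisjoint 0 D
    | k + 1 => triplesDisjoint (k + 1) D

/-- A verified table of `n₄` quads and `n₆` hexads. The number `m` encodes the level `m % 6` in
the fibre over position `m / 6`, and `w` lists the sizes of these fibres. -/
structure IsTable (w : List ℕ) (t : List ℕ → Prop) (n₄ n₆ : ℕ) (D : List (List ℕ)) : Prop where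
  length_eq : ∀ l ∈ D, l.length = 4 ∨ l.length = 6
  sorted : ∀ l ∈ D, l.SortedLT
  mod_lt : ∀ l ∈ D, ∀ m ∈ l, m % 6 < w.getD (m / 6) 0
  property : ∀ l ∈ D, t l
  triplesDisjoint_eq : triplesDisjoint 0 D = true
  nodup_hexads : (D.filter (·.length = 6)).flatten.Nodup
  countP_four : D.countP (·.length = 4) = n₄
  countP_six : D.countP (·.length = 6) = n₆

variable {w : List ℕ} {t : List ℕ → Prop} {n₄ n₆ : ℕ} {D : List (List ℕ)} {l l' : List ℕ}

instance [DecidablePred t] : Decidable (IsTable w t n₄ n₆ D) :=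
  decidable_of_iff ((∀ l ∈ D, l.length = 4 ∨ l.length = 6) ∧ (∀ l ∈ D, l.SortedLT) ∧
      (∀ l ∈ D, ∀ m ∈ l, m % 6 < w.getD (m / 6) 0) ∧ (∀ l ∈ D, t l) ∧
      triplesDisjoint 0 D = true ∧ (D.filter (·.length = 6)).flatten.Nodup ∧
      D.countP (·.length = 4) = n₄ ∧ D.countP (·.length = 6) = n₆)
    ⟨fun ⟨h₁, h₂, h₃, h₄, h₅, h₆, h₇, h₈⟩ => ⟨h₁, h₂, h₃, h₄, h₅, h₆, h₇, h₈⟩,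
      fun ⟨h₁, h₂, h₃, h₄, h₅, h₆, h₇, h₈⟩ => ⟨h₁, h₂, h₃, h₄, h₅, h₆, h₇, h₈⟩⟩

lemma testBit_tripleMask {T : List ℕ} (hT : T.Sublist l) (h3 : T.length = 3) :
    (tripleMask l).testBit (T.foldl (36 * · + ·) 0) := by
  have key : ∀ M : List (List ℕ), T ∈ M →
      (M.foldr (fun T s => 1 <<< T.foldl (36 * · + ·) 0 ||| s) 0).testBit
        (T.foldl (36 * · + ·) 0) := fun M hM => by
    induction M with
    | nil => simp at hM
    | cons U M ih =>
      rw [List.foldr_cons, Nat.testBit_or, Bool.or_eq_true]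
      exact (List.mem_cons.1 hM).imp (fun h => by simp [h]) ih
  exact key _ (List.mem_sublistsLen.2 ⟨hT, h3⟩)

lemma card_inter_le_two_of_tripleMask (hl : l.SortedLT) (hl' : l'.SortedLT)
    (h : tripleMask l &&& tripleMask l' = 0) : #(l.toFinset ∩ l'.toFinset) ≤ 2 := by
  by_contra! hlt
  obtain ⟨T, hT, hT3⟩ := exists_subset_card_eq (n := 3) hlt
  have hsub : ∀ k : List ℕ, k.SortedLT → T ⊆ k.toFinset → T.sort.Sublist k := fun k hk hTk =>
    List.sublist_of_subperm_of_sortedLE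
      (List.subperm_of_subset (sort_nodup T _) fun m hm =>
        List.mem_toFinset.1 (hTk ((mem_sort _).1 hm)))
      (sortedLT_sort T).sortedLE hk.sortedLE
  have hlen : T.sort.length = 3 := (length_sort _).trans hT3
  have hbit := congr_arg (Nat.testBit · (T.sort.foldl (36 * · + ·) 0)) h
  simp [Nat.testBit_and, testBit_tripleMask (hsub l hl (hT.trans inter_subset_left)) hlen,
    testBit_tripleMask (hsub l' hl' (hT.trans inter_subset_right)) hlen] at hbit

lemma pairwise_of_triplesDisjoint {s : ℕ} (h : triplesDisjoint s D = true) :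
    (∀ l ∈ D, s &&& tripleMask l = 0) ∧
      D.Pairwise fun l l' => tripleMask l &&& tripleMask l' = 0 := by
  induction D generalizing s with
  | nil => simp
  | cons l D ih =>
    obtain ⟨hl, hD⟩ : s &&& tripleMask l = 0 ∧ triplesDisjoint (s ||| tripleMask l) D = true := by
      unfold triplesDisjoint at h
      split at h <;> simp_all
    obtain ⟨hs, hpair⟩ := ih hD
    simp only [Nat.and_or_distrib_right, Nat.or_eq_zero_iff] at hs
    exact ⟨List.forall_mem_cons.2 ⟨hl, fun l' hl' => (hs l' hl').1⟩,
      hpair.cons fun l' hl' => (hs l' hl').2⟩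

namespace IsTable

lemma pairwise (h : IsTable w t n₄ n₆ D) :
    D.Pairwise fun l l' => #(l.toFinset ∩ l'.toFinset) ≤ 2 :=
  (pairwise_of_triplesDisjoint h.triplesDisjoint_eq).2.imp_of_mem fun hl hl' =>
    card_inter_le_two_of_tripleMask (h.sorted _ hl) (h.sorted _ hl')

lemma card_toFinset (h : IsTable w t n₄ n₆ D) (hl : l ∈ D) : #l.toFinset = l.length :=
  List.toFinset_card_of_nodup (h.sorted l hl).nodup

lemma nodup (h : IsTable w t n₄ n₆ D) : (D.map List.toFinset).Nodup := by
  refine List.pairwise_map.2 (h.pairwise.imp_of_mem fun {l l'} hl _ hinter heq => ?_)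
  rw [← heq, inter_self, h.card_toFinset hl] at hinter
  have := h.length_eq l hl
  omega

lemma card_slice (h : IsTable w t n₄ n₆ D) (r : ℕ) :
    #((D.map List.toFinset).toFinset.slice r) = D.countP (·.length = r) := by
  have hfilter : (D.map List.toFinset).toFinset.slice r =
      ((D.map List.toFinset).filter (#· = r)).toFinset := by
    ext b
    simp [mem_slice]
  rw [hfilter, List.toFinset_card_of_nodup (h.nodup.filter _), ← List.countP_eq_length_filter,
    List.countP_map]
  exact List.countP_congr fun l hl => by simp [h.card_toFinset hl]

lemma isMixedPacking (h : IsTable w t n₄ n₆ D) :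
    IsMixedPacking (D.map List.toFinset).toFinset where
  card_eq b hb := by
    obtain ⟨l, hl, rfl⟩ := List.mem_map.1 (List.mem_toFinset.1 hb)
    rw [h.card_toFinset hl]
    exact h.length_eq l hl
  isTriplePacking b hb c hc hne := by
    obtain ⟨l, hl, rfl⟩ := List.mem_map.1 (List.mem_toFinset.1 hb)
    obtain ⟨l', hl', rfl⟩ := List.mem_map.1 (List.mem_toFinset.1 hc)
    have : Std.Symm fun l l' : List ℕ => #(l.toFinset ∩ l'.toFinset) ≤ 2 :=
      ⟨fun l l' hll' => by rwa [inter_comm]⟩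
    exact h.pairwise.forall hl hl' fun e => hne (e ▸ rfl)

lemma hexadsDisjoint (h : IsTable w t n₄ n₆ D) :
    HexadsDisjoint (D.map List.toFinset).toFinset := by
  intro b hb c hc hne
  obtain ⟨hb, hb6⟩ := mem_slice.1 hb
  obtain ⟨hc, hc6⟩ := mem_slice.1 hc
  obtain ⟨l, hl, rfl⟩ := List.mem_map.1 (List.mem_toFinset.1 hb)
  obtain ⟨l', hl', rfl⟩ := List.mem_map.1 (List.mem_toFinset.1 hc)
  rw [h.card_toFinset hl] at hb6
  rw [h.card_toFinset hl'] at hc6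
  have : Std.Symm (List.Disjoint (α := ℕ)) := ⟨fun _ _ => List.Disjoint.symm⟩
  have : l.Disjoint l' := (List.nodup_flatten.1 h.nodup_hexads).2.forall
    (List.mem_filter.2 ⟨hl, by simpa using hb6⟩) (List.mem_filter.2 ⟨hl', by simpa using hc6⟩)
    fun e => hne (e ▸ rfl)
  exact List.disjoint_toFinset_iff_disjoint.2 this

end IsTable

end Tables

section Placement

variable {α : Type*} [Inhabited α]

/-- The point encoded by `m` when position `i` stands for the `i`-th entry of `L`. -/
def place (L : List α) (m : ℕ) : α × ℕ :=
  (L.getD (m / 6) default, m % 6)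

variable {L : List α} {l : List ℕ} {m m' : ℕ}

lemma fst_place_mem (hm : m / 6 < L.length) : (place L m).1 ∈ L := by
  simp only [place, List.getD_eq_getElem _ _ hm, List.getElem_mem]

lemma fst_place_inj (hL : L.Nodup) (hm : m / 6 < L.length) (hm' : m' / 6 < L.length) :
    (place L m).1 = (place L m').1 ↔ m / 6 = m' / 6 := by
  simp only [place, List.getD_eq_getElem _ _ hm, List.getD_eq_getElem _ _ hm', hL.getElem_inj_iff]

lemma injOn_place (hL : L.Nodup) : Set.InjOn (place L) {m | m / 6 < L.length} :=
  fun m hm m' hm' h => by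
    have h₁ := (fst_place_inj hL hm hm').1 (congr_arg Prod.fst h)
    have h₂ : m % 6 = m' % 6 := congr_arg Prod.snd h
    omega

lemma length_le_of_fst_place_mem {S : List α} (h : (L ++ S).Nodup)
    (hm : (place (L ++ S) m).1 ∈ S) : L.length ≤ m / 6 := by
  by_contra! hlt
  rw [place, List.getD_append _ _ _ _ hlt] at hm
  refine (List.nodup_append'.1 h).2.2 ?_ hm
  rw [List.getD_eq_getElem _ _ hlt]
  exact List.getElem_mem hlt

/-- The points encoded by `l` lie in different fibres. -/
abbrev IsTransversalCode (l : List ℕ) : Prop :=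
  l.Pairwise fun m m' => m / 6 ≠ m' / 6

/-- Every pair of points encoded by `l` in a common fibre has colour `k`. -/
abbrev FiberPairsColoredCode (k : Bool) (l : List ℕ) : Prop :=
  ∀ m ∈ l, ∀ m' ∈ l, m ≠ m' → m / 6 = m' / 6 → hexagonAdj (m % 6) (m' % 6) = k

/-- At most two points encoded by `l` lie in each fibre. -/
abbrev FibersLeTwoCode (l : List ℕ) : Prop :=
  ∀ m ∈ l, l.countP (· / 6 = m / 6) ≤ 2

variable [DecidableEq α] {w : List ℕ} {t : List ℕ → Prop} {n₄ n₆ : ℕ} {D : List (List ℕ)}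
  {wt : α → ℕ} {c : Finset α} {P : Finset (α × ℕ) → Prop}

lemma injOn_fst_of_isTransversalCode (hL : L.Nodup) (hlt : ∀ m ∈ l, m / 6 < L.length)
    (h : IsTransversalCode l) :
    Set.InjOn Prod.fst (l.toFinset.image (place L) : Set (α × ℕ)) := by
  have : Std.Symm fun m m' : ℕ => m / 6 ≠ m' / 6 := ⟨fun _ _ => Ne.symm⟩
  intro x hx y hy hxy
  obtain ⟨m, hm, rfl⟩ := mem_image.1 (mem_coe.1 hx)
  obtain ⟨m', hm', rfl⟩ := mem_image.1 (mem_coe.1 hy)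
  rw [List.mem_toFinset] at hm hm'
  by_contra hne
  exact h.forall hm hm' (fun e => hne (e ▸ rfl)) ((fst_place_inj hL (hlt m hm) (hlt m' hm')).1 hxy)

lemma fiberPairsColored_of_code (hL : L.Nodup) (hlt : ∀ m ∈ l, m / 6 < L.length) {k : Bool}
    (h : FiberPairsColoredCode k l) : FiberPairsColored k (l.toFinset.image (place L)) := by
  simp only [FiberPairsColored, forall_mem_image, List.mem_toFinset]
  exact fun m hm m' hm' hne hmm' => h m hm m' hm' (fun e => hne (e ▸ rfl))
    ((fst_place_inj hL (hlt m hm) (hlt m' hm')).1 hmm')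

lemma card_filter_image_place_le (L : List α) {p : α × ℕ → Prop} [DecidablePred p] {q : ℕ → Bool}
    (h : ∀ m ∈ l, p (place L m) → q m) :
    #{x ∈ l.toFinset.image (place L) | p x} ≤ l.countP q := by
  have hsub : {x ∈ l.toFinset.image (place L) | p x} ⊆ (l.filter q).toFinset.image (place L) := by
    simp only [subset_iff, mem_filter, mem_image, List.mem_toFinset, List.mem_filter]
    rintro _ ⟨⟨m, hm, rfl⟩, hp⟩
    exact ⟨m, ⟨hm, h m hm hp⟩, rfl⟩
  rw [List.countP_eq_length_filter]
  exact (card_le_card hsub).trans (card_image_le.trans (List.toFinset_card_le _))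

lemma fibersLeTwo_of_code (hL : L.Nodup) (hlt : ∀ m ∈ l, m / 6 < L.length)
    (h : FibersLeTwoCode l) : FibersLeTwo (l.toFinset.image (place L)) := fun p => by
  by_cases hp : ∃ m ∈ l, (place L m).1 = p
  · obtain ⟨m, hm, rfl⟩ := hp
    refine (card_filter_image_place_le L fun m' hm' h' => ?_).trans (h m hm)
    simpa using (fst_place_inj hL (hlt m' hm') (hlt m hm)).1 h'
  · rw [filter_eq_empty_iff.2 ?_, card_empty]
    · exact Nat.zero_le 2
    · simpa using hp

theorem IsTable.exists_isFilling (h : IsTable w t n₄ n₆ D) (hL : L.Nodup) (hLc : L.toFinset = c)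
    (hw : L.map wt = w)
    (hP : ∀ l ∈ D, t l → (∀ m ∈ l, m / 6 < L.length) → P (l.toFinset.image (place L))) :
    ∃ F, IsFilling wt P n₄ n₆ c F := by
  have hlt : ∀ l ∈ D, ∀ m ∈ l, m / 6 < L.length := fun l hl m hm => by
    by_contra! hle
    have := h.mod_lt l hl m hm
    rw [List.getD_eq_default _ _ (by rwa [← hw, List.length_map])] at this
    omega
  have hsub : ∀ b ∈ (D.map List.toFinset).toFinset, (b : Set ℕ) ⊆ {m | m / 6 < L.length} := by
    simpa [Set.subset_def] using hlt
  have hmem : ∀ β ∈ (D.map List.toFinset).toFinset.image (image (place L)),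
      ∃ l ∈ D, β = l.toFinset.image (place L) := fun β hβ => by
    simpa [eq_comm] using hβ
  refine ⟨(D.map List.toFinset).toFinset.image (image (place L)),
    h.isMixedPacking.image (injOn_place hL) hsub, h.hexadsDisjoint.image (injOn_place hL) hsub,
    ?_, ?_, ?_, ?_, ?_⟩
  · rw [card_slice_image (injOn_place hL) hsub, h.card_slice, h.countP_four]
  · rw [card_slice_image (injOn_place hL) hsub, h.card_slice, h.countP_six]
  · rintro β hβ x hx
    obtain ⟨l, hl, rfl⟩ := hmem β hβ
    obtain ⟨m, hm, rfl⟩ := mem_image.1 hx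
    exact hLc ▸ List.mem_toFinset.2 (fst_place_mem (hlt l hl m (List.mem_toFinset.1 hm)))
  · rintro β hβ x hx
    obtain ⟨l, hl, rfl⟩ := hmem β hβ
    obtain ⟨m, hm, rfl⟩ := mem_image.1 hx
    have hm := List.mem_toFinset.1 hm
    have := h.mod_lt l hl m hm
    rwa [← hw, List.getD_eq_getElem _ _ (by simpa using hlt l hl m hm), List.getElem_map,
      ← List.getD_eq_getElem _ default] at this
  · rintro β hβ
    obtain ⟨l, hl, rfl⟩ := hmem β hβ
    exact hP l hl (h.property l hl) (hlt l hl)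

end Placement

/-- `l` encodes a transversal, or a block with at most two points in each fibre which avoids
position `i` and whose pairs in a common fibre have colour `k`. -/
abbrev IsLinkCode (i : ℕ) (k : Bool) (l : List ℕ) : Prop :=
  IsTransversalCode l ∨ ((∀ m ∈ l, m / 6 ≠ i) ∧ FiberPairsColoredCode k l ∧ FibersLeTwoCode l)

/-- `l` encodes a block which has at most two points after position `i` and which, if it is a
hexad, has none. -/
abbrev IsStemFillCode (i : ℕ) (l : List ℕ) : Prop :=
  l.countP (6 * i ≤ ·) ≤ 2 ∧ (l.length = 6 → ∀ m ∈ l, m / 6 < i)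

/-- `l` encodes a block with at most two points after the first two positions; if it meets both of
these, its pairs of points in one of them have colour `k`. -/
abbrev IsHoleFillCode (k : Bool) (l : List ℕ) : Prop :=
  l.countP (12 ≤ ·) ≤ 2 ∧ ∀ m ∈ l, ∀ m' ∈ l, ∀ m'' ∈ l, m / 6 < 2 → m'' / 6 < 2 → m ≠ m' →
    m / 6 = m' / 6 → m'' / 6 ≠ m / 6 → hexagonAdj (m % 6) (m' % 6) = k

/-- The quads with one point in each of four fibres, the levels of which add up to 0 modulo 6. Only
the levels below `s` occur in the last fibre. -/
def zeroSumQuads (s : ℕ) : List (List ℕ) :=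
  (List.range 6).flatMap fun x => (List.range 6).flatMap fun y => (List.range s).map fun z =>
    [x, 6 + y, 12 + (18 - x - y - z) % 6, 18 + z]

/- The tables below were found by computer searches for packings which are invariant under the
permutation given to `orbits`. -/

/-- Replaces a quad through the first stem only: fibre sizes 6, 6, 6, 0, links of colour `false`. -/
def prismQuads0 : List (List ℕ) :=
  orbits [1, 2, 3, 4, 5, 0, 11, 6, 7, 8, 9, 10]
    [(6, [0, 2, 6, 13]), (6, [0, 2, 7, 17]), (6, [0, 2, 8, 12]), (6, [0, 2, 9, 15]),
     (6, [0, 2, 10, 14]), (6, [0, 2, 11, 16]), (3, [0, 3, 6, 9]), (3, [0, 3, 7, 10]),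
     (3, [0, 3, 8, 11]), (3, [0, 3, 12, 14]), (3, [0, 3, 13, 16]), (3, [0, 3, 15, 17]),
     (6, [0, 6, 8, 17]), (6, [0, 6, 10, 16]), (6, [0, 6, 12, 15]), (6, [0, 7, 9, 14]),
     (6, [0, 7, 11, 12]), (6, [0, 7, 13, 15]), (6, [0, 8, 10, 15]), (6, [0, 8, 14, 16]),
     (6, [0, 9, 11, 13]), (6, [0, 9, 12, 16]), (6, [0, 10, 13, 17]), (6, [0, 11, 14, 17]),
     (3, [6, 9, 12, 14]), (3, [6, 9, 13, 16]), (3, [6, 9, 15, 17])]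

/-- Replaces a quad through the first stem only: fibre sizes 6, 6, 6, 2, links of colour `false`. -/
def prismQuads2 : List (List ℕ) :=
  orbits [6, 7, 8, 9, 10, 11, 12, 13, 14, 15, 16, 17, 0, 1, 2, 3, 4, 5]
    [(3, [0, 2, 6, 8]), (3, [0, 2, 7, 15]), (3, [0, 2, 9, 17]), (3, [0, 2, 10, 16]),
     (3, [0, 2, 11, 13]), (3, [0, 3, 6, 9]), (3, [0, 3, 7, 11]), (3, [0, 3, 8, 10]),
     (3, [0, 3, 13, 17]), (3, [0, 3, 14, 16]), (3, [0, 4, 6, 10]), (3, [0, 4, 7, 17]),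
     (3, [0, 4, 8, 14]), (3, [0, 4, 9, 13]), (3, [0, 4, 11, 15]), (1, [0, 6, 12, 19]),
     (3, [0, 6, 13, 16]), (3, [0, 6, 14, 17]), (3, [0, 6, 15, 18]), (3, [0, 7, 9, 16]),
     (3, [0, 7, 13, 18]), (3, [0, 7, 14, 19]), (3, [0, 8, 13, 19]), (3, [0, 8, 15, 17]),
     (3, [0, 8, 16, 18]), (3, [0, 9, 11, 14]), (3, [0, 9, 15, 19]), (3, [0, 10, 13, 15]),
     (3, [0, 10, 14, 18]), (3, [0, 10, 17, 19]), (3, [0, 11, 16, 19]), (3, [0, 11, 17, 18]),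
     (3, [1, 3, 7, 9]), (3, [1, 3, 8, 14]), (3, [1, 3, 11, 17]), (3, [1, 4, 7, 10]),
     (3, [1, 4, 8, 11]), (3, [1, 4, 9, 15]), (3, [1, 4, 14, 17]), (3, [1, 5, 7, 11]),
     (3, [1, 5, 8, 16]), (3, [1, 5, 10, 14]), (1, [1, 7, 13, 19]), (3, [1, 7, 14, 16]),
     (3, [1, 7, 15, 17]), (3, [1, 8, 15, 18]), (3, [1, 9, 16, 18]), (3, [1, 9, 17, 19]),
     (3, [1, 10, 16, 19]), (3, [1, 10, 17, 18]), (3, [1, 11, 14, 18]), (3, [1, 11, 15, 19]),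
     (3, [2, 4, 8, 10]), (3, [2, 4, 11, 17]), (3, [2, 5, 8, 11]), (3, [2, 5, 9, 15]),
     (1, [2, 8, 14, 18]), (3, [2, 8, 17, 19]), (3, [2, 9, 16, 19]), (3, [2, 10, 15, 19]),
     (3, [2, 11, 15, 18]), (3, [3, 5, 9, 11]), (3, [3, 5, 10, 16]), (1, [3, 9, 15, 18]),
     (3, [3, 11, 16, 18]), (1, [4, 10, 16, 18]), (1, [5, 11, 17, 19])]

/-- Replaces a quad through the first stem only: fibre sizes 6, 6, 6, 4, links of colour `false`. -/
def prismQuads4 : List (List ℕ) :=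
  orbits [6, 7, 8, 9, 10, 11, 12, 13, 14, 15, 16, 17, 0, 1, 2, 3, 4, 5]
    [(3, [0, 2, 6, 8]), (3, [0, 2, 7, 9]), (3, [0, 2, 10, 16]), (3, [0, 2, 11, 13]),
     (3, [0, 2, 15, 17]), (3, [0, 3, 6, 9]), (3, [0, 3, 7, 10]), (3, [0, 3, 8, 11]),
     (3, [0, 3, 13, 16]), (3, [0, 3, 14, 17]), (3, [0, 4, 6, 10]), (3, [0, 4, 7, 11]),
     (3, [0, 4, 8, 14]), (3, [0, 4, 9, 15]), (3, [0, 4, 13, 17]), (1, [0, 6, 12, 19]),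
     (3, [0, 6, 13, 20]), (3, [0, 6, 14, 16]), (3, [0, 6, 15, 21]), (3, [0, 6, 17, 18]),
     (3, [0, 7, 13, 15]), (3, [0, 7, 14, 18]), (3, [0, 7, 16, 19]), (3, [0, 7, 17, 21]),
     (3, [0, 8, 13, 21]), (3, [0, 8, 15, 20]), (3, [0, 8, 16, 18]), (3, [0, 8, 17, 19]),
     (3, [0, 9, 11, 17]), (3, [0, 9, 13, 18]), (3, [0, 9, 14, 19]), (3, [0, 9, 16, 20]),
     (3, [0, 10, 13, 19]), (3, [0, 10, 14, 21]), (3, [0, 10, 15, 18]), (3, [0, 10, 17, 20]),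
     (3, [0, 11, 14, 20]), (3, [0, 11, 15, 19]), (3, [0, 11, 16, 21]), (3, [1, 3, 7, 16]),
     (3, [1, 3, 8, 10]), (3, [1, 3, 9, 11]), (3, [1, 3, 15, 17]), (3, [1, 4, 7, 10]),
     (3, [1, 4, 8, 11]), (3, [1, 4, 14, 17]), (3, [1, 5, 7, 11]), (3, [1, 5, 8, 15]),
     (3, [1, 5, 9, 14]), (1, [1, 7, 13, 20]), (3, [1, 7, 14, 19]), (3, [1, 7, 15, 21]),
     (3, [1, 7, 17, 18]), (3, [1, 8, 14, 20]), (3, [1, 8, 16, 21]), (3, [1, 9, 15, 19]),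
     (3, [1, 9, 16, 18]), (3, [1, 9, 17, 20]), (3, [1, 10, 14, 18]), (3, [1, 10, 16, 20]),
     (3, [1, 10, 17, 21]), (3, [1, 11, 14, 16]), (3, [1, 11, 15, 20]), (3, [1, 11, 17, 19]),
     (3, [2, 4, 8, 10]), (3, [2, 4, 9, 11]), (3, [2, 5, 8, 11]), (1, [2, 8, 14, 19]),
     (3, [2, 8, 15, 18]), (3, [2, 8, 17, 21]), (3, [2, 9, 15, 21]), (3, [2, 9, 16, 19]),
     (3, [2, 10, 15, 20]), (3, [2, 10, 17, 19]), (3, [2, 11, 16, 20]), (3, [2, 11, 17, 18]),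
     (3, [3, 5, 10, 17]), (1, [3, 9, 15, 20]), (3, [3, 9, 17, 18]), (3, [3, 10, 16, 21]),
     (3, [3, 11, 16, 19]), (3, [3, 11, 17, 21]), (1, [4, 10, 16, 19]), (3, [4, 10, 17, 18]),
     (1, [5, 11, 17, 20])]

/-- Replaces a quad through the first stem only: fibre sizes 6, 6, 6, 5, links of colour `false`. -/
def prismQuads5 : List (List ℕ) :=
  orbits [6, 7, 8, 9, 10, 11, 12, 13, 14, 15, 16, 17, 0, 1, 2, 3, 4, 5]
    [(3, [0, 2, 6, 8]), (3, [0, 2, 7, 10]), (3, [0, 2, 9, 11]), (3, [0, 2, 13, 16]),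
     (3, [0, 2, 15, 17]), (3, [0, 3, 6, 9]), (3, [0, 3, 7, 11]), (3, [0, 3, 8, 10]),
     (3, [0, 3, 13, 17]), (3, [0, 3, 14, 16]), (3, [0, 4, 6, 10]), (3, [0, 4, 7, 9]),
     (3, [0, 4, 8, 11]), (3, [0, 4, 13, 15]), (3, [0, 4, 14, 17]), (1, [0, 6, 12, 22]),
     (3, [0, 6, 14, 18]), (3, [0, 6, 15, 19]), (3, [0, 6, 16, 20]), (3, [0, 6, 17, 21]),
     (3, [0, 7, 13, 21]), (3, [0, 7, 14, 19]), (3, [0, 7, 15, 18]), (3, [0, 7, 16, 22]),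
     (3, [0, 7, 17, 20]), (3, [0, 8, 13, 19]), (3, [0, 8, 14, 22]), (3, [0, 8, 15, 20]),
     (3, [0, 8, 16, 21]), (3, [0, 9, 13, 18]), (3, [0, 9, 14, 20]), (3, [0, 9, 15, 21]),
     (3, [0, 9, 17, 22]), (3, [0, 10, 13, 22]), (3, [0, 10, 14, 21]), (3, [0, 10, 16, 19]),
     (3, [0, 10, 17, 18]), (3, [0, 11, 13, 20]), (3, [0, 11, 15, 22]), (3, [0, 11, 16, 18]),
     (3, [0, 11, 17, 19]), (3, [1, 3, 7, 9]), (3, [1, 3, 8, 11]), (3, [1, 3, 14, 17]),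
     (3, [1, 4, 7, 10]), (3, [1, 4, 9, 11]), (3, [1, 4, 15, 17]), (3, [1, 5, 7, 11]),
     (3, [1, 5, 8, 10]), (3, [1, 5, 14, 16]), (3, [1, 7, 14, 20]), (3, [1, 7, 15, 22]),
     (3, [1, 7, 16, 18]), (3, [1, 7, 17, 19]), (3, [1, 8, 14, 18]), (3, [1, 8, 15, 21]),
     (3, [1, 8, 17, 22]), (3, [1, 9, 14, 21]), (3, [1, 9, 15, 20]), (3, [1, 9, 16, 19]),
     (3, [1, 10, 15, 19]), (3, [1, 10, 16, 20]), (3, [1, 10, 17, 21]), (3, [1, 11, 14, 22]),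
     (3, [1, 11, 16, 21]), (3, [1, 11, 17, 18]), (3, [2, 4, 8, 10]), (3, [2, 5, 8, 11]),
     (3, [2, 8, 15, 19]), (3, [2, 8, 16, 20]), (3, [2, 8, 17, 21]), (3, [2, 9, 16, 22]),
     (3, [2, 9, 17, 18]), (3, [2, 10, 15, 22]), (3, [2, 10, 16, 18]), (3, [2, 10, 17, 19]),
     (3, [2, 11, 15, 18]), (3, [2, 11, 16, 19]), (3, [2, 11, 17, 20]), (3, [3, 5, 9, 11]),
     (1, [3, 9, 15, 22]), (3, [3, 9, 16, 18]), (3, [3, 9, 17, 19]), (3, [3, 10, 16, 21]),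
     (3, [3, 10, 17, 20]), (3, [3, 11, 16, 20]), (3, [3, 11, 17, 21]), (1, [4, 10, 16, 22]),
     (3, [4, 11, 17, 22])]

/-- Replaces a quad through the first stem only: fibre sizes 6, 6, 6, 6, links of colour `false`. -/
def prismQuads6 : List (List ℕ) :=
  orbits [6, 7, 8, 9, 10, 11, 12, 13, 14, 15, 16, 17, 0, 1, 2, 3, 4, 5]
    [(3, [0, 2, 6, 8]), (3, [0, 2, 7, 10]), (3, [0, 2, 9, 11]), (3, [0, 2, 13, 16]),
     (3, [0, 2, 15, 17]), (3, [0, 3, 6, 9]), (3, [0, 3, 7, 11]), (3, [0, 3, 8, 10]),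
     (3, [0, 3, 13, 17]), (3, [0, 3, 14, 16]), (3, [0, 4, 6, 10]), (3, [0, 4, 7, 9]),
     (3, [0, 4, 8, 11]), (3, [0, 4, 13, 15]), (3, [0, 4, 14, 17]), (1, [0, 6, 12, 22]),
     (3, [0, 6, 13, 23]), (3, [0, 6, 14, 18]), (3, [0, 6, 15, 19]), (3, [0, 6, 16, 20]),
     (3, [0, 6, 17, 21]), (3, [0, 7, 13, 21]), (3, [0, 7, 14, 19]), (3, [0, 7, 15, 18]),
     (3, [0, 7, 16, 22]), (3, [0, 7, 17, 20]), (3, [0, 8, 13, 19]), (3, [0, 8, 14, 22]),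
     (3, [0, 8, 15, 20]), (3, [0, 8, 16, 21]), (3, [0, 8, 17, 23]), (3, [0, 9, 13, 18]),
     (3, [0, 9, 14, 20]), (3, [0, 9, 15, 21]), (3, [0, 9, 16, 23]), (3, [0, 9, 17, 22]),
     (3, [0, 10, 13, 22]), (3, [0, 10, 14, 21]), (3, [0, 10, 15, 23]), (3, [0, 10, 16, 19]),
     (3, [0, 10, 17, 18]), (3, [0, 11, 13, 20]), (3, [0, 11, 14, 23]), (3, [0, 11, 15, 22]),
     (3, [0, 11, 16, 18]), (3, [0, 11, 17, 19]), (3, [1, 3, 7, 9]), (3, [1, 3, 8, 11]),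
     (3, [1, 3, 14, 17]), (3, [1, 4, 7, 10]), (3, [1, 4, 9, 11]), (3, [1, 4, 15, 17]),
     (3, [1, 5, 7, 11]), (3, [1, 5, 8, 10]), (3, [1, 5, 14, 16]), (1, [1, 7, 13, 23]),
     (3, [1, 7, 14, 20]), (3, [1, 7, 15, 22]), (3, [1, 7, 16, 18]), (3, [1, 7, 17, 19]),
     (3, [1, 8, 14, 18]), (3, [1, 8, 15, 21]), (3, [1, 8, 16, 23]), (3, [1, 8, 17, 22]),
     (3, [1, 9, 14, 21]), (3, [1, 9, 15, 20]), (3, [1, 9, 16, 19]), (3, [1, 9, 17, 23]),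
     (3, [1, 10, 14, 23]), (3, [1, 10, 15, 19]), (3, [1, 10, 16, 20]), (3, [1, 10, 17, 21]),
     (3, [1, 11, 14, 22]), (3, [1, 11, 15, 23]), (3, [1, 11, 16, 21]), (3, [1, 11, 17, 18]),
     (3, [2, 4, 8, 10]), (3, [2, 5, 8, 11]), (1, [2, 8, 14, 23]), (3, [2, 8, 15, 19]),
     (3, [2, 8, 16, 20]), (3, [2, 8, 17, 21]), (3, [2, 9, 15, 23]), (3, [2, 9, 16, 22]),
     (3, [2, 9, 17, 18]), (3, [2, 10, 15, 22]), (3, [2, 10, 16, 18]), (3, [2, 10, 17, 19]),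
     (3, [2, 11, 15, 18]), (3, [2, 11, 16, 19]), (3, [2, 11, 17, 20]), (3, [3, 5, 9, 11]),
     (1, [3, 9, 15, 22]), (3, [3, 9, 16, 18]), (3, [3, 9, 17, 19]), (3, [3, 10, 16, 21]),
     (3, [3, 10, 17, 20]), (3, [3, 11, 16, 20]), (3, [3, 11, 17, 21]), (1, [4, 10, 16, 22]),
     (3, [4, 10, 17, 23]), (3, [4, 11, 17, 22]), (1, [5, 11, 17, 23])]

/-- Replaces a quad through the second stem only: fibre sizes 6, 6, 6, 0, links of colour `true`. -/
def hexagonQuads0 : List (List ℕ) :=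
  orbits [1, 2, 3, 4, 5, 0, 11, 6, 7, 8, 9, 10]
    [(6, [0, 1, 6, 12]), (6, [0, 1, 7, 17]), (6, [0, 1, 8, 16]), (6, [0, 1, 9, 15]),
     (6, [0, 1, 10, 14]), (6, [0, 1, 11, 13]), (6, [0, 6, 7, 14]), (6, [0, 6, 11, 15]),
     (6, [0, 6, 16, 17]), (6, [0, 7, 8, 13]), (6, [0, 7, 15, 16]), (6, [0, 8, 9, 12]),
     (6, [0, 8, 14, 15]), (6, [0, 9, 10, 17]), (6, [0, 9, 13, 14]), (6, [0, 10, 11, 16]),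
     (6, [0, 10, 12, 13]), (6, [0, 11, 12, 17])]

/-- Replaces a quad through the second stem only: fibre sizes 6, 6, 6, 6, links of colour `true`. -/
def hexagonQuads6 : List (List ℕ) :=
  orbits [6, 7, 8, 9, 10, 11, 12, 13, 14, 15, 16, 17, 0, 1, 2, 3, 4, 5]
    [(3, [0, 1, 6, 7]), (3, [0, 1, 8, 9]), (3, [0, 1, 10, 11]), (3, [0, 1, 14, 15]),
     (3, [0, 1, 16, 17]), (3, [0, 5, 6, 11]), (3, [0, 5, 7, 8]), (3, [0, 5, 9, 10]),
     (3, [0, 5, 13, 14]), (3, [0, 5, 15, 16]), (1, [0, 6, 12, 18]), (3, [0, 6, 13, 19]),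
     (3, [0, 6, 14, 20]), (3, [0, 6, 15, 21]), (3, [0, 6, 16, 22]), (3, [0, 6, 17, 23]),
     (3, [0, 7, 13, 18]), (3, [0, 7, 14, 21]), (3, [0, 7, 15, 20]), (3, [0, 7, 16, 23]),
     (3, [0, 7, 17, 22]), (3, [0, 8, 13, 21]), (3, [0, 8, 14, 22]), (3, [0, 8, 15, 23]),
     (3, [0, 8, 16, 18]), (3, [0, 8, 17, 19]), (3, [0, 9, 13, 20]), (3, [0, 9, 14, 23]),
     (3, [0, 9, 15, 22]), (3, [0, 9, 16, 19]), (3, [0, 9, 17, 18]), (3, [0, 10, 13, 23]),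
     (3, [0, 10, 14, 18]), (3, [0, 10, 15, 19]), (3, [0, 10, 16, 20]), (3, [0, 10, 17, 21]),
     (3, [0, 11, 13, 22]), (3, [0, 11, 14, 19]), (3, [0, 11, 15, 18]), (3, [0, 11, 16, 21]),
     (3, [0, 11, 17, 20]), (3, [1, 2, 7, 8]), (3, [1, 2, 9, 10]), (3, [1, 2, 15, 16]),
     (1, [1, 7, 13, 19]), (3, [1, 7, 14, 20]), (3, [1, 7, 15, 21]), (3, [1, 7, 16, 22]),
     (3, [1, 7, 17, 23]), (3, [1, 8, 14, 23]), (3, [1, 8, 15, 22]), (3, [1, 8, 16, 19]),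
     (3, [1, 8, 17, 18]), (3, [1, 9, 14, 22]), (3, [1, 9, 15, 23]), (3, [1, 9, 16, 18]),
     (3, [1, 9, 17, 19]), (3, [1, 10, 14, 19]), (3, [1, 10, 15, 18]), (3, [1, 10, 16, 21]),
     (3, [1, 10, 17, 20]), (3, [1, 11, 14, 18]), (3, [1, 11, 15, 19]), (3, [1, 11, 16, 20]),
     (3, [1, 11, 17, 21]), (3, [2, 3, 8, 9]), (3, [2, 3, 10, 11]), (3, [2, 3, 16, 17]),
     (1, [2, 8, 14, 18]), (3, [2, 8, 15, 19]), (3, [2, 8, 16, 20]), (3, [2, 8, 17, 21]),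
     (3, [2, 9, 15, 18]), (3, [2, 9, 16, 21]), (3, [2, 9, 17, 20]), (3, [2, 10, 15, 21]),
     (3, [2, 10, 16, 22]), (3, [2, 10, 17, 23]), (3, [2, 11, 15, 20]), (3, [2, 11, 16, 23]),
     (3, [2, 11, 17, 22]), (3, [3, 4, 9, 10]), (1, [3, 9, 15, 19]), (3, [3, 9, 16, 20]),
     (3, [3, 9, 17, 21]), (3, [3, 10, 16, 23]), (3, [3, 10, 17, 22]), (3, [3, 11, 16, 22]),
     (3, [3, 11, 17, 23]), (3, [4, 5, 10, 11]), (1, [4, 10, 16, 18]), (3, [4, 10, 17, 19]),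
     (3, [4, 11, 17, 18]), (1, [5, 11, 17, 19])]

/-- Replaces a quad through both stems: fibre sizes 6, 6, 0, 0. -/
def stemQuadFill0 : List (List ℕ) :=
  orbits [1, 2, 3, 4, 5, 0, 7, 8, 9, 10, 11, 6]
    [(1, [0, 1, 2, 3, 4, 5]), (6, [0, 1, 6, 7]), (6, [0, 1, 8, 9]), (6, [0, 1, 10, 11]),
     (6, [0, 2, 6, 8]), (6, [0, 2, 7, 10]), (6, [0, 2, 9, 11]), (3, [0, 3, 6, 9]),
     (6, [0, 3, 7, 11]), (1, [6, 7, 8, 9, 10, 11])]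

/-- Replaces a quad through both stems: fibre sizes 6, 6, 2, 0. -/
def stemQuadFill2 : List (List ℕ) :=
  orbits [1, 2, 3, 4, 5, 0, 7, 8, 9, 10, 11, 6, 13, 12]
    [(6, [0, 1, 2, 6]), (3, [0, 1, 3, 4]), (6, [0, 1, 7, 12]), (6, [0, 1, 8, 9]),
     (6, [0, 1, 10, 13]), (2, [0, 2, 4, 12]), (6, [0, 2, 7, 13]), (6, [0, 2, 8, 10]),
     (6, [0, 2, 9, 11]), (6, [0, 3, 6, 12]), (3, [0, 3, 7, 10]), (3, [0, 3, 8, 11]),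
     (6, [0, 6, 7, 11]), (6, [0, 6, 9, 10]), (6, [0, 8, 12, 13]), (6, [0, 10, 11, 12]),
     (6, [6, 7, 10, 13]), (2, [6, 8, 10, 12])]

/-- Replaces a quad through both stems: fibre sizes 6, 6, 4, 0. -/
def stemQuadFill4 : List (List ℕ) :=
  orbits [1, 2, 3, 4, 5, 6, 7, 8, 9, 10, 11, 0, 13, 14, 15, 12]
    [(12, [0, 1, 2, 9]), (12, [0, 1, 3, 15]), (12, [0, 1, 4, 14]), (12, [0, 1, 5, 10]),
     (6, [0, 1, 6, 7]), (12, [0, 1, 12, 13]), (12, [0, 2, 4, 15]), (12, [0, 2, 5, 12]),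
     (6, [0, 2, 6, 8]), (3, [0, 3, 6, 9]), (12, [0, 3, 8, 12]), (4, [0, 4, 8, 13]),
     (12, [0, 5, 14, 15]), (6, [0, 6, 12, 14]), (6, [0, 6, 13, 15])]

/-- Replaces a quad through both stems: fibre sizes 6, 6, 5, 0. -/
def stemQuadFill5 : List (List ℕ) :=
  orbits [1, 2, 3, 4, 5, 6, 7, 8, 9, 10, 11, 0, 13, 14, 12, 16, 15]
    [(12, [0, 1, 2, 10]), (12, [0, 1, 3, 16]), (12, [0, 1, 4, 13]), (12, [0, 1, 5, 15]),
     (12, [0, 1, 6, 8]), (12, [0, 1, 12, 14]), (12, [0, 2, 5, 8]), (12, [0, 2, 9, 14]),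
     (12, [0, 2, 13, 16]), (12, [0, 3, 8, 13]), (12, [0, 4, 12, 15]), (12, [0, 5, 12, 16]),
     (6, [0, 6, 12, 13]), (6, [0, 6, 15, 16])]

/-- Replaces a quad through both stems: fibre sizes 6, 6, 6, 0. -/
def stemQuadFill6 : List (List ℕ) :=
  orbits [1, 2, 3, 4, 5, 6, 7, 8, 9, 10, 11, 0, 13, 14, 15, 16, 17, 12]
    [(12, [0, 1, 2, 15]), (12, [0, 1, 3, 17]), (12, [0, 1, 4, 9]), (12, [0, 1, 5, 6]),
     (12, [0, 1, 10, 16]), (12, [0, 1, 12, 13]), (2, [0, 2, 4, 6, 8, 10]), (12, [0, 2, 5, 17]),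
     (12, [0, 2, 7, 14]), (12, [0, 2, 9, 13]), (3, [0, 3, 6, 9]), (12, [0, 3, 13, 14]),
     (12, [0, 4, 12, 16]), (12, [0, 4, 13, 15]), (12, [0, 4, 14, 17]), (12, [0, 5, 14, 15]),
     (6, [0, 6, 12, 15]), (6, [0, 6, 13, 17]), (6, [0, 6, 14, 16])]

/-- Replaces a quad through both stems: fibre sizes 6, 6, 2, 6. -/
def stemQuadFill8 : List (List ℕ) :=
  orbits [1, 2, 3, 4, 5, 6, 7, 8, 9, 10, 11, 0, 13, 12, 14, 15, 16, 17, 19, 20, 21, 22, 23, 18]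
    [(12, [0, 1, 2, 13]), (12, [0, 1, 3, 8]), (12, [0, 1, 4, 6]), (12, [0, 1, 5, 18]),
     (12, [0, 1, 7, 9]), (12, [0, 1, 10, 21]), (12, [0, 1, 19, 23]), (12, [0, 1, 20, 22]),
     (12, [0, 2, 4, 18]), (12, [0, 2, 12, 19]), (12, [0, 2, 20, 21]), (3, [0, 3, 6, 9]),
     (12, [0, 3, 7, 22]), (12, [0, 3, 12, 21]), (12, [0, 3, 13, 19]), (12, [0, 3, 18, 20]),
     (4, [0, 4, 8, 12]), (12, [0, 4, 13, 20]), (12, [0, 4, 21, 22]), (12, [0, 5, 12, 20]),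
     (12, [0, 5, 13, 23]), (12, [0, 5, 19, 22]), (6, [0, 6, 12, 13]), (6, [0, 6, 18, 21]),
     (6, [0, 6, 19, 20]), (6, [0, 6, 22, 23])]

/-- Replaces a quad through both stems: fibre sizes 6, 6, 4, 6. -/
def stemQuadFill10 : List (List ℕ) :=
  orbits [1, 2, 3, 4, 5, 6, 7, 8, 9, 10, 11, 0, 13, 14, 15, 12, 16, 17, 19, 20, 21, 22, 23, 18]
    [(12, [0, 1, 2, 4]), (12, [0, 1, 5, 6]), (12, [0, 1, 9, 18]), (12, [0, 1, 10, 20]),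
     (12, [0, 1, 12, 22]), (12, [0, 1, 13, 19]), (12, [0, 1, 14, 21]), (12, [0, 1, 15, 23]),
     (12, [0, 2, 5, 9]), (6, [0, 2, 6, 8]), (12, [0, 2, 7, 15]), (12, [0, 2, 12, 20]),
     (12, [0, 2, 13, 21]), (12, [0, 2, 14, 23]), (12, [0, 2, 18, 19]), (3, [0, 3, 6, 9]),
     (12, [0, 3, 12, 15]), (12, [0, 3, 13, 23]), (12, [0, 3, 14, 19]), (12, [0, 3, 18, 20]),
     (4, [0, 4, 8, 14]), (12, [0, 4, 12, 23]), (12, [0, 4, 13, 22]), (12, [0, 4, 15, 18]),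
     (12, [0, 4, 19, 20]), (12, [0, 5, 14, 15]), (12, [0, 5, 18, 22]), (12, [0, 5, 19, 21]),
     (12, [0, 5, 20, 23]), (6, [0, 6, 12, 14]), (6, [0, 6, 13, 15]), (6, [0, 6, 18, 23]),
     (6, [0, 6, 19, 22]), (6, [0, 6, 20, 21])]

/-- Replaces the hexad through both stems: fibre sizes 6, 6, 6, 6, 0, 0. -/
def stemHexadFill0 : List (List ℕ) :=
  orbits [1, 2, 3, 4, 5, 6, 7, 8, 9, 10, 11, 12, 13, 14, 15, 16, 17, 18, 19, 20, 21, 22, 23, 0]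
    [(24, [0, 1, 2, 4]), (24, [0, 1, 5, 11]), (24, [0, 1, 6, 8]), (24, [0, 1, 7, 17]),
     (24, [0, 1, 9, 20]), (24, [0, 1, 10, 16]), (12, [0, 1, 12, 13]), (24, [0, 1, 14, 21]),
     (24, [0, 1, 15, 18]), (24, [0, 1, 19, 22]), (24, [0, 2, 5, 9]), (24, [0, 2, 6, 17]),
     (24, [0, 2, 7, 20]), (24, [0, 2, 8, 11]), (24, [0, 2, 10, 15]), (12, [0, 2, 12, 14]),
     (24, [0, 2, 13, 16]), (24, [0, 3, 8, 15]), (24, [0, 3, 12, 19]), (24, [0, 3, 14, 20]),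
     (4, [0, 4, 8, 12, 16, 20]), (24, [0, 4, 9, 14]), (6, [0, 6, 12, 18])]

/-- Replaces the hexad through both stems: fibre sizes 6, 6, 6, 6, 2, 0. -/
def stemHexadFill2 : List (List ℕ) :=
  orbits [1, 2, 3, 4, 5, 6, 7, 8, 9, 10, 11, 12, 13, 14, 15, 16, 17, 18, 19, 20, 21, 22, 23, 0,
    25, 24]
    [(24, [0, 1, 2, 6]), (24, [0, 1, 3, 19]), (24, [0, 1, 4, 14]), (24, [0, 1, 7, 22]),
     (24, [0, 1, 8, 20]), (24, [0, 1, 9, 12]), (24, [0, 1, 10, 18]), (24, [0, 1, 11, 25]),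
     (24, [0, 1, 13, 16]), (24, [0, 1, 15, 24]), (24, [0, 1, 17, 21]), (24, [0, 2, 4, 19]),
     (24, [0, 2, 5, 25]), (24, [0, 2, 7, 21]), (24, [0, 2, 8, 13]), (24, [0, 2, 10, 12]),
     (24, [0, 2, 11, 15]), (24, [0, 2, 20, 24]), (24, [0, 3, 6, 17]), (24, [0, 3, 7, 24]),
     (24, [0, 3, 8, 18]), (24, [0, 4, 9, 18]), (24, [0, 4, 10, 17]), (24, [0, 4, 11, 16]),
     (24, [0, 5, 11, 24]), (6, [0, 6, 12, 18]), (24, [0, 7, 15, 25]), (8, [0, 8, 16, 25]),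
     (12, [0, 12, 24, 25])]

/-- Replaces the hexad through both stems: fibre sizes 6, 6, 6, 6, 4, 0. -/
def stemHexadFill4 : List (List ℕ) :=
  orbits [1, 2, 3, 4, 5, 6, 7, 8, 9, 10, 11, 12, 13, 14, 15, 16, 17, 18, 19, 20, 21, 22, 23, 0,
    25, 26, 27, 24]
    [(24, [0, 1, 2, 7]), (24, [0, 1, 3, 14]), (24, [0, 1, 4, 11]), (24, [0, 1, 5, 24]),
     (24, [0, 1, 8, 9]), (24, [0, 1, 10, 15]), (12, [0, 1, 12, 13]), (24, [0, 1, 18, 21]),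
     (24, [0, 1, 19, 26]), (24, [0, 1, 20, 25]), (24, [0, 1, 22, 27]), (24, [0, 2, 4, 26]),
     (24, [0, 2, 5, 19]), (24, [0, 2, 6, 8]), (24, [0, 2, 9, 11]), (24, [0, 2, 10, 12]),
     (24, [0, 2, 21, 27]), (24, [0, 3, 8, 11]), (24, [0, 3, 9, 12]), (24, [0, 3, 13, 27]),
     (24, [0, 3, 20, 24]), (24, [0, 4, 8, 18]), (24, [0, 4, 9, 13]), (24, [0, 4, 10, 17]),
     (12, [0, 4, 12, 16]), (24, [0, 5, 11, 16]), (12, [0, 5, 12, 17]), (6, [0, 6, 12, 18]),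
     (24, [0, 6, 15, 24]), (24, [0, 6, 16, 25]), (24, [0, 6, 17, 26]), (24, [0, 7, 15, 27]),
     (24, [0, 7, 16, 26]), (8, [0, 8, 16, 27]), (24, [0, 10, 25, 26]), (24, [0, 11, 25, 27]),
     (12, [0, 12, 24, 25]), (12, [0, 12, 26, 27])]

/-- Replaces the hexad through both stems: fibre sizes 6, 6, 6, 6, 5, 0. -/
def stemHexadFill5 : List (List ℕ) :=
  orbits [1, 2, 3, 4, 5, 6, 7, 8, 9, 10, 11, 12, 13, 14, 15, 16, 17, 18, 19, 20, 21, 22, 23, 0,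
    25, 26, 24, 28, 27]
    [(24, [0, 1, 2, 22]), (24, [0, 1, 3, 10]), (24, [0, 1, 4, 14]), (24, [0, 1, 5, 25]),
     (24, [0, 1, 6, 15]), (24, [0, 1, 7, 17]), (24, [0, 1, 8, 19]), (24, [0, 1, 9, 26]),
     (24, [0, 1, 11, 13]), (24, [0, 1, 16, 20]), (24, [0, 1, 18, 28]), (24, [0, 1, 24, 27]),
     (24, [0, 2, 5, 10]), (24, [0, 2, 6, 18]), (24, [0, 2, 7, 20]), (24, [0, 2, 8, 26]),
     (24, [0, 2, 11, 19]), (24, [0, 2, 12, 15]), (24, [0, 2, 16, 28]), (24, [0, 2, 21, 27]),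
     (24, [0, 2, 24, 25]), (24, [0, 3, 6, 19]), (24, [0, 3, 7, 15]), (24, [0, 3, 9, 20]),
     (24, [0, 3, 11, 24]), (24, [0, 3, 17, 26]), (24, [0, 3, 18, 25]), (24, [0, 4, 15, 27]),
     (24, [0, 4, 17, 25]), (24, [0, 4, 18, 26]), (24, [0, 4, 19, 28]), (12, [0, 5, 12, 17]),
     (24, [0, 5, 15, 24]), (24, [0, 6, 14, 27]), (24, [0, 7, 25, 27]), (24, [0, 11, 25, 28]),
     (12, [0, 12, 24, 26]), (12, [0, 12, 27, 28])]

/-- Replaces the hexad through both stems: fibre sizes 6, 6, 6, 6, 6, 0. -/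
def stemHexadFill6 : List (List ℕ) :=
  orbits [1, 2, 3, 4, 5, 6, 7, 8, 9, 10, 11, 12, 13, 14, 15, 16, 17, 18, 19, 20, 21, 22, 23, 0,
    25, 26, 27, 28, 29, 24]
    [(24, [0, 1, 2, 12]), (24, [0, 1, 3, 21]), (24, [0, 1, 4, 28]), (24, [0, 1, 5, 10]),
     (24, [0, 1, 6, 13]), (24, [0, 1, 7, 29]), (24, [0, 1, 8, 17]), (24, [0, 1, 9, 19]),
     (24, [0, 1, 14, 22]), (24, [0, 1, 15, 25]), (24, [0, 1, 16, 24]), (24, [0, 1, 18, 20]),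
     (24, [0, 1, 26, 27]), (24, [0, 2, 4, 10]), (24, [0, 2, 5, 11]), (24, [0, 2, 9, 15]),
     (24, [0, 2, 13, 26]), (24, [0, 2, 14, 21]), (24, [0, 2, 17, 29]), (24, [0, 2, 18, 25]),
     (24, [0, 2, 19, 27]), (24, [0, 2, 24, 28]), (24, [0, 3, 7, 28]), (24, [0, 3, 8, 19]),
     (24, [0, 3, 10, 20]), (24, [0, 3, 11, 26]), (12, [0, 3, 12, 15]), (24, [0, 3, 13, 24]),
     (24, [0, 3, 14, 25]), (24, [0, 3, 18, 29]), (4, [0, 4, 8, 12, 16, 20]), (24, [0, 4, 11, 15]),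
     (24, [0, 4, 18, 24]), (24, [0, 4, 19, 26]), (24, [0, 4, 27, 29]), (24, [0, 5, 15, 24]),
     (24, [0, 5, 18, 27]), (24, [0, 5, 28, 29]), (6, [0, 6, 12, 18]), (24, [0, 6, 16, 26]),
     (24, [0, 7, 25, 27]), (24, [0, 8, 24, 27]), (12, [0, 12, 24, 25]), (12, [0, 12, 26, 29]),
     (12, [0, 12, 27, 28])]

/-- Replaces the hexad through both stems: fibre sizes 6, 6, 6, 6, 2, 6. -/
def stemHexadFill8 : List (List ℕ) :=
  orbits [1, 2, 3, 4, 5, 6, 7, 8, 9, 10, 11, 12, 13, 14, 15, 16, 17, 18, 19, 20, 21, 22, 23, 0,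
    25, 30, 26, 27, 28, 29, 31, 32, 33, 34, 35, 24]
    [(24, [0, 1, 2, 24]), (24, [0, 1, 3, 7]), (24, [0, 1, 4, 5]), (24, [0, 1, 6, 9]),
     (24, [0, 1, 8, 34]), (24, [0, 1, 10, 17]), (24, [0, 1, 11, 15]), (24, [0, 1, 12, 33]),
     (24, [0, 1, 13, 18]), (24, [0, 1, 14, 32]), (24, [0, 1, 16, 25]), (24, [0, 1, 19, 31]),
     (24, [0, 1, 22, 30]), (24, [0, 2, 4, 35]), (24, [0, 2, 5, 31]), (24, [0, 2, 7, 21]),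
     (24, [0, 2, 8, 13]), (24, [0, 2, 9, 34]), (24, [0, 2, 10, 12]), (24, [0, 2, 11, 20]),
     (24, [0, 2, 15, 18]), (24, [0, 2, 17, 25]), (24, [0, 2, 19, 30]), (24, [0, 3, 6, 31]),
     (24, [0, 3, 8, 20]), (12, [0, 3, 12, 15]), (24, [0, 3, 13, 34]), (24, [0, 3, 14, 33]),
     (24, [0, 3, 16, 35]), (24, [0, 3, 17, 30]), (24, [0, 4, 8, 32]), (24, [0, 4, 9, 19]),
     (24, [0, 4, 10, 18]), (24, [0, 4, 11, 17]), (24, [0, 4, 16, 30]), (24, [0, 4, 25, 31]),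
     (24, [0, 4, 33, 34]), (24, [0, 5, 13, 30]), (24, [0, 5, 25, 33]), (24, [0, 5, 32, 34]),
     (6, [0, 6, 12, 18]), (24, [0, 6, 25, 32]), (24, [0, 6, 30, 33]), (24, [0, 6, 34, 35]),
     (24, [0, 7, 16, 31]), (24, [0, 7, 30, 34]), (8, [0, 8, 16, 24]), (24, [0, 9, 30, 35]),
     (24, [0, 9, 31, 33]), (24, [0, 10, 24, 30]), (24, [0, 10, 32, 33]), (24, [0, 11, 24, 31]),
     (24, [0, 12, 24, 35])]

/-- Replaces the hexad through both stems: fibre sizes 6, 6, 6, 6, 4, 6. -/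
def stemHexadFill10 : List (List ℕ) :=
  orbits [1, 2, 3, 4, 5, 6, 7, 8, 9, 10, 11, 12, 13, 14, 15, 16, 17, 18, 19, 20, 21, 22, 23, 0,
    25, 26, 27, 24, 28, 29, 31, 32, 33, 34, 35, 30]
    [(24, [0, 1, 2, 13]), (24, [0, 1, 3, 15]), (24, [0, 1, 4, 26]), (24, [0, 1, 5, 24]),
     (24, [0, 1, 6, 9]), (24, [0, 1, 7, 16]), (24, [0, 1, 8, 18]), (24, [0, 1, 10, 22]),
     (24, [0, 1, 11, 32]), (24, [0, 1, 14, 30]), (24, [0, 1, 17, 27]), (24, [0, 1, 19, 34]),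
     (24, [0, 1, 20, 25]), (24, [0, 1, 21, 35]), (24, [0, 1, 31, 33]), (24, [0, 2, 4, 7]),
     (24, [0, 2, 6, 21]), (24, [0, 2, 8, 10]), (24, [0, 2, 9, 34]), (24, [0, 2, 11, 25]),
     (24, [0, 2, 15, 19]), (24, [0, 2, 17, 35]), (24, [0, 2, 20, 30]), (24, [0, 2, 24, 31]),
     (24, [0, 2, 26, 32]), (24, [0, 2, 27, 33]), (24, [0, 3, 6, 26]), (24, [0, 3, 7, 33]),
     (24, [0, 3, 8, 17]), (24, [0, 3, 10, 14]), (24, [0, 3, 11, 16]), (24, [0, 3, 13, 24]),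
     (24, [0, 3, 30, 31]), (24, [0, 3, 34, 35]), (24, [0, 4, 8, 35]), (24, [0, 4, 10, 33]),
     (12, [0, 4, 12, 16]), (24, [0, 4, 13, 18]), (24, [0, 4, 15, 24]), (24, [0, 5, 10, 35]),
     (12, [0, 5, 12, 17]), (24, [0, 5, 18, 31]), (24, [0, 5, 26, 34]), (24, [0, 5, 27, 32]),
     (6, [0, 6, 12, 18]), (24, [0, 6, 13, 27]), (24, [0, 6, 16, 32]), (24, [0, 6, 17, 30]),
     (24, [0, 6, 24, 25]), (24, [0, 7, 24, 35]), (24, [0, 7, 27, 34]), (8, [0, 8, 16, 24]),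
     (24, [0, 8, 25, 32]), (24, [0, 8, 27, 31]), (24, [0, 8, 30, 33]), (24, [0, 9, 24, 26]),
     (24, [0, 9, 31, 35]), (24, [0, 9, 32, 33]), (24, [0, 10, 24, 27]), (24, [0, 10, 26, 30]),
     (24, [0, 11, 33, 35]), (12, [0, 12, 24, 34]), (12, [0, 12, 25, 33]), (12, [0, 12, 26, 31]),
     (12, [0, 12, 27, 30]), (12, [0, 12, 32, 35])]

/-- The blocks on the points over the stems, of sizes 2 and 6, alone. -/
def stemFill8 : List (List ℕ) :=
  orbits [1, 6, 2, 3, 4, 5, 7, 8, 9, 10, 0]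
    [(7, [0, 1, 6, 8]), (7, [0, 1, 9, 11])]

/-- The blocks on the points over the stems, of sizes 4 and 6, alone. -/
def stemFill10 : List (List ℕ) :=
  orbits [1, 2, 3, 6, 4, 5, 7, 8, 9, 10, 11, 0]
    [(10, [0, 1, 2, 8]), (10, [0, 1, 3, 6]), (10, [0, 2, 6, 9])]

/-- Replaces a hexad which avoids the stems: six fibres of size 6. -/
def hexadTransversals : List (List ℕ) :=
  orbits [7, 8, 9, 10, 11, 6, 13, 14, 15, 16, 17, 12, 19, 20, 21, 22, 23, 18, 25, 26, 27, 28, 29,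
    24, 1, 2, 3, 4, 5, 0, 31, 32, 33, 34, 35, 30]
    [(30, [0, 6, 12, 19]), (30, [0, 6, 14, 23]), (30, [0, 6, 15, 25]), (30, [0, 6, 16, 31]),
     (30, [0, 6, 17, 32]), (30, [0, 6, 18, 28]), (30, [0, 6, 20, 30]), (30, [0, 6, 21, 35]),
     (30, [0, 6, 22, 26]), (30, [0, 6, 27, 34]), (30, [0, 6, 29, 33]), (30, [0, 7, 12, 23]),
     (30, [0, 7, 14, 33]), (30, [0, 7, 15, 22]), (30, [0, 7, 16, 19]), (30, [0, 7, 17, 26]),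
     (30, [0, 7, 20, 31]), (30, [0, 7, 25, 30]), (30, [0, 7, 27, 35]), (30, [0, 8, 12, 34]),
     (30, [0, 8, 13, 22]), (30, [0, 8, 16, 25]), (30, [0, 8, 18, 32]), (30, [0, 8, 19, 30]),
     (30, [0, 8, 20, 35]), (30, [0, 8, 21, 31]), (30, [0, 8, 27, 33]), (30, [0, 9, 13, 18]),
     (30, [0, 9, 14, 34]), (30, [0, 9, 21, 33]), (30, [0, 9, 26, 35]), (30, [0, 10, 22, 35]),
     (30, [0, 10, 23, 30]), (30, [0, 10, 25, 34]), (30, [0, 11, 19, 34]), (30, [0, 11, 22, 30])]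

/-- Replaces a quad through the hub and the hole of colour `true`: fibre sizes 6, 6, 5, 0. -/
def hexagonHoleFill : List (List ℕ) :=
  orbits [2, 3, 4, 5, 0, 1, 8, 9, 10, 11, 6, 7, 13, 14, 12]
    [(3, [0, 1, 2, 5]), (3, [0, 1, 3, 15]), (3, [0, 1, 4, 13]), (3, [0, 1, 6, 16]),
     (3, [0, 1, 7, 8]), (3, [0, 1, 10, 14]), (3, [0, 1, 11, 12]), (1, [0, 2, 4, 16]),
     (3, [0, 5, 6, 14]), (3, [0, 5, 7, 16]), (3, [0, 5, 9, 13]), (3, [0, 5, 10, 12]),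
     (3, [0, 5, 11, 15]), (3, [0, 6, 7, 13]), (3, [0, 6, 12, 15]), (3, [0, 7, 14, 15]),
     (3, [0, 8, 9, 15]), (3, [0, 8, 12, 16]), (3, [0, 8, 13, 14]), (3, [0, 9, 10, 16]),
     (3, [0, 9, 12, 14]), (3, [0, 10, 11, 13]), (3, [0, 11, 14, 16]), (1, [1, 3, 5, 16]),
     (3, [1, 6, 11, 15]), (3, [1, 6, 12, 14]), (3, [1, 7, 12, 13]), (3, [1, 7, 14, 16]),
     (3, [1, 8, 9, 13]), (3, [1, 8, 14, 15]), (3, [1, 9, 10, 12]), (3, [1, 10, 11, 16]),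
     (3, [1, 10, 13, 15]), (3, [6, 7, 8, 9]), (1, [6, 8, 10, 16]), (3, [6, 8, 11, 14]),
     (3, [6, 9, 11, 12])]

/-- Replaces a quad through the hub and the hole of colour `false`: fibre sizes 6, 6, 5, 0. -/
def prismHoleFill : List (List ℕ) :=
  orbits [2, 3, 4, 5, 0, 1, 8, 9, 10, 11, 6, 7, 13, 14, 12]
    [(3, [0, 2, 7, 10]), (3, [0, 2, 8, 15]), (3, [0, 2, 9, 13]), (3, [0, 2, 11, 12]),
     (3, [0, 3, 6, 10]), (3, [0, 3, 8, 16]), (3, [0, 3, 9, 12]), (3, [0, 3, 11, 13]),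
     (3, [0, 6, 8, 12]), (3, [0, 6, 13, 16]), (3, [0, 7, 9, 16]), (3, [0, 7, 11, 14]),
     (3, [0, 7, 13, 15]), (3, [0, 8, 10, 14]), (3, [0, 9, 11, 15]), (3, [0, 10, 12, 13]),
     (3, [0, 10, 15, 16]), (3, [1, 3, 6, 12]), (3, [1, 3, 7, 11]), (3, [1, 3, 8, 14]),
     (3, [1, 3, 10, 13]), (3, [1, 6, 9, 14]), (3, [1, 6, 10, 15]), (3, [1, 7, 9, 13]),
     (3, [1, 7, 10, 16]), (3, [1, 7, 12, 15]), (3, [1, 8, 11, 15]), (3, [1, 8, 13, 16]),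
     (3, [1, 9, 15, 16]), (3, [1, 11, 12, 16]), (3, [1, 11, 13, 14])]

/-- Replaces a core quad, through the hub and both holes: fibre sizes 6, 5, 0, 0. -/
def hubQuadFill : List (List ℕ) :=
  orbits [1, 2, 3, 4, 5, 0, 7, 8, 6, 10, 9]
    [(6, [0, 1, 2, 8]), (3, [0, 1, 3, 4]), (6, [0, 1, 6, 9]), (2, [0, 2, 4, 9]),
     (6, [0, 2, 6, 10]), (3, [0, 3, 6, 8]), (3, [0, 3, 9, 10]), (6, [0, 7, 8, 9])]

/-- Replaces a core hexad, through the hub and both holes: fibre sizes 6, 6, 6, 5, 0, 0. -/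
def hubHexadFill : List (List ℕ) :=
  orbits [1, 2, 0, 4, 5, 6, 7, 8, 3, 10, 11, 12, 13, 14, 9, 16, 17, 18, 19, 20, 15, 22, 21]
    [(6, [0, 1, 3, 16]), (6, [0, 1, 4, 12]), (3, [0, 1, 5, 8]), (6, [0, 1, 10, 15]),
     (3, [0, 1, 11, 14]), (6, [0, 1, 17, 21]), (6, [0, 3, 4, 21]), (6, [0, 3, 5, 20]),
     (6, [0, 3, 7, 10]), (6, [0, 3, 8, 18]), (6, [0, 3, 13, 17]), (6, [0, 3, 14, 19]),
     (6, [0, 3, 15, 22]), (6, [0, 4, 5, 17]), (6, [0, 4, 8, 16]), (6, [0, 4, 9, 11]),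
     (6, [0, 4, 10, 22]), (6, [0, 4, 15, 19]), (6, [0, 4, 18, 20]), (6, [0, 5, 9, 14]),
     (6, [0, 5, 10, 16]), (6, [0, 5, 11, 22]), (6, [0, 5, 12, 21]), (6, [0, 9, 10, 21]),
     (6, [0, 9, 13, 15]), (6, [0, 9, 16, 17]), (6, [0, 9, 18, 19]), (6, [0, 10, 11, 19]),
     (6, [0, 10, 14, 17]), (6, [0, 11, 15, 21]), (6, [0, 11, 17, 18]), (6, [0, 16, 20, 21]),
     (6, [3, 4, 5, 9]), (6, [3, 4, 6, 17]), (6, [3, 4, 7, 22]), (6, [3, 4, 10, 20]),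
     (6, [3, 4, 11, 12]), (6, [3, 4, 13, 15]), (6, [3, 5, 10, 18]), (6, [3, 5, 11, 14]),
     (6, [3, 5, 13, 19]), (6, [3, 5, 15, 21]), (6, [3, 6, 9, 16]), (3, [3, 6, 10, 13]),
     (6, [3, 6, 11, 15]), (6, [3, 9, 10, 15]), (6, [3, 9, 11, 20]), (6, [3, 9, 13, 14]),
     (6, [3, 9, 17, 18]), (6, [3, 10, 12, 16]), (6, [3, 10, 17, 22]), (6, [3, 11, 13, 18]),
     (6, [3, 11, 16, 19]), (6, [3, 11, 21, 22]), (6, [3, 12, 14, 22]), (6, [3, 12, 15, 17]),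
     (6, [3, 12, 18, 21]), (6, [3, 13, 16, 21]), (6, [3, 13, 20, 22]), (6, [3, 14, 17, 21]),
     (6, [3, 15, 16, 18]), (6, [3, 15, 19, 20]), (6, [3, 16, 17, 20]), (6, [3, 18, 19, 22]),
     (3, [9, 10, 12, 13]), (6, [9, 10, 16, 20]), (6, [9, 10, 17, 19]), (2, [9, 11, 13, 22]),
     (3, [9, 12, 15, 18]), (3, [9, 12, 16, 19]), (6, [9, 12, 17, 22]), (6, [9, 15, 17, 21]),
     (6, [9, 19, 20, 22]), (3, [15, 18, 21, 22])]

section TableChecks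

set_option maxRecDepth 100000

theorem isTable_zeroSumQuads6 : IsTable [6, 6, 6, 6] IsTransversalCode 216 0 (zeroSumQuads 6) := by
  decide +kernel

theorem isTable_zeroSumQuads5 : IsTable [6, 6, 6, 5] IsTransversalCode 180 0 (zeroSumQuads 5) := by
  decide +kernel

theorem isTable_hexadTransversals :
    IsTable [6, 6, 6, 6, 6, 6] IsTransversalCode 1080 0 hexadTransversals := by
  decide +kernel

theorem isTable_prismQuads0 : IsTable [6, 6, 6, 0] (IsLinkCode 3 false) 135 0 prismQuads0 := by
  decide +kernel

theorem isTable_prismQuads2 : IsTable [6, 6, 6, 2] (IsLinkCode 3 false) 189 0 prismQuads2 := by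
  decide +kernel

theorem isTable_prismQuads4 : IsTable [6, 6, 6, 4] (IsLinkCode 3 false) 243 0 prismQuads4 := by
  decide +kernel

theorem isTable_prismQuads5 : IsTable [6, 6, 6, 5] (IsLinkCode 3 false) 261 0 prismQuads5 := by
  decide +kernel

theorem isTable_prismQuads6 : IsTable [6, 6, 6, 6] (IsLinkCode 3 false) 297 0 prismQuads6 := by
  decide +kernel

theorem isTable_hexagonQuads0 : IsTable [6, 6, 6, 0] (IsLinkCode 3 true) 108 0 hexagonQuads0 := by
  decide +kernel

theorem isTable_hexagonQuads6 : IsTable [6, 6, 6, 6] (IsLinkCode 3 true) 270 0 hexagonQuads6 := by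
  decide +kernel

theorem isTable_stemQuadFill0 : IsTable [6, 6, 0, 0] (IsStemFillCode 2) 45 2 stemQuadFill0 := by
  decide +kernel

theorem isTable_stemQuadFill2 : IsTable [6, 6, 2, 0] (IsStemFillCode 2) 91 0 stemQuadFill2 := by
  decide +kernel

theorem isTable_stemQuadFill4 : IsTable [6, 6, 4, 0] (IsStemFillCode 2) 139 0 stemQuadFill4 := by
  decide +kernel

theorem isTable_stemQuadFill5 : IsTable [6, 6, 5, 0] (IsStemFillCode 2) 156 0 stemQuadFill5 := by
  decide +kernel

theorem isTable_stemQuadFill6 : IsTable [6, 6, 6, 0] (IsStemFillCode 2) 189 2 stemQuadFill6 := by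
  decide +kernel

theorem isTable_stemQuadFill8 : IsTable [6, 6, 2, 6] (IsStemFillCode 2) 271 0 stemQuadFill8 := by
  decide +kernel

theorem isTable_stemQuadFill10 : IsTable [6, 6, 4, 6] (IsStemFillCode 2) 355 0 stemQuadFill10 := by
  decide +kernel

theorem isTable_stemHexadFill0 :
    IsTable [6, 6, 6, 6, 0, 0] (IsStemFillCode 4) 486 4 stemHexadFill0 := by
  decide +kernel

theorem isTable_stemHexadFill2 :
    IsTable [6, 6, 6, 6, 2, 0] (IsStemFillCode 4) 650 0 stemHexadFill2 := by
  decide +kernel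

theorem isTable_stemHexadFill4 :
    IsTable [6, 6, 6, 6, 4, 0] (IsStemFillCode 4) 818 0 stemHexadFill4 := by
  decide +kernel

theorem isTable_stemHexadFill5 :
    IsTable [6, 6, 6, 6, 5, 0] (IsStemFillCode 4) 876 0 stemHexadFill5 := by
  decide +kernel

theorem isTable_stemHexadFill6 :
    IsTable [6, 6, 6, 6, 6, 0] (IsStemFillCode 4) 990 4 stemHexadFill6 := by
  decide +kernel

theorem isTable_stemHexadFill8 :
    IsTable [6, 6, 6, 6, 2, 6] (IsStemFillCode 4) 1226 0 stemHexadFill8 := by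
  decide +kernel

theorem isTable_stemHexadFill10 :
    IsTable [6, 6, 6, 6, 4, 6] (IsStemFillCode 4) 1466 0 stemHexadFill10 := by
  decide +kernel

theorem isTable_stemFill8 : IsTable [2, 6] (fun _ => True) 14 0 stemFill8 := by
  decide +kernel

theorem isTable_stemFill10 : IsTable [4, 6] (fun _ => True) 30 0 stemFill10 := by
  decide +kernel

theorem isTable_hexagonHoleFill :
    IsTable [6, 6, 5, 0] (IsHoleFillCode true) 105 0 hexagonHoleFill := by
  decide +kernel

theorem isTable_prismHoleFill :
    IsTable [6, 6, 5, 0] (IsHoleFillCode false) 93 0 prismHoleFill := by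
  decide +kernel

theorem isTable_hubQuadFill : IsTable [6, 5, 0, 0] (fun _ => True) 35 0 hubQuadFill := by
  decide +kernel

theorem isTable_hubHexadFill : IsTable [6, 6, 6, 5, 0, 0] (fun _ => True) 419 0 hubHexadFill := by
  decide +kernel

theorem isTable_filter_stemQuadFill0 :
    IsTable [6, 6, 0, 0] FibersLeTwoCode 45 0 (stemQuadFill0.filter (·.length = 4)) := by
  decide +kernel

end TableChecks

section StemFillings

variable {α : Type*} [DecidableEq α] {wt : α → ℕ} {a : α} {c : Finset α}

/-- `β` has at most two points in each fibre, none over `a`, and its pairs of points in a common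
fibre have colour `k`. -/
def IsLink (a : α) (k : Bool) (β : Finset (α × ℕ)) : Prop :=
  (∀ x ∈ β, x.1 ≠ a) ∧ FiberPairsColored k β ∧ FibersLeTwo β

lemma exists_append_enumeration {S : List α} (hS : S.Nodup) (hSc : S.toFinset ⊆ c)
    (hwt : ∀ p ∈ c, p ∉ S → wt p = 6) :
    ∃ L, L.length = #c - S.length ∧ (L ++ S).Nodup ∧ (L ++ S).toFinset = c ∧
      (L ++ S).map wt = List.replicate (#c - S.length) 6 ++ S.map wt := by
  have hlen : (c \ S.toFinset).toList.length = #c - S.length := by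
    rw [length_toList, card_sdiff_of_subset hSc, List.toFinset_card_of_nodup hS]
  refine ⟨(c \ S.toFinset).toList, hlen, ?_, ?_, ?_⟩
  · refine List.nodup_append'.2 ⟨nodup_toList _, hS, fun p hp hpS => ?_⟩
    simp_all
  · rw [List.toFinset_append, toList_toFinset, sdiff_union_of_subset hSc]
  · rw [List.map_append, List.append_left_inj, List.eq_replicate_iff, List.length_map]
    refine ⟨hlen, fun b hb => ?_⟩
    obtain ⟨p, hp, rfl⟩ := List.mem_map.1 hb
    have hp : p ∈ c ∧ p ∉ S := by simpa using hp
    exact hwt p hp.1 hp.2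

variable [Inhabited α] {n₄ n₆ s : ℕ} {D : List (List ℕ)}

lemma IsTable.exists_isFilling_append {w : List ℕ} {t : List ℕ → Prop} {S : List α} {k : ℕ}
    {P : Finset (α × ℕ) → Prop} (h : IsTable w t n₄ n₆ D) (hS : S.Nodup) (hSc : S.toFinset ⊆ c)
    (hk : k + S.length = #c) (hwt : ∀ p ∈ c, p ∉ S → wt p = 6)
    (hw : List.replicate k 6 ++ S.map wt = w)
    (hP : ∀ L : List α, L.Nodup → ∀ l, t l → (∀ m ∈ l, m / 6 < L.length) →
      P (l.toFinset.image (place L))) :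
    ∃ F, IsFilling wt P n₄ n₆ c F := by
  obtain ⟨L, -, hL, hLc, hLw⟩ := exists_append_enumeration hS hSc hwt
  rw [← hk, Nat.add_sub_cancel, hw] at hLw
  exact h.exists_isFilling hL hLc hLw fun l _ => hP _ hL l

lemma IsTable.exists_isFilling_transversal
    (h : IsTable (List.replicate #c 6) IsTransversalCode n₄ n₆ D) (hwt : ∀ p ∈ c, wt p = 6) :
    ∃ F, IsFilling wt (fun β => Set.InjOn Prod.fst (β : Set (α × ℕ))) n₄ n₆ c F :=
  h.exists_isFilling_append (k := #c) List.nodup_nil (by simp) rfl (fun p hp _ => hwt p hp)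
    (by simp) fun _ hL _ ht hlt => injOn_fst_of_isTransversalCode hL hlt ht

lemma exists_isFilling_transversal (hc : #c = 4 ∨ #c = 6) (hwt : ∀ p ∈ c, wt p = 6) :
    ∃ F, IsFilling wt (fun β => Set.InjOn Prod.fst (β : Set (α × ℕ))) (54 * (#c).choose 3) 0 c F :=
  hc.elim
    (fun h4 => IsTable.exists_isFilling_transversal (by rw [h4]; exact isTable_zeroSumQuads6) hwt)
    (fun h6 => IsTable.exists_isFilling_transversal (by rw [h6]; exact isTable_hexadTransversals)
      hwt)

lemma IsTable.exists_isFilling_link {k : Bool}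
    (h : IsTable [6, 6, 6, s] (IsLinkCode 3 k) n₄ n₆ D) (hc : #c = 4) (ha : a ∈ c)
    (hwt : ∀ p ∈ c, p ≠ a → wt p = 6) (hs : wt a = s) :
    ∃ F, IsFilling wt (fun β => Set.InjOn Prod.fst (β : Set (α × ℕ)) ∨ IsLink a k β) n₄ n₆ c F := by
  obtain ⟨L, hlen, hL, hLc, hw⟩ := exists_append_enumeration (S := [a]) (c := c) (wt := wt)
    (List.nodup_singleton a) (by simpa) (by simpa using hwt)
  rw [hc, List.length_singleton] at hlen hw
  refine h.exists_isFilling hL hLc (by simpa [hs] using hw) fun l _ ht hlt => ?_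
  refine ht.imp (injOn_fst_of_isTransversalCode hL hlt) fun ⟨havoid, hcol, hfib⟩ =>
    ⟨?_, fiberPairsColored_of_code hL hlt hcol, fibersLeTwo_of_code hL hlt hfib⟩
  rw [forall_mem_image]
  intro m hm hma
  have hm := List.mem_toFinset.1 hm
  have hle := length_le_of_fst_place_mem hL (List.mem_singleton.2 hma)
  have hlt := hlt m hm
  rw [List.length_append, List.length_singleton] at hlt
  exact havoid m hm (by omega)

end StemFillings

/-! ### Two stems -/

section TwoStems

variable {α : Type*} [DecidableEq α] {a b : α} {c c' : Finset α} {β β' : Finset (α × ℕ)}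

/-- The blocks over `c` of the two-stem construction with stems `a` and `b`. A block which contains
exactly one stem is filled in with the colour belonging to this stem. -/
inductive IsTwoStemBlock (a b : α) (c : Finset α) (β : Finset (α × ℕ)) : Prop
  | transversal (h4 : #β = 4) (hβ : Set.InjOn Prod.fst (β : Set (α × ℕ)))
  | left (h4 : #β = 4) (ha : a ∈ c) (hb : b ∉ c) (hβ : IsLink a false β)
  | right (h4 : #β = 4) (ha : a ∉ c) (hb : b ∈ c) (hβ : IsLink b true β)
  | both (ha : a ∈ c) (hb : b ∈ c) (hβ : c = {a, b} ∨
      #{x ∈ β | x.1 = a ∨ x.1 = b} ≤ 2 ∧ (#β = 6 → ∀ x ∈ β, ¬ (x.1 = a ∨ x.1 = b)))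

lemma inter_eq_pair (hab : a ≠ b) (ha : a ∈ c) (hb : b ∈ c) (ha' : a ∈ c') (hb' : b ∈ c')
    (hc : #(c ∩ c') ≤ 2) : c ∩ c' = {a, b} := by
  refine (eq_of_subset_of_card_le ?_ (hc.trans (card_pair hab).ge)).symm
  simp [insert_subset_iff, *]

namespace IsTwoStemBlock

lemma card_inter_le_two_of_not_both (hβ : ∀ x ∈ β, x.1 ∈ c) (hβ' : ∀ x ∈ β', x.1 ∈ c')
    (hc : #(c ∩ c') ≤ 2) (hnot : ¬ (a ∈ c ∧ b ∈ c)) (h : IsTwoStemBlock a b c β)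
    (h' : IsTwoStemBlock a b c' β') : #(β ∩ β') ≤ 2 := by
  rcases h with ⟨-, h⟩ | ⟨-, ha, -, havoid, hcol, hfib⟩ | ⟨-, -, hb, havoid, hcol, hfib⟩ |
    ⟨ha, hb, -⟩
  · exact card_inter_le_two_of_injOn hβ hβ' hc h
  · have avoids := fun ha' => card_inter_le_two_of_avoids hβ hβ' hc ha ha' havoid hfib
    rcases h' with ⟨-, h'⟩ | ⟨-, ha', -, -⟩ | ⟨-, -, -, -, hcol', -⟩ | ⟨ha', -, -⟩
    · exact inter_comm β β' ▸ card_inter_le_two_of_injOn hβ' hβ (inter_comm c c' ▸ hc) h'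
    · exact avoids ha'
    · exact card_inter_le_two_of_colors_ne hβ hβ' hc (by decide) hcol hcol'
    · exact avoids ha'
  · have avoids := fun hb' => card_inter_le_two_of_avoids hβ hβ' hc hb hb' havoid hfib
    rcases h' with ⟨-, h'⟩ | ⟨-, -, -, -, hcol', -⟩ | ⟨-, -, hb', -⟩ | ⟨-, hb', -⟩
    · exact inter_comm β β' ▸ card_inter_le_two_of_injOn hβ' hβ (inter_comm c c' ▸ hc) h'
    · exact card_inter_le_two_of_colors_ne hβ hβ' hc (by decide) hcol hcol'
    · exact avoids hb'
    · exact avoids hb'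
  · exact (hnot ⟨ha, hb⟩).elim

lemma both_cond (ha : a ∈ c) (hb : b ∈ c) (h : IsTwoStemBlock a b c β) :
    Set.InjOn Prod.fst (β : Set (α × ℕ)) ∨ c = {a, b} ∨
      #{x ∈ β | x.1 = a ∨ x.1 = b} ≤ 2 := by
  rcases h with ⟨-, h⟩ | ⟨-, -, hb', -⟩ | ⟨-, ha', -, -⟩ | ⟨-, -, h⟩
  exacts [.inl h, (hb' hb).elim, (ha' ha).elim, .inr (h.imp_right And.left)]

lemma card_inter_le_two (hab : a ≠ b) (hne : c ≠ c') (hβ : ∀ x ∈ β, x.1 ∈ c)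
    (hβ' : ∀ x ∈ β', x.1 ∈ c') (hc : #(c ∩ c') ≤ 2) (h : IsTwoStemBlock a b c β)
    (h' : IsTwoStemBlock a b c' β') : #(β ∩ β') ≤ 2 := by
  by_cases hnot : ¬ (a ∈ c ∧ b ∈ c)
  · exact card_inter_le_two_of_not_both hβ hβ' hc hnot h h'
  by_cases hnot' : ¬ (a ∈ c' ∧ b ∈ c')
  · exact inter_comm β β' ▸
      card_inter_le_two_of_not_both hβ' hβ (inter_comm c c' ▸ hc) hnot' h' h
  obtain ⟨⟨ha, hb⟩, ha', hb'⟩ := And.intro (not_not.1 hnot) (not_not.1 hnot')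
  have hstem : ∀ x ∈ β ∩ β', x.1 = a ∨ x.1 = b := fun x hx => by
    have := image_fst_inter_subset hβ hβ' (mem_image_of_mem Prod.fst hx)
    simpa [inter_eq_pair hab ha hb ha' hb' hc] using this
  rcases h.both_cond ha hb with h | h | h
  · exact card_inter_le_two_of_injOn hβ hβ' hc h
  · rcases h'.both_cond ha' hb' with h' | h' | h'
    · exact inter_comm β β' ▸ card_inter_le_two_of_injOn hβ' hβ (inter_comm c c' ▸ hc) h'
    · exact (hne (h.trans h'.symm)).elim
    · exact (card_le_card fun x hx =>
        mem_filter.2 ⟨(mem_inter.1 hx).2, hstem x hx⟩).trans h'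
  · exact (card_le_card fun x hx => mem_filter.2 ⟨(mem_inter.1 hx).1, hstem x hx⟩).trans h

lemma disjoint_of_card_six (hab : a ≠ b) (hne : c ≠ c') (hβ : ∀ x ∈ β, x.1 ∈ c)
    (hβ' : ∀ x ∈ β', x.1 ∈ c') (hc : #(c ∩ c') ≤ 2) (h : IsTwoStemBlock a b c β)
    (h' : IsTwoStemBlock a b c' β') (h6 : #β = 6) (h6' : #β' = 6) : Disjoint β β' := by
  rcases h with ⟨h4, -⟩ | ⟨h4, -⟩ | ⟨h4, -⟩ | ⟨ha, hb, h⟩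
  iterate 3 · omega
  rcases h' with ⟨h4, -⟩ | ⟨h4, -⟩ | ⟨h4, -⟩ | ⟨ha', hb', h'⟩
  iterate 3 · omega
  refine disjoint_left.2 fun x hx hx' => ?_
  have hstem : x.1 = a ∨ x.1 = b := by
    have := image_fst_inter_subset hβ hβ' (mem_image_of_mem Prod.fst (mem_inter.2 ⟨hx, hx'⟩))
    simpa [inter_eq_pair hab ha hb ha' hb' hc] using this
  rcases h with h | ⟨-, h⟩
  · rcases h' with h' | ⟨-, h'⟩
    · exact hne (h.trans h'.symm)
    · exact h' h6' x hx' hstem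
  · exact h h6 x hx hstem

end IsTwoStemBlock

/-- The fibre sizes of the two-stem construction. -/
def twoStemWeight (a b : α) (s₁ s₂ : ℕ) (p : α) : ℕ :=
  if p = a then s₁ else if p = b then s₂ else 6

/-- The tables needed to fill in the two-stem construction with stems of sizes `s₁` and `s₂`. -/
structure TwoStemTables (s₁ s₂ p₁ p₂ N m o₄ o₆ : ℕ) : Prop where
  left : ∃ D, IsTable [6, 6, 6, s₁] (IsLinkCode 3 false) (54 + 3 * p₁) 0 D
  right : ∃ D, IsTable [6, 6, 6, s₂] (IsLinkCode 3 true) (54 + 3 * p₂) 0 D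
  quad : ∃ D, IsTable [6, 6, s₁, s₂] (IsStemFillCode 2) N (2 * m) D
  hexad : ∃ D, IsTable [6, 6, 6, 6, s₁, s₂] (IsStemFillCode 4)
    (2 * N + 4 * p₁ + 4 * p₂ + 216) (4 * m) D
  stem : ∃ D, IsTable [s₁, s₂] (fun _ => True) o₄ o₆ D

variable {s₁ s₂ p₁ p₂ N m o₄ o₆ : ℕ}

section Fillings

variable [Inhabited α] {n₄ n₆ k : ℕ} {D : List (List ℕ)}

lemma IsTable.exists_isFilling_stems
    (h : IsTable (List.replicate k 6 ++ [s₁, s₂]) (IsStemFillCode k) n₄ n₆ D) (hc : #c = k + 2)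
    (hab : a ≠ b) (ha : a ∈ c) (hb : b ∈ c) :
    ∃ F, IsFilling (twoStemWeight a b s₁ s₂) (IsTwoStemBlock a b c) n₄ n₆ c F := by
  obtain ⟨L, hlen, hL, hLc, hw⟩ := exists_append_enumeration (S := [a, b]) (c := c)
    (wt := twoStemWeight a b s₁ s₂) (by simpa using hab) (by simp [insert_subset_iff, ha, hb])
    (by simp +contextual [twoStemWeight])
  rw [hc, List.length_cons, List.length_singleton, Nat.add_sub_cancel] at hlen hw
  have hstem : ∀ m, (place (L ++ [a, b]) m).1 = a ∨ (place (L ++ [a, b]) m).1 = b →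
      k ≤ m / 6 := fun m hm => hlen ▸ length_le_of_fst_place_mem hL (by simpa using hm)
  refine h.exists_isFilling hL hLc (by simpa [twoStemWeight, hab.symm] using hw)
    fun l hl ht _ => .both ha hb (.inr ⟨?_, fun h6 => ?_⟩)
  · refine (card_filter_image_place_le (L ++ [a, b]) fun m _ hm => ?_).trans ht.1
    have := hstem m hm
    exact decide_eq_true (by omega)
  · rw [forall_mem_image]
    intro m hm hma
    have h6' : 6 ≤ l.length := h6 ▸ card_image_le.trans (List.toFinset_card_le l)
    have hl6 : l.length = 6 := (h.length_eq l hl).resolve_left (by omega)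
    exact (ht.2 hl6 m (List.mem_toFinset.1 hm)).not_ge (hstem m hma)

lemma IsTable.exists_isFilling_stem (h : IsTable [s₁, s₂] (fun _ => True) n₄ n₆ D) (hab : a ≠ b) :
    ∃ F, IsFilling (twoStemWeight a b s₁ s₂) (IsTwoStemBlock a b {a, b}) n₄ n₆ {a, b} F :=
  h.exists_isFilling (L := [a, b]) (by simpa) (by simp) (by simp [twoStemWeight, hab.symm])
    fun _ _ _ _ => .both (by simp) (by simp) (.inl rfl)

lemma IsTable.exists_isFilling_left (h : IsTable [6, 6, 6, s₁] (IsLinkCode 3 false) n₄ 0 D)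
    (hc : #c = 4) (ha : a ∈ c) (hb : b ∉ c) :
    ∃ F, IsFilling (twoStemWeight a b s₁ s₂) (IsTwoStemBlock a b c) n₄ 0 c F := by
  obtain ⟨F, hF⟩ := h.exists_isFilling_link (wt := twoStemWeight a b s₁ s₂) hc ha
    (fun p hp hpa => by simp [twoStemWeight, hpa, ne_of_mem_of_not_mem hp hb])
    (by simp [twoStemWeight])
  exact ⟨F, hF.imp fun β hβ h =>
    h.elim (.transversal (hF.card_eq_four hβ)) (.left (hF.card_eq_four hβ) ha hb)⟩

lemma IsTable.exists_isFilling_right (h : IsTable [6, 6, 6, s₂] (IsLinkCode 3 true) n₄ 0 D)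
    (hc : #c = 4) (ha : a ∉ c) (hb : b ∈ c) :
    ∃ F, IsFilling (twoStemWeight a b s₁ s₂) (IsTwoStemBlock a b c) n₄ 0 c F := by
  obtain ⟨F, hF⟩ := h.exists_isFilling_link (wt := twoStemWeight a b s₁ s₂) hc hb
    (fun p hp hpb => by simp [twoStemWeight, hpb, ne_of_mem_of_not_mem hp ha])
    (by simp [twoStemWeight, ne_of_mem_of_not_mem hb ha])
  exact ⟨F, hF.imp fun β hβ h =>
    h.elim (.transversal (hF.card_eq_four hβ)) (.right (hF.card_eq_four hβ) ha hb)⟩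

lemma TwoStemTables.exists_isFilling (h : TwoStemTables s₁ s₂ p₁ p₂ N m o₄ o₆) (hab : a ≠ b)
    (hc : #c = 4 ∨ #c = 6) (h6 : #c = 6 → (a ∈ c ↔ b ∈ c)) :
    ∃ n₄ n₆ : ℕ,
      (∃ F, IsFilling (twoStemWeight a b s₁ s₂) (IsTwoStemBlock a b c) n₄ n₆ c F) ∧
      (2 * n₄ : ℤ) = 108 * triplesThrough ∅ c + (2 * p₁ - 108) * triplesThrough {a} c +
        (2 * p₂ - 108) * triplesThrough {b} c +
        (N - 3 * p₁ - 3 * p₂ + 108) * triplesThrough {a, b} c ∧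
      n₆ = m * triplesThrough {a, b} c := by
  simp only [triplesThrough_eq_ite c (S := ∅) (by simp),
    triplesThrough_eq_ite c (S := {_}) (by simp),
    triplesThrough_eq_ite c (S := {_, _}) (card_le_two.trans (by simp)), card_pair hab,
    card_singleton, card_empty, singleton_subset_iff, insert_subset_iff, empty_subset, if_true]
  by_cases ha : a ∈ c <;> by_cases hb : b ∈ c
  · rcases hc with hc | hc
    · obtain ⟨D, hD⟩ := h.quad
      refine ⟨_, _, hD.exists_isFilling_stems (k := 2) hc hab ha hb, ?_, ?_⟩ <;>
        simp only [ha, hb, hc, and_self, if_true, Nat.choose] <;> push_cast <;> ring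
    · obtain ⟨D, hD⟩ := h.hexad
      refine ⟨_, _, hD.exists_isFilling_stems (k := 4) hc hab ha hb, ?_, ?_⟩ <;>
        simp only [ha, hb, hc, and_self, if_true, Nat.choose] <;> push_cast <;> ring
  · have hc4 : #c = 4 := hc.resolve_right fun hc6 => hb ((h6 hc6).1 ha)
    obtain ⟨D, hD⟩ := h.left
    refine ⟨_, _, hD.exists_isFilling_left hc4 ha hb, ?_, by simp [hb]⟩
    simp [ha, hb, hc4]
    ring
  · have hc4 : #c = 4 := hc.resolve_right fun hc6 => ha ((h6 hc6).2 hb)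
    obtain ⟨D, hD⟩ := h.right
    refine ⟨_, _, hD.exists_isFilling_right hc4 ha hb, ?_, by simp [ha]⟩
    simp [ha, hb, hc4]
    ring
  · obtain ⟨F, hF⟩ := exists_isFilling_transversal hc (wt := twoStemWeight a b s₁ s₂)
      fun p hp => by simp [twoStemWeight, ne_of_mem_of_not_mem hp ha, ne_of_mem_of_not_mem hp hb]
    refine ⟨_, _, ⟨F, hF.imp fun β hβ h => .transversal (hF.card_eq_four hβ) h⟩, ?_, ?_⟩
    · simp [ha, hb]
      ring
    · simp [ha]

end Fillings

variable [Fintype α] {n : ℕ} {B : Finset (Finset α)}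

lemma sum_twoStemWeight (hab : a ≠ b) :
    ∑ p, twoStemWeight a b s₁ s₂ p = s₁ + s₂ + 6 * (Fintype.card α - 2) := by
  have hstems : ∑ p ∈ {a, b}, twoStemWeight a b s₁ s₂ p = s₁ + s₂ := by
    rw [sum_pair hab]
    simp [twoStemWeight, hab.symm]
  have hrest : ∀ p ∈ univ \ {a, b}, twoStemWeight a b s₁ s₂ p = 6 := by
    simp +contextual [twoStemWeight]
  rw [← sum_sdiff (subset_univ {a, b}), hstems, sum_congr rfl hrest, sum_const, smul_eq_mul,
    card_univ_sdiff, card_pair hab, add_comm, mul_comm]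

lemma IsMixedSteinerSystem.exists_stems (hB : IsMixedSteinerSystem B) (hv : 1 < Fintype.card α) :
    ∃ a b, a ≠ b ∧ ∀ c ∈ B, #c = 6 → (a ∈ c ↔ b ∈ c) := by
  by_cases h6 : ∃ Z ∈ B, #Z = 6
  · obtain ⟨Z, hZ, hZ6⟩ := h6
    obtain ⟨a, ha, b, hb, hab⟩ := one_lt_card.1 (by omega : 1 < #Z)
    refine ⟨a, b, hab, fun c hc hc6 => ?_⟩
    rcases eq_or_ne c Z with rfl | hne
    · exact iff_of_true ha hb
    · have : Disjoint c Z :=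
        hB.hexadsDisjoint (mem_slice.2 ⟨hc, hc6⟩) (mem_slice.2 ⟨hZ, hZ6⟩) hne
      exact iff_of_false (disjoint_right.1 this ha) (disjoint_right.1 this hb)
  · obtain ⟨a, b, hab⟩ := Fintype.one_lt_card_iff.1 hv
    exact ⟨a, b, hab, fun c hc hc6 => (h6 ⟨c, hc, hc6⟩).elim⟩

lemma TwoStemTables.exists_packing [NeZero n] (h : TwoStemTables s₁ s₂ p₁ p₂ N m o₄ o₆)
    (hB : IsMixedSteinerSystem B) (hv : 1 < Fintype.card α)
    (hn : s₁ + s₂ + 6 * (Fintype.card α - 2) = n) :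
    ∃ B' : Finset (Finset (Fin n)), IsMixedPacking B' ∧ HexadsDisjoint B' ∧
      (2 * #(B'.slice 4) : ℤ) = 108 * (Fintype.card α).choose 3 +
        (2 * p₁ + 2 * p₂ - 216) * (Fintype.card α - 1).choose 2 +
        (N - 3 * p₁ - 3 * p₂ + 108) * (Fintype.card α - 2 : ℕ) + 2 * o₄ ∧
      #(B'.slice 6) = m * (Fintype.card α - 2) + o₆ := by
  obtain ⟨a, b, hab, hstems⟩ := hB.exists_stems hv
  have : Inhabited α := ⟨a⟩
  obtain ⟨D, hD⟩ := h.stem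
  choose! n₄ n₆ hF h₄ h₆ using fun c hc =>
    h.exists_isFilling hab (hB.card_eq c hc) (hstems c hc)
  have hnot : {a, b} ∉ B := fun hmem => by
    have := hB.card_eq _ hmem
    rw [card_pair hab] at this
    omega
  have hne : ∀ c ∈ B, c ≠ {a, b} := fun c hc => ne_of_mem_of_not_mem hc hnot
  have hpack : IsTriplePacking (insert {a, b} B) :=
    hB.isTriplePacking.insert_of_card_le_two card_le_two
  obtain ⟨B', hB', hhex, h4, h6⟩ := exists_inflation (J := insert {a, b} B)
    (P := IsTwoStemBlock a b) (n₄ := fun c => if c = {a, b} then o₄ else n₄ c)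
    (n₆ := fun c => if c = {a, b} then o₆ else n₆ c) ((sum_twoStemWeight hab).trans hn)
    (forall_mem_insert _ _ _ |>.2 ⟨by simpa using hD.exists_isFilling_stem hab,
      fun c hc => by simpa [hne c hc] using hF c hc⟩)
    (fun c hc c' hc' hcc β β' hβ hβ' hP hP' =>
      ⟨hP.card_inter_le_two hab hcc hβ hβ' (hpack hc hc' hcc) hP',
        hP.disjoint_of_card_six hab hcc hβ hβ' (hpack hc hc' hcc) hP'⟩)
  rw [sum_insert hnot, if_pos rfl, sum_congr rfl fun c hc => if_neg (hne c hc)] at h4 h6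
  have hsum : ∀ S : Finset α, #S ≤ 3 →
      ∑ c ∈ B, (triplesThrough S c : ℤ) = (Fintype.card α - #S).choose (3 - #S) := fun S hS => by
    exact_mod_cast hB.sum_triplesThrough hS
  refine ⟨B', hB', hhex, ?_, ?_⟩
  · rw [h4, Nat.cast_add, Nat.cast_sum, mul_add, mul_sum, sum_congr rfl h₄]
    simp only [sum_add_distrib, ← mul_sum]
    rw [hsum ∅ (by simp), hsum {a} (by simp), hsum {b} (by simp),
      hsum {a, b} (card_le_two.trans (by simp)), card_pair hab]
    simp
    ring
  · rw [h6, sum_congr rfl h₆, ← mul_sum, hB.sum_triplesThrough (card_le_two.trans (by simp)),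
      card_pair hab]
    simp [add_comm]

end TwoStems

section EvenOrders

lemma twoStemTables_zero_zero : TwoStemTables 0 0 27 18 45 1 0 0 where
  left := ⟨_, isTable_prismQuads0⟩
  right := ⟨_, isTable_hexagonQuads0⟩
  quad := ⟨_, isTable_stemQuadFill0⟩
  hexad := ⟨_, isTable_stemHexadFill0⟩
  stem := ⟨[], by decide⟩

lemma twoStemTables_two_zero : TwoStemTables 2 0 45 18 91 0 0 0 where
  left := ⟨_, isTable_prismQuads2⟩
  right := ⟨_, isTable_hexagonQuads0⟩
  quad := ⟨_, isTable_stemQuadFill2⟩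
  hexad := ⟨_, isTable_stemHexadFill2⟩
  stem := ⟨[], by decide⟩

lemma twoStemTables_four_zero : TwoStemTables 4 0 63 18 139 0 1 0 where
  left := ⟨_, isTable_prismQuads4⟩
  right := ⟨_, isTable_hexagonQuads0⟩
  quad := ⟨_, isTable_stemQuadFill4⟩
  hexad := ⟨_, isTable_stemHexadFill4⟩
  stem := ⟨[[0, 1, 2, 3]], by decide⟩

lemma twoStemTables_five_zero : TwoStemTables 5 0 69 18 156 0 1 0 where
  left := ⟨_, isTable_prismQuads5⟩
  right := ⟨_, isTable_hexagonQuads0⟩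
  quad := ⟨_, isTable_stemQuadFill5⟩
  hexad := ⟨_, isTable_stemHexadFill5⟩
  stem := ⟨[[0, 1, 2, 3]], by decide⟩

lemma twoStemTables_six_zero : TwoStemTables 6 0 81 18 189 1 0 1 where
  left := ⟨_, isTable_prismQuads6⟩
  right := ⟨_, isTable_hexagonQuads0⟩
  quad := ⟨_, isTable_stemQuadFill6⟩
  hexad := ⟨_, isTable_stemHexadFill6⟩
  stem := ⟨[[0, 1, 2, 3, 4, 5]], by decide⟩

lemma twoStemTables_two_six : TwoStemTables 2 6 45 72 271 0 14 0 where
  left := ⟨_, isTable_prismQuads2⟩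
  right := ⟨_, isTable_hexagonQuads6⟩
  quad := ⟨_, isTable_stemQuadFill8⟩
  hexad := ⟨_, isTable_stemHexadFill8⟩
  stem := ⟨_, isTable_stemFill8⟩

lemma twoStemTables_four_six : TwoStemTables 4 6 63 72 355 0 30 0 where
  left := ⟨_, isTable_prismQuads4⟩
  right := ⟨_, isTable_hexagonQuads6⟩
  quad := ⟨_, isTable_stemQuadFill10⟩
  hexad := ⟨_, isTable_stemHexadFill10⟩
  stem := ⟨_, isTable_stemFill10⟩

variable {α : Type*} [DecidableEq α] [Fintype α] {B : Finset (Finset α)}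
  {s₁ s₂ p₁ p₂ N m o₄ o₆ u n : ℕ}

lemma two_mul_choose_two (n : ℕ) : (2 * n.choose 2 : ℤ) = n * (n - 1) := by
  induction n with
  | zero => simp
  | succ n ih =>
    rw [Nat.choose_succ_succ', Nat.choose_one_right]
    push_cast
    linear_combination ih

lemma six_mul_choose_three (n : ℕ) : (6 * n.choose 3 : ℤ) = n * (n - 1) * (n - 2) := by
  induction n with
  | zero => simp
  | succ n ih =>
    rw [Nat.choose_succ_succ']
    push_cast
    linear_combination ih + 3 * two_mul_choose_two n

lemma TwoStemTables.exists_isMixedSteinerSystem (h : TwoStemTables s₁ s₂ p₁ p₂ N m o₄ o₆)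
    (hB : IsMixedSteinerSystem B) (hv : Fintype.card α = u + 2) (hn0 : n ≠ 0)
    (hn : s₁ + s₂ + 6 * u = n) (h6 : m * u + o₆ = if 6 ∣ n then n / 6 else 0)
    (htriples : (n * (n - 1) * (n - 2) : ℤ) = 216 * ((u + 2) * (u + 1) * u) +
      6 * (2 * p₁ + 2 * p₂ - 216) * ((u + 1) * u) + 12 * (N - 3 * p₁ - 3 * p₂ + 108) * u +
      24 * o₄ + 120 * (m * u + o₆)) :
    ∃ B' : Finset (Finset (Fin n)), IsMixedSteinerSystem B' := by
  have : NeZero n := ⟨hn0⟩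
  obtain ⟨B', hB', hhex, h₄, h₆⟩ := h.exists_packing hB (by omega) (n := n) (by rw [hv]; exact hn)
  rw [hv, Nat.add_sub_cancel] at h₄ h₆
  refine ⟨B', hB', hhex, by rw [h₆, h6, Fintype.card_fin], ?_⟩
  have h2 := two_mul_choose_two (u + 1)
  have h3 := six_mul_choose_three (u + 2)
  have h3n := six_mul_choose_three n
  rw [show u + 2 - 1 = u + 1 from rfl] at h₄
  push_cast at h2 h3
  rw [Fintype.card_fin, h₆]
  zify
  refine mul_left_cancel₀ (by norm_num : (6 : ℤ) ≠ 0) ?_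
  linear_combination 12 * h₄ + 216 * h3 + 6 * (2 * p₁ + 2 * p₂ - 216) * h2 - htriples - h3n

lemma isMixedSteinerSystem_empty_two : IsMixedSteinerSystem (∅ : Finset (Finset (Fin 2))) where
  toIsMixedPacking := isMixedPacking_empty
  hexadsDisjoint := by simp [HexadsDisjoint, slice]
  card_slice_six := by simp [slice]
  card_triples := by simp [slice]

-- An order `12 k + s` is reduced to the order `2 k + 2`.
lemma exists_isMixedSteinerSystem (hn : Even n) (h2 : 2 ≤ n) :
    ∃ B : Finset (Finset (Fin n)), IsMixedSteinerSystem B := by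
  induction n using Nat.strong_induction_on with
  | _ n ih =>
    obtain rfl | hn2 := h2.eq_or_lt
    · exact ⟨∅, isMixedSteinerSystem_empty_two⟩
    obtain ⟨k, s, hk, hs⟩ : ∃ k s, 12 * k + s = n ∧
        (s = 0 ∨ s = 2 ∨ s = 4 ∨ s = 6 ∨ s = 8 ∨ s = 10) :=
      ⟨n / 12, n % 12, Nat.div_add_mod n 12, by have := Nat.even_iff.1 hn; omega⟩
    obtain ⟨B, hB⟩ := ih (2 * k + 2) (by omega) (by simp [parity_simps]) (by omega)
    have hcard : Fintype.card (Fin (2 * k + 2)) = 2 * k + 2 := Fintype.card_fin _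
    rcases hs with rfl | rfl | rfl | rfl | rfl | rfl
    · exact twoStemTables_zero_zero.exists_isMixedSteinerSystem hB hcard (by omega) (by omega)
        (by split_ifs <;> omega) (by rw [← hk]; push_cast; ring)
    · exact twoStemTables_two_zero.exists_isMixedSteinerSystem hB hcard (by omega) (by omega)
        (by split_ifs <;> omega) (by rw [← hk]; push_cast; ring)
    · exact twoStemTables_four_zero.exists_isMixedSteinerSystem hB hcard (by omega) (by omega)
        (by split_ifs <;> omega) (by rw [← hk]; push_cast; ring)
    · exact twoStemTables_six_zero.exists_isMixedSteinerSystem hB hcard (by omega) (by omega)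
        (by split_ifs <;> omega) (by rw [← hk]; push_cast; ring)
    · exact twoStemTables_two_six.exists_isMixedSteinerSystem hB hcard (by omega) (by omega)
        (by split_ifs <;> omega) (by rw [← hk]; push_cast; ring)
    · exact twoStemTables_four_six.exists_isMixedSteinerSystem hB hcard (by omega) (by omega)
        (by split_ifs <;> omega) (by rw [← hk]; push_cast; ring)

end EvenOrders

/-! ### Three stems -/

section Coloring

open Equiv Perm

variable {X : Type*}

lemma not_sameCycle_mul_apply {P R : Perm X} (hP : P * P = 1) (hR : R * R = 1)
    (hP' : ∀ x, P x ≠ x) (hR' : ∀ x, R x ≠ x) (x : X) : ¬ (P * R).SameCycle x (P x) := by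
  have hconj : SemiconjBy P (P * R) (P * R)⁻¹ := by
    rw [SemiconjBy, mul_inv_rev, inv_eq_of_mul_eq_one_left hP, inv_eq_of_mul_eq_one_left hR,
      ← mul_assoc, hP, one_mul, mul_assoc, hP, mul_one]
  have happly : ∀ j : ℤ, P (((P * R) ^ j) x) = ((P * R) ^ (-j)) (P x) := fun j => by
    have h := hconj.zpow_right j
    rw [inv_zpow'] at h
    exact congr($h x)
  rintro ⟨i, hi⟩
  obtain ⟨j, rfl | rfl⟩ := Int.even_or_odd' i
  · refine hP' (((P * R) ^ j) x) ?_
    rw [happly, ← hi, ← Perm.mul_apply, ← zpow_add]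
    congr 2
    ring
  · refine hR' (((P * R) ^ j) x) (P.injective ?_)
    rw [happly, ← hi, ← Perm.mul_apply, ← Perm.mul_apply, ← Perm.mul_apply, ← zpow_add,
      ← zpow_one_add]
    congr 2
    ring

/- The union of the two perfect matchings consists of even cycles and of paths which are infinite in
both directions; its colour classes are the orbits of the composition of the two involutions. -/
theorem exists_bool_coloring {p q : X → X} (hp : p.Involutive) (hq : q.Involutive)
    (hp' : ∀ x, p x ≠ x) (hq' : ∀ x, q x ≠ x) :
    ∃ col : X → Bool, ∀ x, col (p x) ≠ col x ∧ col (q x) ≠ col x := by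
  classical
  let P : Perm X := hp.toPerm
  let R : Perm X := hq.toPerm
  have hPP : P * P = 1 := Equiv.ext hp
  have hRR : R * R = 1 := Equiv.ext hq
  let := linearOrderOfSTO (WellOrderingRel (α := Quotient (SameCycle.setoid (P * R))))
  let cls : X → Quotient (SameCycle.setoid (P * R)) := Quotient.mk _
  have hcls : ∀ x, cls (p x) ≠ cls x := fun x h =>
    not_sameCycle_mul_apply hPP hRR hp' hq' x (Quotient.exact h).symm
  have hpq : ∀ x, cls (p (q x)) = cls x := fun x =>
    Quotient.sound (sameCycle_apply_left (f := P * R) |>.2 (SameCycle.refl _ _))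
  have hq : ∀ x, cls (q x) = cls (p x) := fun x => by
    rw [← hpq (q x), hq x]
  refine ⟨fun x => decide (cls x < cls (p x)), fun x => ?_⟩
  rcases (hcls x).lt_or_gt with h | h <;> simp [hp x, hq, hpq, h, h.not_gt]

section Core

variable {α : Type*} [DecidableEq α] [Fintype α] {B : Finset (Finset α)} {Z : Finset α} {a b : α}

namespace IsMixedSteinerSystem

lemma card_sdiff_core (hB : IsMixedSteinerSystem B) (hZ : Z ∈ B) (ha : a ∈ Z) (hb : b ∈ Z)
    (hab : a ≠ b) {c : Finset α} (hc : c ∈ B) (hcZ : c ≠ Z) (hc4 : #c = 4) (hac : a ∈ c)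
    (hbc : b ∈ c) : #(c \ Z) = 2 := by
  have hinter := inter_eq_pair hab hac hbc ha hb (hB.isTriplePacking hc hZ hcZ)
  have := card_sdiff_add_card_inter c Z
  rw [hinter, card_pair hab] at this
  omega

lemma exists_partner (hB : IsMixedSteinerSystem B) (hZ : Z ∈ B) (ha : a ∈ Z) (hb : b ∈ Z)
    (hab : a ≠ b) (h4 : ∀ c ∈ B, a ∈ c → c ≠ Z → #c = 4) :
    ∃ p : {x // x ∉ Z} → {x // x ∉ Z}, p.Involutive ∧ (∀ x, p x ≠ x) ∧
      ∀ c ∈ B, a ∈ c → b ∈ c → ∀ x y : {x // x ∉ Z}, x.1 ∈ c → y.1 ∈ c → x ≠ y → p x = y := by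
  have htriple : ∀ x : {x // x ∉ Z}, #{a, b, x.1} = 3 := fun x =>
    card_eq_three.2 ⟨a, b, x, hab, ne_of_mem_of_not_mem ha x.2, ne_of_mem_of_not_mem hb x.2, rfl⟩
  choose c hc hsub using fun x => hB.exists_superset (htriple x)
  simp only [insert_subset_iff, singleton_subset_iff] at hsub
  have hcard : ∀ x, #(c x \ Z) = 2 := fun x => by
    have hne : c x ≠ Z := ne_of_mem_of_not_mem' (hsub x).2.2 x.2
    exact hB.card_sdiff_core hZ ha hb hab (hc x) hne (h4 _ (hc x) (hsub x).1 hne) (hsub x).1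
      (hsub x).2.1
  choose p hp hpx using fun x => exists_mem_ne (one_lt_two.trans_eq (hcard x).symm) x.1
  simp only [mem_sdiff] at hp
  have hpair : ∀ x, c x \ Z = {x.1, p x} := fun x => by
    refine (eq_of_subset_of_card_le ?_ ((hcard x).le.trans (card_pair (hpx x).symm).ge)).symm
    simp [insert_subset_iff, hsub x, x.2, hp x]
  have hpartner : ∀ d ∈ B, a ∈ d → b ∈ d → ∀ x y : {x // x ∉ Z}, x.1 ∈ d → y.1 ∈ d → x ≠ y →
      p x = y := fun d hd had hbd x y hx hy hxy => by
    have hdc : d = c x := hB.isTriplePacking.eq_of_three_le_card_inter hd (hc x)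
      ((htriple x).ge.trans (card_le_card (by simp [insert_subset_iff, *])))
    have hy : y.1 ∈ c x \ Z := mem_sdiff.2 ⟨hdc ▸ hy, y.2⟩
    rw [hpair, mem_insert, mem_singleton, Subtype.coe_inj] at hy
    exact (hy.resolve_left hxy.symm).symm
  refine ⟨fun x => ⟨p x, (hp x).2⟩, fun x => Subtype.ext ?_,
    fun x h => hpx x (congr_arg Subtype.val h),
    fun d hd had hbd x y hx hy hxy => Subtype.ext (hpartner d hd had hbd x y hx hy hxy)⟩
  exact hpartner (c x) (hc x) (hsub x).1 (hsub x).2.1 ⟨p x, (hp x).2⟩ x (hp x).1 (hsub x).2.2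
    fun h => hpx x (congr_arg Subtype.val h)

theorem exists_coloring (hB : IsMixedSteinerSystem B) (hZ : Z ∈ B) (ha : a ∈ Z) {e : Bool → α}
    (he : ∀ k, e k ∈ Z) (hae : ∀ k, a ≠ e k) (h4 : ∀ c ∈ B, a ∈ c → c ≠ Z → #c = 4) :
    ∃ col : α → Bool, ∀ c ∈ B, ∀ k, a ∈ c → e k ∈ c → ∀ x ∈ c \ Z, ∀ y ∈ c \ Z, x ≠ y →
      col x ≠ col y := by
  choose p hp hp' hpartner using fun k => hB.exists_partner hZ ha (he k) (hae k) h4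
  obtain ⟨col, hcol⟩ := exists_bool_coloring (hp true) (hp false) (hp' true) (hp' false)
  have hcol : ∀ k x, col (p k x) ≠ col x := fun k x => by
    cases k
    exacts [(hcol x).2, (hcol x).1]
  refine ⟨fun x => if h : x ∉ Z then col ⟨x, h⟩ else false,
    fun c hc k hac hek x hx y hy hxy => ?_⟩
  rw [mem_sdiff] at hx hy
  simp only [dif_pos hx.2, dif_pos hy.2]
  rw [← hpartner k c hc hac hek ⟨x, hx.2⟩ ⟨y, hy.2⟩ hx.1 hy.1 (by simpa using hxy)]
  exact (hcol k _).symm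

end IsMixedSteinerSystem

end Core

end Coloring

section HoleTables

/-- The tables for the blocks through the hub, the points of which are encoded at position 2, and a
hole, at the empty position 3. -/
def holeFill : Bool → List (List ℕ)
  | true => hexagonHoleFill
  | false => prismHoleFill

lemma isTable_holeFill (k : Bool) :
    IsTable [6, 6, 5, 0] (IsHoleFillCode k) (cond k 105 93) 0 (holeFill k) := by
  cases k
  exacts [isTable_prismHoleFill, isTable_hexagonHoleFill]

/-- The part of `l` at position `i` and over the hub. -/
def holeTrace (i : ℕ) (l : List ℕ) : List ℕ :=
  l.filter fun m => m / 6 = i ∨ m / 6 = 2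

lemma triplesDisjoint_holeTrace : ∀ i < 2,
    triplesDisjoint 0 ((holeFill true).map (holeTrace i) ++ (holeFill false).map (holeTrace i)) =
      true := by
  decide +kernel

lemma card_inter_holeTrace_le_two {i : ℕ} (hi : i < 2) {l l' : List ℕ} (hl : l ∈ holeFill true)
    (hl' : l' ∈ holeFill false) : #((holeTrace i l).toFinset ∩ (holeTrace i l').toFinset) ≤ 2 := by
  have hsorted : ∀ k, ∀ l ∈ holeFill k, (holeTrace i l).SortedLT := fun k l hl =>
    (((isTable_holeFill k).sorted l hl).pairwise.filter _).sortedLT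
  have hdisj := List.pairwise_append.1
    (pairwise_of_triplesDisjoint (triplesDisjoint_holeTrace i hi)).2
  exact card_inter_le_two_of_tripleMask (hsorted _ l hl) (hsorted _ l' hl')
    (hdisj.2.2 _ (List.mem_map_of_mem hl) _ (List.mem_map_of_mem hl'))

end HoleTables

section ThreeStems

variable {α : Type*} [DecidableEq α] {a : α} {col : α → Bool} {c c' : Finset α}
  {β β' : Finset (α × ℕ)} {k k' : Bool}

/-- The code of the point `x` in the tables `holeFill`: the two fibres of size 6 are placed
according to the colours `col`. -/
def holeCode (a : α) (col : α → Bool) (x : α × ℕ) : ℕ :=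
  if x.1 = a then 12 + x.2 else 6 * (col x.1).toNat + x.2

/-- The blocks replacing a block through the hub `a` and a hole. If such a block meets both of the
fibres of size 6, its pairs of points in one of these have colour `k`. -/
structure IsHoleBlock (a : α) (k : Bool) (col : α → Bool) (β : Finset (α × ℕ)) : Prop where
  card_hub_le : #{x ∈ β | x.1 = a} ≤ 2
  color_eq : ∀ x ∈ β, ∀ y ∈ β, ∀ z ∈ β, x.1 ≠ a → z.1 ≠ a → x ≠ y → x.1 = y.1 → z.1 ≠ x.1 →
    hexagonAdj x.2 y.2 = k
  exists_code : ∃ l ∈ holeFill k, ∀ x ∈ β, holeCode a col x ∈ l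

namespace IsHoleBlock

lemma card_inter_le_two_of_mem (h : IsHoleBlock a k col β) (hβ : ∀ x ∈ β, x.1 ∈ c)
    (hβ' : ∀ x ∈ β', x.1 ∈ c') (hc : #(c ∩ c') ≤ 2) {q : α} (haq : a ≠ q) (ha : a ∈ c)
    (hq : q ∈ c) (ha' : a ∈ c') (hq' : q ∈ c') (havoid : ∀ x ∈ β, x.1 ≠ q) : #(β ∩ β') ≤ 2 := by
  refine (card_le_card fun x hx => ?_).trans h.card_hub_le
  have hxc := image_fst_inter_subset hβ hβ' (mem_image_of_mem Prod.fst hx)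
  rw [inter_eq_pair haq ha hq ha' hq' hc, mem_insert, mem_singleton] at hxc
  have hx := (mem_inter.1 hx).1
  exact mem_filter.2 ⟨hx, hxc.resolve_right (havoid x hx)⟩

lemma card_inter_le_two_of_fiberPairsColored (h : IsHoleBlock a k col β)
    (hβ : ∀ x ∈ β, x.1 ∈ c) (hβ' : ∀ x ∈ β', x.1 ∈ c') (hc : #(c ∩ c') ≤ 2) (hk : k ≠ k')
    (ha' : a ∉ c') (hfib : FibersLeTwo β') (hcol : FiberPairsColored k' β') : #(β ∩ β') ≤ 2 := by
  by_contra! hlt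
  obtain ⟨x, hx, y, hy, hne, hxy⟩ := exists_ne_map_eq_of_card_lt_of_maps_to
    (((card_le_card (image_fst_inter_subset hβ hβ')).trans hc).trans_lt hlt)
    fun x hx => mem_image_of_mem Prod.fst hx
  obtain ⟨z, hz, hzx⟩ : ∃ z ∈ β ∩ β', z.1 ≠ x.1 := by
    by_contra! hall
    refine hlt.not_ge ((card_le_card fun z hz => ?_).trans (hfib x.1))
    exact mem_filter.2 ⟨(mem_inter.1 hz).2, hall z hz⟩
  rw [mem_inter] at hx hy hz
  have hmem : ∀ x ∈ β', x.1 ≠ a := fun x hx => ne_of_mem_of_not_mem (hβ' x hx) ha'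
  exact hk ((h.color_eq x hx.1 y hy.1 z hz.1 (hmem x hx.2) (hmem z hz.2) hne hxy hzx).symm.trans
    (hcol x hx.2 y hy.2 hne hxy))

lemma card_inter_le_two (h : IsHoleBlock a true col β) (h' : IsHoleBlock a false col β')
    (hβ : ∀ x ∈ β, x.1 ∈ c) (hβ' : ∀ x ∈ β', x.1 ∈ c') (hlt : ∀ x ∈ β, x.2 < 6)
    (hc : #(c ∩ c') ≤ 2) (ha : a ∈ c) (ha' : a ∈ c') : #(β ∩ β') ≤ 2 := by
  obtain ⟨l, hl, hcode⟩ := h.exists_code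
  obtain ⟨l', hl', hcode'⟩ := h'.exists_code
  obtain ⟨p, hp⟩ : ∃ p, ∀ x ∈ β ∩ β', x.1 ≠ a → x.1 = p := by
    have hone : #((c ∩ c').erase a) ≤ 1 := by
      rw [card_erase_of_mem (mem_inter.2 ⟨ha, ha'⟩)]
      omega
    have : Nonempty α := ⟨a⟩
    obtain ⟨p, hp⟩ := card_le_one_iff_subset_singleton.1 hone
    exact ⟨p, fun x hx hxa => mem_singleton.1 <| hp <| mem_erase.2
      ⟨hxa, image_fst_inter_subset hβ hβ' (mem_image_of_mem Prod.fst hx)⟩⟩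
  have hp1 : (col p).toNat < 2 := Bool.toNat_lt _
  have hhub : ∀ x : α × ℕ, x.1 = a → holeCode a col x = 12 + x.2 := fun x hxa => if_pos hxa
  have hfib : ∀ x ∈ β ∩ β', x.1 ≠ a → holeCode a col x = 6 * (col p).toNat + x.2 :=
    fun x hx hxa => by rw [holeCode, if_neg hxa, hp x hx hxa]
  have hinj : Set.InjOn (holeCode a col) (β ∩ β' : Finset (α × ℕ)) := fun x hx y hy hxy => by
    have hx6 := hlt x (mem_inter.1 hx).1
    have hy6 := hlt y (mem_inter.1 hy).1
    by_cases hxa : x.1 = a <;> by_cases hya : y.1 = a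
    · rw [hhub x hxa, hhub y hya] at hxy
      exact Prod.ext (hxa.trans hya.symm) (by omega)
    · rw [hhub x hxa, hfib y hy hya] at hxy
      omega
    · rw [hfib x hx hxa, hhub y hya] at hxy
      omega
    · rw [hfib x hx hxa, hfib y hy hya] at hxy
      exact Prod.ext ((hp x hx hxa).trans (hp y hy hya).symm) (by omega)
  rw [← card_image_of_injOn hinj]
  refine (card_le_card ?_).trans (card_inter_holeTrace_le_two hp1 hl hl')
  refine image_subset_iff.2 fun x hx => ?_
  have htrace : holeCode a col x / 6 = (col p).toNat ∨ holeCode a col x / 6 = 2 := by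
    have hx6 := hlt x (mem_inter.1 hx).1
    by_cases hxa : x.1 = a
    · rw [hhub x hxa]
      omega
    · rw [hfib x hx hxa]
      omega
  rw [mem_inter] at hx
  simp [holeTrace, hcode x hx.1, hcode' x hx.2, htrace]

end IsHoleBlock

/-- The blocks over `c` of the three-stem construction with hub `a`, holes `e true` and `e false`,
and core block `Z`. -/
inductive IsThreeStemBlock (a : α) (e : Bool → α) (Z : Finset α) (col : α → Bool) (c : Finset α)
    (β : Finset (α × ℕ)) : Prop
  | transversal (hβ : Set.InjOn Prod.fst (β : Set (α × ℕ)))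
  | core (hc : c = Z)
  | hole (k : Bool) (ha : a ∈ c) (hk : e k ∈ c) (hβ : IsHoleBlock a k col β)
  | link (k : Bool) (ha : a ∉ c) (hk : e k ∈ c) (hfib : FibersLeTwo β)
      (hcol : e (!k) ∉ c → FiberPairsColored k β)

namespace IsThreeStemBlock

variable {e : Bool → α} {Z : Finset α}

lemma card_inter_le_two_of_link (h' : IsThreeStemBlock a e Z col c' β')
    (hβ : ∀ x ∈ β, x.1 ∈ c) (hβ' : ∀ x ∈ β', x.1 ∈ c') (havoid : ∀ x ∈ β, ∀ k, x.1 ≠ e k)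
    (hc : #(c ∩ c') ≤ 2) (he : ∀ k, e k ∈ Z) (ha : a ∉ c) (hk : e k ∈ c)
    (hfib : FibersLeTwo β) (hcol : e (!k) ∉ c → FiberPairsColored k β) : #(β ∩ β') ≤ 2 := by
  have avoids : ∀ k, e k ∈ c → e k ∈ c' → #(β ∩ β') ≤ 2 := fun k hk hk' =>
    card_inter_le_two_of_avoids hβ hβ' hc hk hk' (fun x hx => havoid x hx k) hfib
  have hother : ∀ k', e k' ∈ c' → e k ∉ c' → k' = !k := fun k' hk' hnot =>
    Bool.eq_not.2 fun hkk => hnot (hkk ▸ hk')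
  rcases h' with h' | rfl | ⟨k', -, hk', h'⟩ | ⟨k', -, hk', -, hcol'⟩
  · exact inter_comm β β' ▸ card_inter_le_two_of_injOn hβ' hβ (inter_comm c c' ▸ hc) h'
  · exact avoids k hk (he k)
  · by_cases hkc' : e k ∈ c'
    · exact avoids k hk hkc'
    obtain rfl := hother k' hk' hkc'
    by_cases hkc : e (!k) ∈ c
    · exact avoids _ hkc hk'
    exact inter_comm β β' ▸ h'.card_inter_le_two_of_fiberPairsColored hβ' hβ
      (inter_comm c c' ▸ hc) (Bool.not_ne_self k) ha hfib (hcol hkc)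
  · by_cases hkc' : e k ∈ c'
    · exact avoids k hk hkc'
    obtain rfl := hother k' hk' hkc'
    by_cases hkc : e (!k) ∈ c
    · exact avoids _ hkc hk'
    exact card_inter_le_two_of_colors_ne hβ hβ' hc (Bool.not_ne_self k).symm (hcol hkc)
      (hcol' (by rwa [Bool.not_not]))

lemma card_inter_le_two_of_hole (h' : IsThreeStemBlock a e Z col c' β')
    (hβ : ∀ x ∈ β, x.1 ∈ c ∧ x.2 < 6 ∧ ∀ k, x.1 ≠ e k)
    (hβ' : ∀ x ∈ β', x.1 ∈ c' ∧ x.2 < 6 ∧ ∀ k, x.1 ≠ e k) (hc : #(c ∩ c') ≤ 2) (haZ : a ∈ Z)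
    (he : ∀ k, e k ∈ Z) (hae : ∀ k, a ≠ e k) (ha : a ∈ c) (hk : e k ∈ c)
    (h : IsHoleBlock a k col β) : #(β ∩ β') ≤ 2 := by
  have hfst : ∀ x ∈ β, x.1 ∈ c := fun x hx => (hβ x hx).1
  have hfst' : ∀ x ∈ β', x.1 ∈ c' := fun x hx => (hβ' x hx).1
  have hc' : #(c' ∩ c) ≤ 2 := inter_comm c c' ▸ hc
  have common : a ∈ c' → e k ∈ c' → #(β ∩ β') ≤ 2 := fun ha' hk' =>
    h.card_inter_le_two_of_mem hfst hfst' hc (hae k) ha hk ha' hk' fun x hx => (hβ x hx).2.2 k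
  rcases h' with h' | rfl | ⟨k', ha', hk', h'⟩ | ⟨k', ha', hk', hfib', hcol'⟩
  · exact inter_comm β β' ▸ card_inter_le_two_of_injOn hfst' hfst hc' h'
  · exact common haZ (he k)
  · cases k <;> cases k'
    · exact common ha' hk'
    · exact inter_comm β β' ▸ h'.card_inter_le_two h hfst' hfst (fun x hx => (hβ' x hx).2.1) hc'
        ha' ha
    · exact h.card_inter_le_two h' hfst hfst' (fun x hx => (hβ x hx).2.1) hc ha ha'
    · exact common ha' hk'
  · exact inter_comm β β' ▸ card_inter_le_two_of_link (.hole k ha hk h) hfst' hfst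
      (fun x hx => (hβ' x hx).2.2) hc' he ha' hk' hfib' hcol'

theorem card_inter_le_two (h : IsThreeStemBlock a e Z col c β)
    (h' : IsThreeStemBlock a e Z col c' β') (hne : c ≠ c')
    (hβ : ∀ x ∈ β, x.1 ∈ c ∧ x.2 < 6 ∧ ∀ k, x.1 ≠ e k)
    (hβ' : ∀ x ∈ β', x.1 ∈ c' ∧ x.2 < 6 ∧ ∀ k, x.1 ≠ e k) (hc : #(c ∩ c') ≤ 2) (haZ : a ∈ Z)
    (he : ∀ k, e k ∈ Z) (hae : ∀ k, a ≠ e k) : #(β ∩ β') ≤ 2 := by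
  have hfst : ∀ x ∈ β, x.1 ∈ c := fun x hx => (hβ x hx).1
  have hfst' : ∀ x ∈ β', x.1 ∈ c' := fun x hx => (hβ' x hx).1
  have hc' : #(c' ∩ c) ≤ 2 := inter_comm c c' ▸ hc
  rcases h with h | rfl | ⟨k, ha, hk, h⟩ | ⟨k, ha, hk, hfib, hcol⟩
  · exact card_inter_le_two_of_injOn hfst hfst' hc h
  · rw [inter_comm]
    rcases h' with h' | rfl | ⟨k', ha', hk', h'⟩ | ⟨k', ha', hk', hfib', hcol'⟩
    · exact card_inter_le_two_of_injOn hfst' hfst hc' h'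
    · exact (hne rfl).elim
    · exact card_inter_le_two_of_hole (.core rfl) hβ' hβ hc' haZ he hae ha' hk' h'
    · exact card_inter_le_two_of_link (col := col) (.core rfl) hfst' hfst
        (fun x hx => (hβ' x hx).2.2) hc' he ha' hk' hfib' hcol'
  · exact h'.card_inter_le_two_of_hole hβ hβ' hc haZ he hae ha hk h
  · exact h'.card_inter_le_two_of_link hfst hfst' (fun x hx => (hβ x hx).2.2) hc he ha hk hfib hcol

end IsThreeStemBlock

end ThreeStems

section ThreeStemFillings

variable {α : Type*} [DecidableEq α] {a : α} {e : Bool → α} {col : α → Bool} {c Z : Finset α}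
  {k : Bool}

/-- The fibre sizes of the three-stem construction. -/
def threeStemWeight (a : α) (e : Bool → α) (p : α) : ℕ :=
  if p = a then 5 else if e true = p ∨ e false = p then 0 else 6

lemma threeStemWeight_hub : threeStemWeight a e a = 5 :=
  if_pos rfl

lemma threeStemWeight_hole (hae : a ≠ e k) : threeStemWeight a e (e k) = 0 := by
  cases k <;> simp [threeStemWeight, hae.symm]

lemma threeStemWeight_of_ne {p : α} (ha : p ≠ a) (he : ∀ k, p ≠ e k) :
    threeStemWeight a e p = 6 := by
  simp [threeStemWeight, ha, (he _).symm]

lemma lt_six_of_lt_threeStemWeight {p : α} {i : ℕ} (h : i < threeStemWeight a e p) : i < 6 := by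
  rw [threeStemWeight] at h
  split_ifs at h <;> omega

variable [Inhabited α]

lemma exists_isFilling_core (ha : a ∈ Z) (he : ∀ k, e k ∈ Z) (hae : ∀ k, a ≠ e k)
    (hee : e true ≠ e false) (hZ : #Z = 4 ∨ #Z = 6) :
    ∃ F, IsFilling (threeStemWeight a e) (IsThreeStemBlock a e Z col Z)
      (if #Z = 4 then 35 else 419) 0 Z F := by
  have hS : [a, e true, e false].Nodup := by simp [hae, hee]
  have hSZ : [a, e true, e false].toFinset ⊆ Z := by simp [insert_subset_iff, ha, he]
  have hwt : ∀ p ∈ Z, p ∉ [a, e true, e false] → threeStemWeight a e p = 6 := fun p _ hp => by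
    simp only [List.mem_cons, List.not_mem_nil, or_false, not_or] at hp
    exact threeStemWeight_of_ne hp.1 (Bool.forall_bool.2 hp.2.symm)
  rcases hZ with hZ | hZ
  · rw [if_pos hZ]
    exact isTable_hubQuadFill.exists_isFilling_append (k := 1) hS hSZ hZ.symm hwt
      (by simp [threeStemWeight_hub, threeStemWeight_hole, hae]) fun _ _ _ _ _ => .core rfl
  · rw [if_neg (by omega)]
    exact isTable_hubHexadFill.exists_isFilling_append (k := 3) hS hSZ hZ.symm hwt
      (by simp [threeStemWeight_hub, threeStemWeight_hole, hae]) fun _ _ _ _ _ => .core rfl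

lemma isHoleBlock_image_place {x y : α} (hL : [x, y, a, e k].Nodup) (hx : col x = false)
    (hy : col y = true) {l : List ℕ} (hl : l ∈ holeFill k) :
    IsHoleBlock a k col (l.toFinset.image (place [x, y, a, e k])) := by
  obtain ⟨hcount, hcol⟩ := (isTable_holeFill k).property l hl
  have hlt : ∀ m ∈ l, m / 6 < 3 := fun m hm => by
    have := (isTable_holeFill k).mod_lt l hl m hm
    by_contra! hle
    rcases hle.eq_or_lt with h | h
    · simp [← h] at this
    · rw [List.getD_eq_default _ _ (Nat.succ_le_of_lt h)] at this
      omega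
  have hinj : ∀ m ∈ l, ∀ m' ∈ l, (place [x, y, a, e k] m).1 = (place [x, y, a, e k] m').1 →
      m / 6 = m' / 6 := fun m hm m' hm' =>
    (fst_place_inj hL ((hlt m hm).trans (by simp)) ((hlt m' hm').trans (by simp))).1
  have hhub : ∀ m ∈ l, (place [x, y, a, e k] m).1 = a ↔ m / 6 = 2 := fun m hm =>
    fst_place_inj (m' := 12) hL ((hlt m hm).trans (by simp)) (by simp)
  refine ⟨?_, ?_, l, hl, ?_⟩
  · refine (card_filter_image_place_le _ fun m hm hma => ?_).trans hcount
    have := (hhub m hm).1 hma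
    exact decide_eq_true (by omega)
  · simp only [forall_mem_image, List.mem_toFinset]
    intro m hm m' hm' m'' hm'' hma hma'' hne hmm' hmm''
    rw [Ne, hhub _ ‹_›] at hma hma''
    have := hlt m hm
    have := hlt m'' hm''
    exact hcol m hm m' hm' m'' hm'' (by omega) (by omega) (fun h => hne (h ▸ rfl))
      (hinj m hm m' hm' hmm') fun h => hmm'' (by simp only [place, h])
  · simp only [forall_mem_image, List.mem_toFinset]
    intro m hm
    suffices holeCode a col (place [x, y, a, e k] m) = m by rwa [this]
    have hxa : x ≠ a := by
      rintro rfl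
      simp at hL
    have hya : y ≠ a := by
      rintro rfl
      simp at hL
    have := hlt m hm
    obtain h | h | h : m / 6 = 0 ∨ m / 6 = 1 ∨ m / 6 = 2 := by omega
    all_goals
      simp [holeCode, place, h, hxa, hya, hx, hy]
      omega

lemma exists_isFilling_hole (ha : a ∈ Z) (he : ∀ k, e k ∈ Z) (hae : a ≠ e k) (hac : a ∈ c)
    (hkc : e k ∈ c) (hc : #c = 4) (hcZ : #(c ∩ Z) ≤ 2)
    (hcol : ∀ x ∈ c \ Z, ∀ y ∈ c \ Z, x ≠ y → col x ≠ col y) :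
    ∃ F, IsFilling (threeStemWeight a e) (IsHoleBlock a k col) (cond k 105 93) 0 c F := by
  have hinter : c ∩ Z = {a, e k} := inter_eq_pair hae hac hkc ha (he k) hcZ
  have hcard : #(c \ Z) = 2 := by
    have := card_sdiff_add_card_inter c Z
    rw [hinter, card_pair hae] at this
    omega
  obtain ⟨x, y, hxy, hcx, hx, hy⟩ :
      ∃ x y, x ≠ y ∧ c \ Z = {x, y} ∧ col x = false ∧ col y = true := by
    obtain ⟨x, y, hxy, hcx⟩ := card_eq_two.1 hcard
    have hne := hcol x (by simp [hcx]) y (by simp [hcx]) hxy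
    cases hx : col x
    · exact ⟨x, y, hxy, hcx, hx, by simpa [hx] using hne⟩
    · exact ⟨y, x, hxy.symm, hcx.trans (pair_comm x y), by simpa [hx] using hne, hx⟩
  have hZ : ∀ z ∈ Z, z ≠ x ∧ z ≠ y := fun z hz => by
    simpa [hcx] using fun hzc : z ∈ c \ Z => (mem_sdiff.1 hzc).2 hz
  have hxe := fun k => (hZ _ (he k)).1.symm
  have hye := fun k => (hZ _ (he k)).2.symm
  have hL : [x, y, a, e k].Nodup := by
    simp [hxy, hae, hxe, hye, (hZ a ha).1.symm, (hZ a ha).2.symm]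
  refine (isTable_holeFill k).exists_isFilling hL ?_ ?_
    fun l hl _ _ => isHoleBlock_image_place hL hx hy hl
  · rw [← sdiff_union_inter c Z, hcx, hinter]
    ext
    simp [or_left_comm]
  · simp [threeStemWeight_hub, threeStemWeight_hole hae,
      threeStemWeight_of_ne (hZ a ha).1.symm hxe, threeStemWeight_of_ne (hZ a ha).2.symm hye]

lemma exists_isFilling_hub (ha : a ∈ c) (he : ∀ k, e k ∉ c) (hc : #c = 4) :
    ∃ F, IsFilling (threeStemWeight a e) (IsThreeStemBlock a e Z col c) 180 0 c F :=
  isTable_zeroSumQuads5.exists_isFilling_append (S := [a]) (k := 3) (by simp) (by simpa) hc.symm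
    (fun p hp hpa => threeStemWeight_of_ne (by simpa using hpa) fun k h => he k (h ▸ hp))
    (by simp [threeStemWeight_hub]) fun _ hL _ ht hlt =>
      .transversal (injOn_fst_of_isTransversalCode hL hlt ht)

lemma exists_isFilling_holes (hae : ∀ k, a ≠ e k) (hee : e true ≠ e false) (ha : a ∉ c)
    (he : ∀ k, e k ∈ c) (hc : #c = 4) :
    ∃ F, IsFilling (threeStemWeight a e) (IsThreeStemBlock a e Z col c) 45 0 c F :=
  isTable_filter_stemQuadFill0.exists_isFilling_append (S := [e true, e false]) (k := 2)
    (by simpa) (by simp [insert_subset_iff, he]) hc.symm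
    (fun p hp hpe => threeStemWeight_of_ne (fun h => ha (h ▸ hp)) (by simpa [and_comm] using hpe))
    (by simp [threeStemWeight_hole, hae]) fun _ hL _ ht hlt =>
      .link true ha (he true) (fibersLeTwo_of_code hL hlt ht) fun h => (h (he _)).elim

lemma IsTable.exists_isFilling_single_hole {n₄ : ℕ} {D : List (List ℕ)}
    (h : IsTable [6, 6, 6, 0] (IsLinkCode 3 k) n₄ 0 D) (hae : a ≠ e k) (ha : a ∉ c)
    (hk : e k ∈ c) (hk' : e (!k) ∉ c) (hc : #c = 4) :
    ∃ F, IsFilling (threeStemWeight a e) (IsThreeStemBlock a e Z col c) n₄ 0 c F := by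
  have hne : ∀ p ∈ c, p ≠ e k → ∀ j, p ≠ e j := fun p hp hpk j hpj => by
    rcases Bool.eq_or_eq_not j k with rfl | rfl
    exacts [hpk hpj, hk' (hpj ▸ hp)]
  obtain ⟨F, hF⟩ := h.exists_isFilling_link (wt := threeStemWeight a e) hc hk
    (fun p hp hpk => threeStemWeight_of_ne (fun h => ha (h ▸ hp)) (hne p hp hpk))
    (threeStemWeight_hole hae)
  exact ⟨F, hF.imp fun β _ h => h.elim .transversal fun h => .link k ha hk h.2.2 fun _ => h.2.1⟩

lemma exists_isFilling_of_hub_not_mem (hae : ∀ k, a ≠ e k) (hee : e true ≠ e false) (ha : a ∉ c)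
    (hc : #c = 4 ∨ #c = 6) (h4 : ∀ k, e k ∈ c → #c = 4) :
    ∃ n₄ : ℕ, (∃ F, IsFilling (threeStemWeight a e) (IsThreeStemBlock a e Z col c) n₄ 0 c F) ∧
      (2 * n₄ : ℤ) = 108 * triplesThrough ∅ c - 72 * triplesThrough {e true} c -
        54 * triplesThrough {e false} c + 18 * triplesThrough {e true, e false} c := by
  simp only [triplesThrough_eq_ite c (S := ∅) (by simp),
    triplesThrough_eq_ite c (S := {_}) (by simp),
    triplesThrough_eq_ite c (S := {_, _}) (card_le_two.trans (by simp)), card_pair hee,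
    card_singleton, card_empty, singleton_subset_iff, insert_subset_iff, empty_subset, if_true]
  by_cases ht : e true ∈ c <;> by_cases hf : e false ∈ c
  · refine ⟨_, exists_isFilling_holes hae hee ha (Bool.forall_bool.2 ⟨hf, ht⟩) (h4 _ ht), ?_⟩
    simp [ht, hf, h4 _ ht]
  · refine ⟨_, isTable_hexagonQuads0.exists_isFilling_single_hole (hae _) ha ht hf (h4 _ ht), ?_⟩
    simp [ht, hf, h4 _ ht]
  · refine ⟨_, isTable_prismQuads0.exists_isFilling_single_hole (hae _) ha hf ht (h4 _ hf), ?_⟩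
    simp [ht, hf, h4 _ hf]
  · obtain ⟨F, hF⟩ := exists_isFilling_transversal (wt := threeStemWeight a e) hc fun p hp =>
      threeStemWeight_of_ne (ne_of_mem_of_not_mem hp ha) <| Bool.forall_bool.2
        ⟨ne_of_mem_of_not_mem hp hf, ne_of_mem_of_not_mem hp ht⟩
    refine ⟨_, ⟨F, hF.imp fun _ _ => .transversal⟩, ?_⟩
    simp [ht, hf]
    ring

theorem exists_isFilling_threeStem (ha : a ∈ Z) (he : ∀ k, e k ∈ Z) (hae : ∀ k, a ≠ e k)
    (hee : e true ≠ e false) (hc : #c = 4 ∨ #c = 6) (h4 : c ≠ Z → ¬ Disjoint c Z → #c = 4)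
    (hcZ : c ≠ Z → #(c ∩ Z) ≤ 2)
    (hcol : ∀ k, a ∈ c → e k ∈ c → ∀ x ∈ c \ Z, ∀ y ∈ c \ Z, x ≠ y → col x ≠ col y) :
    ∃ n₄ : ℕ, (∃ F, IsFilling (threeStemWeight a e) (IsThreeStemBlock a e Z col c) n₄ 0 c F) ∧
      (2 * n₄ : ℤ) = 108 * triplesThrough ∅ c - 24 * triplesThrough {a} c -
        72 * triplesThrough {e true} c - 54 * triplesThrough {e false} c +
        33 * triplesThrough {a, e true} c - 6 * triplesThrough {a, e false} c +
        18 * triplesThrough {e true, e false} c - 2 * triplesThrough {a, e true, e false} c := by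
  have hmeet : ∀ p ∈ Z, p ∈ c → c ≠ Z → #c = 4 := fun p hpZ hpc hne =>
    h4 hne fun h => disjoint_left.1 h hpc hpZ
  have hthree : #{a, e true, e false} = 3 := card_eq_three.2 ⟨a, _, _, hae _, hae _, hee, rfl⟩
  by_cases hac : a ∉ c ∧ c ≠ Z
  · obtain ⟨n₄, hF, hn₄⟩ := exists_isFilling_of_hub_not_mem (Z := Z) (col := col) hae hee hac.1 hc
      fun k hk => hmeet _ (he k) hk hac.2
    refine ⟨n₄, hF, hn₄.trans ?_⟩
    have hzero : ∀ S : Finset α, a ∈ S → triplesThrough S c = 0 := fun S haS =>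
      triplesThrough_eq_zero fun h => hac.1 (h haS)
    rw [hzero {a} (by simp), hzero {a, e true} (by simp), hzero {a, e false} (by simp),
      hzero {a, _, _} (by simp)]
    ring
  simp only [triplesThrough_eq_ite c card_le_three, triplesThrough_eq_ite c (S := ∅) (by simp),
    triplesThrough_eq_ite c (S := {_}) (by simp),
    triplesThrough_eq_ite c (S := {_, _}) (card_le_two.trans (by simp)), hthree,
    card_pair (hae _), card_pair hee, card_singleton, card_empty, singleton_subset_iff,
    insert_subset_iff, empty_subset, if_true]
  rcases eq_or_ne c Z with rfl | hne
  · refine ⟨_, exists_isFilling_core ha he hae hee hc, ?_⟩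
    rcases hc with hc | hc <;> simp [hc, ha, he, Nat.choose]
  have hac : a ∈ c := not_not.1 fun h => hac ⟨h, hne⟩
  have hc4 := hmeet a ha hac hne
  by_cases h : ∃ k, e k ∈ c
  · obtain ⟨k, hk⟩ := h
    have hk' : e (!k) ∉ c := fun hk' => by
      have : {a, e true, e false} ⊆ c ∩ Z := by cases k <;> simp_all [insert_subset_iff]
      have := (card_le_card this).trans (hcZ hne)
      omega
    obtain ⟨F, hF⟩ := exists_isFilling_hole ha he (hae k) hac hk hc4 (hcZ hne) (hcol k hac hk)
    refine ⟨_, ⟨F, hF.imp fun _ _ => .hole k hac hk⟩, ?_⟩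
    cases k <;> simp_all
  · push Not at h
    exact ⟨_, exists_isFilling_hub hac h hc4, by simp [hac, h, hc4]⟩

end ThreeStemFillings

section ThreeStemPackings

variable {α : Type*} [DecidableEq α] {a : α} {e : Bool → α} {Z : Finset α}

lemma IsThreeStemBlock.card_inter_le_two_of_lt_threeStemWeight {col : α → Bool} {c c' : Finset α}
    {β β' : Finset (α × ℕ)} (h : IsThreeStemBlock a e Z col c β)
    (h' : IsThreeStemBlock a e Z col c' β') (hne : c ≠ c') (hβ : ∀ x ∈ β, x.1 ∈ c)
    (hβ' : ∀ x ∈ β', x.1 ∈ c') (hlt : ∀ x ∈ β, x.2 < threeStemWeight a e x.1)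
    (hlt' : ∀ x ∈ β', x.2 < threeStemWeight a e x.1) (hc : #(c ∩ c') ≤ 2) (ha : a ∈ Z)
    (he : ∀ k, e k ∈ Z) (hae : ∀ k, a ≠ e k) : #(β ∩ β') ≤ 2 := by
  have hpoint : ∀ p i, i < threeStemWeight a e p → i < 6 ∧ ∀ k, p ≠ e k := fun p i hi => by
    refine ⟨lt_six_of_lt_threeStemWeight hi, ?_⟩
    rintro k rfl
    simp [threeStemWeight_hole (hae k)] at hi
  exact h.card_inter_le_two h' hne (fun x hx => ⟨hβ x hx, hpoint _ _ (hlt x hx)⟩)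
    (fun x hx => ⟨hβ' x hx, hpoint _ _ (hlt' x hx)⟩) hc ha he hae

variable [Fintype α] {B : Finset (Finset α)}

lemma sum_threeStemWeight (hae : ∀ k, a ≠ e k) (hee : e true ≠ e false) :
    ∑ p, threeStemWeight a e p = 5 + 6 * (Fintype.card α - 3) := by
  have hthree : #{a, e true, e false} = 3 := card_eq_three.2 ⟨a, _, _, hae _, hae _, hee, rfl⟩
  have hstems : ∑ p ∈ {a, e true, e false}, threeStemWeight a e p = 5 := by
    rw [sum_insert (by simp [hae]), sum_pair hee, threeStemWeight_hub,
      threeStemWeight_hole (hae _), threeStemWeight_hole (hae _), add_zero, add_zero]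
  have hrest : ∀ p ∈ univ \ {a, e true, e false}, threeStemWeight a e p = 6 := fun p hp => by
    simp only [mem_sdiff, mem_univ, true_and, mem_insert, mem_singleton, not_or] at hp
    exact threeStemWeight_of_ne hp.1 (Bool.forall_bool.2 hp.2.symm)
  rw [← sum_sdiff (subset_univ {a, e true, e false}), hstems, sum_congr rfl hrest, sum_const,
    smul_eq_mul, card_univ_sdiff, hthree, add_comm, mul_comm]

namespace IsMixedSteinerSystem

lemma exists_core (hB : IsMixedSteinerSystem B) (hv : 3 ≤ Fintype.card α) :
    ∃ Z ∈ B, ∃ (a : α) (e : Bool → α), a ∈ Z ∧ (∀ k, e k ∈ Z) ∧ (∀ k, a ≠ e k) ∧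
      e true ≠ e false ∧ ∀ c ∈ B, c ≠ Z → ¬ Disjoint c Z → #c = 4 := by
  obtain ⟨Z, hZ, hdisj⟩ := hB.exists_disjoint_hexads hv
  have hlt : 2 < #Z := by
    have := hB.card_eq Z hZ
    omega
  obtain ⟨a, ha, b, hb, d, hd, hab, had, hbd⟩ := two_lt_card.1 hlt
  exact ⟨Z, hZ, a, (cond · b d), ha, Bool.forall_bool.2 ⟨hd, hb⟩, Bool.forall_bool.2 ⟨had, hab⟩,
    hbd, fun c hc hne hmeet => (hB.card_eq c hc).resolve_right fun h6 => hmeet (hdisj c hc h6 hne)⟩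

lemma exists_threeStem_packing {n : ℕ} [NeZero n] (hB : IsMixedSteinerSystem B)
    (hv : 3 ≤ Fintype.card α) (hn : 5 + 6 * (Fintype.card α - 3) = n) :
    ∃ B' : Finset (Finset (Fin n)), IsMixedPacking B' ∧ #(B'.slice 6) = 0 ∧
      (2 * #(B'.slice 4) : ℤ) = 108 * (Fintype.card α).choose 3 -
        150 * (Fintype.card α - 1).choose 2 + 45 * (Fintype.card α - 2 : ℕ) - 2 := by
  obtain ⟨Z, hZ, a, e, ha, he, hae, hee, h4⟩ := hB.exists_core hv
  have : Inhabited α := ⟨a⟩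
  have hmeet : ∀ c ∈ B, a ∈ c → c ≠ Z → #c = 4 := fun c hc hac hne =>
    h4 c hc hne fun h => disjoint_left.1 h hac ha
  obtain ⟨col, hcol⟩ := hB.exists_coloring hZ ha he hae hmeet
  choose! n₄ hF h₄ using fun c hc =>
    exists_isFilling_threeStem ha he hae hee (hB.card_eq c hc) (h4 c hc)
      (hB.isTriplePacking hc hZ) (hcol c hc)
  obtain ⟨B', hB', -, h4, h6⟩ := exists_inflation (J := B) (n₄ := n₄) (n₆ := 0)
    (P := fun c β => #β = 4 ∧ (∀ x ∈ β, x.2 < threeStemWeight a e x.1) ∧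
      IsThreeStemBlock a e Z col c β) ((sum_threeStemWeight hae hee).trans hn)
    (fun c hc => by
      obtain ⟨F, hF⟩ := hF c hc
      exact ⟨F, hF.imp fun β hβ h => ⟨hF.card_eq_four hβ, hF.snd_lt β hβ, h⟩⟩)
    fun c hc c' hc' hne β β' hβ hβ' hP hP' => ⟨hP.2.2.card_inter_le_two_of_lt_threeStemWeight
      hP'.2.2 hne hβ hβ' hP.2.1 hP'.2.1 (hB.isTriplePacking hc hc' hne) ha he hae,
        fun h => by omega⟩
  refine ⟨B', hB', by simpa using h6, ?_⟩
  have hsum : ∀ S : Finset α, #S ≤ 3 →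
      ∑ c ∈ B, (triplesThrough S c : ℤ) = (Fintype.card α - #S).choose (3 - #S) := fun S hS => by
    exact_mod_cast hB.sum_triplesThrough hS
  have hthree : #{a, e true, e false} = 3 := card_eq_three.2 ⟨a, _, _, hae _, hae _, hee, rfl⟩
  rw [h4, Nat.cast_sum, mul_sum, sum_congr rfl h₄]
  simp only [sum_add_distrib, sum_sub_distrib, ← mul_sum]
  simp only [hsum _ card_le_three, hsum ∅ (by simp), hsum {_} (by simp),
    hsum {_, _} (card_le_two.trans (by simp)), hthree, card_pair (hae _), card_pair hee]
  simp
  ring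

end IsMixedSteinerSystem

end ThreeStemPackings

/-! ### Lower bounds -/

section SplitHexads

variable {α : Type*} [DecidableEq α] {b : Finset α} {B : Finset (Finset α)}

lemma isMixedPacking_splitHexad :
    IsMixedPacking ({{0, 1, 2, 3}, {0, 1, 4, 5}, {2, 3, 4, 5}} : Finset (Finset (Fin 6))) where
  card_eq := by decide
  isTriplePacking := isTriplePacking_iff.2 (by decide)

lemma exists_quads_of_card_eq (hb : #b = 4 ∨ #b = 6) :
    ∃ F : Finset (Finset α), IsMixedPacking F ∧ (∀ β ∈ F, β ⊆ b) ∧ #(F.slice 6) = 0 ∧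
      #(F.slice 4) = (if #b = 4 then 1 else 0) + 3 * (if #b = 6 then 1 else 0) := by
  rcases hb with hb | hb
  · exact ⟨{b}, isMixedPacking_singleton (.inl hb), by simp, by simp [slice, filter_singleton, hb],
      by simp [slice, filter_singleton, hb]⟩
  · let f : Fin 6 → α := fun i => (b.equivFinOfCardEq hb).symm i
    have hf : Set.InjOn f Set.univ :=
      (Subtype.val_injective.comp (b.equivFinOfCardEq hb).symm.injective).injOn
    refine ⟨_, isMixedPacking_splitHexad.image hf fun _ _ => Set.subset_univ _,
      forall_mem_image.2 fun β _ => image_subset_iff.2 fun i _ => Subtype.prop _, ?_, ?_⟩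
    · rw [card_slice_image hf fun _ _ => Set.subset_univ _]
      decide
    · rw [card_slice_image hf fun _ _ => Set.subset_univ _, hb]
      decide

lemma IsMixedPacking.exists_splitHexads (hB : IsMixedPacking B) :
    ∃ B' : Finset (Finset α), IsMixedPacking B' ∧ #(B'.slice 6) = 0 ∧
      #(B'.slice 4) = #(B.slice 4) + 3 * #(B.slice 6) := by
  choose! F hF hsub h₆ h₄ using fun b hb => exists_quads_of_card_eq (hB.card_eq b hb)
  have hcross : (B : Set (Finset α)).Pairwise fun b c => ∀ β ∈ F b, ∀ γ ∈ F c, #(β ∩ γ) ≤ 2 :=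
    fun b hb c hc hne β hβ γ hγ =>
      (card_le_card (inter_subset_inter (hsub b hb β hβ) (hsub c hc γ hγ))).trans
        (hB.isTriplePacking hb hc hne)
  refine ⟨B.biUnion F, .biUnion hF hcross, ?_, ?_⟩
  · rw [card_slice_biUnion hcross (by norm_num), sum_eq_zero h₆]
  · rw [card_slice_biUnion hcross (by norm_num), sum_congr rfl h₄, sum_add_distrib, ← mul_sum,
      ← card_filter, ← card_filter, slice, slice]

end SplitHexads

section LowerBounds

variable {n m : ℕ}

/-- There is a `3-(n, 4, 1)` packing with `m` blocks. -/
def HasQuadPacking (n m : ℕ) : Prop :=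
  ∃ B : Finset (Finset (Fin n)), (B : Set (Finset (Fin n))).Sized 4 ∧ IsTriplePacking B ∧ #B = m

lemma IsMixedPacking.hasQuadPacking {B : Finset (Finset (Fin n))} (hB : IsMixedPacking B)
    (h6 : #(B.slice 6) = 0) : HasQuadPacking n #(B.slice 4) :=
  ⟨B, fun _ hb => hB.card_eq_four h6 hb, hB.isTriplePacking, by rw [hB.card_eq_add, h6, add_zero]⟩

lemma exists_hasQuadPacking_of_even (hn : Even n) (h2 : 2 ≤ n) :
    ∃ m, HasQuadPacking n m ∧ 4 * m + 8 * (if 6 ∣ n then n / 6 else 0) = n.choose 3 := by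
  obtain ⟨B, hB⟩ := exists_isMixedSteinerSystem hn h2
  obtain ⟨B', hB', h6, h4⟩ := hB.exists_splitHexads
  refine ⟨_, hB'.hasQuadPacking h6, ?_⟩
  have hcard := hB.card_slice_six
  have htriples := hB.card_triples
  rw [Fintype.card_fin] at hcard htriples
  rw [h4, ← hcard]
  omega

lemma mem_range_map_castSuccEmb {b : Finset (Fin (n + 1))} :
    b ∈ Set.range (map Fin.castSuccEmb) ↔ Fin.last n ∉ b := by
  constructor
  · rintro ⟨c, rfl⟩
    simp [Fin.castSucc_ne_last]
  · intro hb
    have hsub : b ⊆ univ.map Fin.castSuccEmb := fun x hx => by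
      obtain ⟨y, rfl⟩ := Fin.exists_castSucc_eq.2 (ne_of_mem_of_not_mem hx hb)
      exact mem_map_of_mem _ (mem_univ y)
    obtain ⟨c, -, rfl⟩ := subset_map_iff.1 hsub
    exact ⟨c, rfl⟩

lemma HasQuadPacking.delete {B : Finset (Finset (Fin (n + 1)))}
    (h4 : (B : Set (Finset (Fin (n + 1)))).Sized 4) (hB : IsTriplePacking B) :
    HasQuadPacking n #{b ∈ B | Fin.last n ∉ b} := by
  classical
  have hinj := map_injective (Fin.castSuccEmb (n := n))
  refine ⟨B.preimage (map Fin.castSuccEmb) hinj.injOn, fun b hb => ?_, fun b hb c hc hne => ?_, ?_⟩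
  · rw [← card_map Fin.castSuccEmb]
    exact h4 (mem_preimage.1 hb)
  · have hle : #(b.map Fin.castSuccEmb ∩ c.map Fin.castSuccEmb) ≤ 2 :=
      hB (mem_preimage.1 hb) (mem_preimage.1 hc) (hinj.ne hne)
    rwa [← map_inter, card_map] at hle
  · rw [card_preimage, filter_congr fun _ _ => mem_range_map_castSuccEmb]

lemma exists_hasQuadPacking_of_odd (hn : Odd n) (h6 : ¬ 6 ∣ n + 1) :
    ∃ m, HasQuadPacking n m ∧ 12 * m + 4 * n.choose 2 = 3 * (n + 1).choose 3 := by
  obtain ⟨B, hB⟩ := exists_isMixedSteinerSystem hn.add_one (by have := hn.pos; omega)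
  have hhex := hB.card_slice_six
  have htriples := hB.card_triples
  rw [Fintype.card_fin] at hhex htriples
  rw [if_neg h6] at hhex
  have h4 : ∀ b ∈ B, #b = 4 := fun b hb => hB.card_eq_four hhex hb
  have hcontaining : 3 * #{b ∈ B | Fin.last n ∈ b} = n.choose 2 := by
    have hsum := hB.sum_triplesThrough (S := {Fin.last n}) (by simp)
    rw [Fintype.card_fin, card_singleton, Nat.add_sub_cancel] at hsum
    rw [← hsum, card_filter, mul_sum]
    refine sum_congr rfl fun b hb => ?_
    rw [triplesThrough_eq_ite b (by simp), h4 b hb]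
    simp
  refine ⟨_, .delete (fun b hb => h4 b hb) hB.isTriplePacking, ?_⟩
  have hsplit := card_filter_add_card_filter_not (s := B) (Fin.last n ∈ ·)
  have hcard := hB.card_eq_add
  omega

lemma hasQuadPacking_twelve_mul_add_five (k : ℕ) :
    HasQuadPacking (12 * k + 5) (72 * k ^ 3 + 66 * k ^ 2 + 18 * k + 1) := by
  obtain ⟨B, hB⟩ := exists_isMixedSteinerSystem (n := 2 * k + 2) (by simp [parity_simps]) (by omega)
  obtain ⟨B', hB', -, h4, h6⟩ := twoStemTables_five_zero.exists_packing (n := 12 * k + 5) hB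
    (by simp) (by rw [Fintype.card_fin]; omega)
  rw [Fintype.card_fin, Nat.add_sub_cancel, show 2 * k + 2 - 1 = 2 * k + 1 from rfl] at h4
  convert hB'.hasQuadPacking (by simpa using h6) using 1
  have h2 := two_mul_choose_two (2 * k + 1)
  have h3 := six_mul_choose_three (2 * k + 2)
  zify
  push_cast at h2 h3 h4
  linarith

lemma hasQuadPacking_twelve_mul_add_eleven (k : ℕ) :
    HasQuadPacking (12 * k + 11) (72 * k ^ 3 + 174 * k ^ 2 + 138 * k + 35) := by
  obtain ⟨B, hB⟩ := exists_isMixedSteinerSystem (n := 2 * k + 4) (by simp [parity_simps]) (by omega)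
  obtain ⟨B', hB', h6, h4⟩ := hB.exists_threeStem_packing (n := 12 * k + 11)
    (by simp) (by rw [Fintype.card_fin]; omega)
  rw [Fintype.card_fin, show 2 * k + 4 - 1 = 2 * k + 3 from rfl,
    show 2 * k + 4 - 2 = 2 * k + 2 from rfl] at h4
  convert hB'.hasQuadPacking h6 using 1
  have h2 := two_mul_choose_two (2 * k + 3)
  have h3 := six_mul_choose_three (2 * k + 4)
  zify
  push_cast at h2 h3 h4
  linarith

end LowerBounds

section PackingNumber

variable {n m p : ℕ}

/-- The Johnson bound on the number of blocks of a `3-(n, 4, 1)` packing. -/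
def johnsonBound (n : ℕ) : ℕ :=
  n * ((n - 1) * ((n - 2) / 2) / 3) / 4

/-- The improvement of `johnsonBound n` if `6 ∣ n`: each point lies on one block less. -/
def johnsonBoundOfSixDvd (n : ℕ) : ℕ :=
  n * ((n - 1) * (n - 2) / 6 - 1) / 4

lemma johnsonBound_eq {q d e : ℕ} (hp : (n - 2) / 2 = p) (hq : (n - 1) * p = 3 * q + d)
    (hd : d < 3) (hm : n * q = 4 * m + e) (he : e < 4) : johnsonBound n = m := by
  rw [johnsonBound, hp, hq, show (3 * q + d) / 3 = q by omega, hm]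
  omega

lemma johnsonBound_eq_of_three_dvd (hp : (n - 2) / 2 = p) (h3 : 3 ∣ (n - 1) * p)
    (hm : 12 * m = n * ((n - 1) * p)) : johnsonBound n = m := by
  obtain ⟨q, hq⟩ := h3
  refine johnsonBound_eq (d := 0) (e := 0) hp hq (by omega) ?_ (by omega)
  rw [hq, mul_left_comm] at hm
  omega

lemma hasQuadPacking_johnsonBound_of_even (hn : Even n) (h2 : 2 ≤ n) (h6 : ¬ 6 ∣ n) :
    HasQuadPacking n (johnsonBound n) := by
  obtain ⟨m, hm, hcard⟩ := exists_hasQuadPacking_of_even hn h2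
  obtain ⟨p, rfl⟩ : ∃ p, n = 2 * p + 2 := ⟨n / 2 - 1, by have := Nat.even_iff.1 hn; omega⟩
  have h3 : 3 ∣ 2 * p + 2 - 1 ∨ 3 ∣ p := by
    rcases (by omega : p % 3 = 0 ∨ p % 3 = 1 ∨ p % 3 = 2) with h | h | h <;> omega
  rw [if_neg h6] at hcard
  rwa [johnsonBound_eq_of_three_dvd (m := m) (p := p) (by omega)
    (h3.elim (·.mul_right p) (·.mul_left _))]
  have hchoose := six_mul_choose_three (2 * p + 2)
  rw [← hcard, show 2 * p + 2 - 1 = 2 * p + 1 from rfl] at *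
  zify
  push_cast at hchoose
  linarith

lemma hasQuadPacking_johnsonBound_of_odd (hn : Odd n) (h3 : 3 ≤ n) (h6 : ¬ 6 ∣ n + 1) :
    HasQuadPacking n (johnsonBound n) := by
  obtain ⟨m, hm, hcard⟩ := exists_hasQuadPacking_of_odd hn h6
  obtain ⟨p, rfl⟩ : ∃ p, n = 2 * p + 3 := ⟨(n - 3) / 2, by have := Nat.odd_iff.1 hn; omega⟩
  have hdvd : 3 ∣ 2 * p + 3 - 1 ∨ 3 ∣ p := by
    rcases (by omega : p % 3 = 0 ∨ p % 3 = 1 ∨ p % 3 = 2) with h | h | h <;> omega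
  rwa [johnsonBound_eq_of_three_dvd (m := m) (p := p) (by omega)
    (hdvd.elim (·.mul_right p) (·.mul_left _))]
  have hchoose2 := two_mul_choose_two (2 * p + 3)
  have hchoose3 := six_mul_choose_three (2 * p + 3 + 1)
  rw [show 2 * p + 3 - 1 = 2 * p + 2 from rfl]
  zify at hcard ⊢
  push_cast at hchoose2 hchoose3
  linarith

lemma hasQuadPacking_johnsonBound_of_six_dvd_add_one (h6 : 6 ∣ n + 1) :
    HasQuadPacking n (johnsonBound n) := by
  have h12 : n % 12 = 5 ∨ n % 12 = 11 := by omega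
  rcases h12 with h | h
  · obtain ⟨k, rfl⟩ : ∃ k, n = 12 * k + 5 := ⟨n / 12, by omega⟩
    rw [johnsonBound_eq (m := 72 * k ^ 3 + 66 * k ^ 2 + 18 * k + 1) (p := 6 * k + 1)
      (q := 24 * k ^ 2 + 12 * k + 1) (d := 1) (e := 1)
      (by omega) (by rw [show 12 * k + 5 - 1 = 12 * k + 4 from rfl]; ring) (by omega)
      (by ring) (by omega)]
    exact hasQuadPacking_twelve_mul_add_five k
  · obtain ⟨k, rfl⟩ : ∃ k, n = 12 * k + 11 := ⟨n / 12, by omega⟩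
    rw [johnsonBound_eq (m := 72 * k ^ 3 + 174 * k ^ 2 + 138 * k + 35) (p := 6 * k + 4)
      (q := 24 * k ^ 2 + 36 * k + 13) (d := 1) (e := 3)
      (by omega) (by rw [show 12 * k + 11 - 1 = 12 * k + 10 from rfl]; ring) (by omega)
      (by ring) (by omega)]
    exact hasQuadPacking_twelve_mul_add_eleven k

lemma hasQuadPacking_johnsonBound (hn : 2 ≤ n) (h6 : ¬ 6 ∣ n) :
    HasQuadPacking n (johnsonBound n) := by
  rcases n.even_or_odd with heven | hodd
  · exact hasQuadPacking_johnsonBound_of_even heven hn h6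
  by_cases h : 6 ∣ n + 1
  · exact hasQuadPacking_johnsonBound_of_six_dvd_add_one h
  · exact hasQuadPacking_johnsonBound_of_odd hodd (by have := Nat.odd_iff.1 hodd; omega) h

lemma hasQuadPacking_johnsonBoundOfSixDvd (hn : 0 < n) (h6 : 6 ∣ n) :
    HasQuadPacking n (johnsonBoundOfSixDvd n) := by
  obtain ⟨m, hm, hcard⟩ := exists_hasQuadPacking_of_even (even_iff_two_dvd.2 (by omega))
    (by omega : 2 ≤ n)
  obtain ⟨j, rfl⟩ : ∃ j, n = 6 * (j + 1) := ⟨n / 6 - 1, by omega⟩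
  have hdiv : (6 * (j + 1) - 1) * (6 * (j + 1) - 2) / 6 - 1 = 6 * j ^ 2 + 9 * j + 2 := by
    rw [show 6 * (j + 1) - 1 = 6 * j + 5 from rfl, show 6 * (j + 1) - 2 = 6 * j + 4 from rfl,
      show (6 * j + 5) * (6 * j + 4) = 2 + 6 * (6 * j ^ 2 + 9 * j + 3) by ring]
    omega
  have hmul : 6 * (j + 1) * (6 * j ^ 2 + 9 * j + 2) = 4 * m := by
    have hchoose := six_mul_choose_three (6 * (j + 1))
    rw [if_pos h6, Nat.mul_div_cancel_left _ (by norm_num)] at hcard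
    zify at hcard ⊢
    push_cast at hchoose
    linarith
  rwa [johnsonBoundOfSixDvd, hdiv, hmul, Nat.mul_div_cancel_left _ (by norm_num)]

lemma packingNumber_eq (h : HasQuadPacking n m) (hle : ∀ m', HasQuadPacking n m' → m' ≤ m) :
    packingNumber n 4 3 = m := by
  have hset : ∀ m', (∃ B : Finset (Finset (Fin n)), (∀ b ∈ B, #b = 4) ∧
      (∀ T : Finset (Fin n), #T = 3 → #{b ∈ B | T ⊆ b} ≤ 1) ∧ #B = m') ↔ HasQuadPacking n m' :=
    fun m' => exists_congr fun B => and_congr Iff.rfl (and_congr_left' isTriplePacking_iff.symm)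
  exact IsGreatest.csSup_eq ⟨(hset m).2 h, fun m' hm' => hle m' ((hset m').1 hm')⟩

lemma HasQuadPacking.le_johnsonBound (h : HasQuadPacking n m) : m ≤ johnsonBound n := by
  obtain ⟨B, h4, hB, rfl⟩ := h
  simpa only [johnsonBound, Fintype.card_fin] using card_le_johnson h4 hB (by norm_num)

lemma HasQuadPacking.le_johnsonBoundOfSixDvd (h : HasQuadPacking n m) (h6 : 6 ∣ n) :
    m ≤ johnsonBoundOfSixDvd n := by
  obtain ⟨B, h4, hB, rfl⟩ := h
  simpa only [johnsonBoundOfSixDvd, Fintype.card_fin] using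
    card_le_of_six_dvd h4 hB (by rwa [Fintype.card_fin])

end PackingNumber

theorem stmt13 (n : ℕ) (hn : 4 ≤ n) :
    (n % 6 ≠ 0 → packingNumber n 4 3 = n * ((n - 1) * ((n - 2) / 2) / 3) / 4) ∧
    (n % 6 = 0 → packingNumber n 4 3 = n * ((n - 1) * (n - 2) / 6 - 1) / 4) := by
  refine ⟨fun h6 => ?_, fun h6 => ?_⟩
  · exact packingNumber_eq
      (hasQuadPacking_johnsonBound (by omega) fun h => h6 (Nat.mod_eq_zero_of_dvd h))
      fun _ h => h.le_johnsonBound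
  · exact packingNumber_eq
      (hasQuadPacking_johnsonBoundOfSixDvd (by omega) (Nat.dvd_of_mod_eq_zero h6))
      fun _ h => h.le_johnsonBoundOfSixDvd (Nat.dvd_of_mod_eq_zero h6)
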